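/- A priori bounds: for every λ̄ > 0 there exist ᾱ > −∞ and C < +∞ (depending only on r, Ω, λ̄, p, N) such that every classical solution (α, ψ) of (P)_λ with λ ∈ [0, λ̄] satisfies α ≥ ᾱ and sup_Ω |ψ| + sup_Ω |∇ψ| + sup_Ω |D²ψ| + [D²ψ]_{C^{0,r}(Ω̄)} ≤ C, where [·]_{C^{0,r}} denotes the r-Hölder seminorm of the second derivatives. -/

import Mathlib

/-!
The bound rests on two independent ingredients.

*Supremum bound.* The maximum principle gives `ψ ≥ 0`, and the unit mass on a domain of unit volume
gives `α ≤ 1`. If `m = max (α + λψ)` is large, then `(α + λψ - 2)₊^q` with `q ≥ p` extends by zero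
to a compactly supported `C²` function on the whole space, whose Laplacian is at least `-C m^(q-1+p)`
and whose integral is at most `m^(q-p)` by the mass constraint. The mean value inequality
(`mean_value`) at the maximum point with radius `R² = η m^(1-p)` yields `m^(p - (p-1)N/2) ≤ C`, with a
positive exponent because `p` is subcritical (`sup_algebra`, `sup_bound`). No boundary information
enters, since `α + λψ = α ≤ 1` on the boundary. A quadratic barrier (`weak_max`) then bounds `ψ`, and
`α + λψ` must be positive somewhere, which bounds `α` from below (`good_of_sol`).

*Regularity.* What remains is a bound in `C^{2,r}` up to the boundary for functions vanishing on the
boundary whose Laplacian is bounded and Lipschitz as a function of the solution (`Good`,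
`global_est`). The proof uses only the maximum principle. Near a boundary point a `C³` map flattens
the boundary (`straighten`) and turns the Laplacian into an elliptic operator with Lipschitz
coefficients (`Chart.locData`). Barriers give linear or square root decay at the flat boundary
(`barrier_one`, `barrier_half`). Applied to an odd difference of reflections, the linear barrier also
gives the interior gradient estimate (`grad_est`), and difference quotients give the interior Hessian
estimate (`hess_est`). Tangential difference quotients of a solution again solve a problem of the
same kind, and the equation recovers the purely normal second derivative from the others
(`full_of_tangential`); this bounds the Hessian (`LocData.bounded`). Second tangential differences
then improve an `s`-Hölder bound for the Hessian to the exponent `1/(2-s)`, through Zygmund's dyadic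
argument (`LocData.improve`, `zygmund`). Starting from `s = 0` the exponents `n/(n+1)` are reached,
hence every `r < 1` (`LocData.local_reg`). Compactness of the closure makes the estimates global.
-/

open MeasureTheory Set Filter

noncomputable section

abbrev Euc (N : ℕ) := EuclideanSpace ℝ (Fin N)

/-- The Laplacian as the sum of second partial derivatives. -/
def lap {N : ℕ} (f : Euc N → ℝ) (x : Euc N) : ℝ :=
  ∑ i : Fin N,
    fderiv ℝ (fun y => fderiv ℝ f y (EuclideanSpace.single i 1)) x (EuclideanSpace.single i 1)

/-- A bounded domain of class `C³`, described by a `C³` defining function. -/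
def IsC3Domain {N : ℕ} (Ω : Set (Euc N)) : Prop :=
  IsOpen Ω ∧ IsConnected Ω ∧ Bornology.IsBounded Ω ∧
    ∃ F : Euc N → ℝ, ContDiff ℝ 3 F ∧ Ω = {x | F x < 0} ∧
      ∀ x ∈ frontier Ω, fderiv ℝ F x ≠ 0

/-- `ρ_λ = [α+λψ]₊^p`. -/
def rho {N : ℕ} (p lam α : ℝ) (ψ : Euc N → ℝ) (x : Euc N) : ℝ :=
  (max (α + lam * ψ x) 0) ^ p

/-- `ρ_λ^{1/q} = [α+λψ]₊^{p-1}`. -/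
def rhoq {N : ℕ} (p lam α : ℝ) (ψ : Euc N → ℝ) (x : Euc N) : ℝ :=
  (max (α + lam * ψ x) 0) ^ (p - 1)

/-- `(α, ψ)` is a classical solution of the constrained problem `(P)_λ` on `Ω`. -/
def SolP {N : ℕ} (Ω : Set (Euc N)) (p lam α : ℝ) (ψ : Euc N → ℝ) : Prop :=
  ContinuousOn ψ (closure Ω) ∧ ContDiffOn ℝ 2 ψ Ω ∧
    (∀ x ∈ frontier Ω, ψ x = 0) ∧
    (∀ x ∈ Ω, -lap ψ x = rho p lam α ψ x) ∧
    ∫ x in Ω, rho p lam α ψ x = 1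

/-- The weighted average `⟨φ⟩_λ`. -/
def avgl {N : ℕ} (Ω : Set (Euc N)) (p lam α : ℝ) (ψ φ : Euc N → ℝ) : ℝ :=
  (∫ x in Ω, rhoq p lam α ψ x * φ x) / ∫ x in Ω, rhoq p lam α ψ x

/-- `[φ]_λ = φ - ⟨φ⟩_λ`. -/
def brk {N : ℕ} (Ω : Set (Euc N)) (p lam α : ℝ) (ψ φ : Euc N → ℝ) (x : Euc N) : ℝ :=
  φ x - avgl Ω p lam α ψ φ

/-- `φ ∈ C_c^∞(Ω)`. -/
def TestFun {N : ℕ} (Ω : Set (Euc N)) (φ : Euc N → ℝ) : Prop :=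
  ContDiff ℝ (⊤ : ℕ∞) φ ∧ HasCompactSupport φ ∧ tsupport φ ⊆ Ω

/-- `∫_Ω ρ_λ^{1/q} [φ]_λ²`. -/
def wdenom {N : ℕ} (Ω : Set (Euc N)) (p lam α : ℝ) (ψ φ : Euc N → ℝ) : ℝ :=
  ∫ x in Ω, rhoq p lam α ψ x * brk Ω p lam α ψ φ x ^ 2

/-- The Rayleigh-type quotient for the linearized problem. -/
def rayleigh {N : ℕ} (Ω : Set (Euc N)) (p lam α : ℝ) (ψ φ : Euc N → ℝ) : ℝ :=
  ((∫ x in Ω, ‖fderiv ℝ φ x‖ ^ 2) - lam * p * wdenom Ω p lam α ψ φ) / wdenom Ω p lam α ψ φ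

/-- The weighted first eigenvalue `σ₁(α,ψ)`. -/
def sigma1 {N : ℕ} (Ω : Set (Euc N)) (p lam α : ℝ) (ψ : Euc N → ℝ) : ℝ :=
  sInf {s | ∃ φ : Euc N → ℝ, TestFun Ω φ ∧ 0 < wdenom Ω p lam α ψ φ ∧
    s = rayleigh Ω p lam α ψ φ}

/-- The stability threshold `λ*(Ω,p)`. -/
def lamStar {N : ℕ} (Ω : Set (Euc N)) (p : ℝ) : ℝ :=
  sSup {lb : ℝ | 0 < lb ∧ ∀ lam α ψ, 0 ≤ lam → lam < lb → SolP Ω p lam α ψ →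
    0 < sigma1 Ω p lam α ψ}

/-- The positivity threshold `λ₊(Ω,p)`. -/
def lamPlusD {N : ℕ} (Ω : Set (Euc N)) (p : ℝ) : ℝ :=
  sSup {d : ℝ | 0 < d ∧ ∀ lam α ψ, 0 ≤ lam → lam < d → SolP Ω p lam α ψ → 0 < α}

/-- The Sobolev-type constant `Λ(Ω,t)`. -/
def LambdaC {N : ℕ} (Ω : Set (Euc N)) (t : ℝ) : ℝ :=
  sInf {s : ℝ | ∃ w : Euc N → ℝ, TestFun Ω w ∧ w ≠ 0 ∧
    s = (∫ x in Ω, ‖fderiv ℝ w x‖ ^ 2) / (∫ x in Ω, |w x| ^ t) ^ (2 / t)}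

open Topology

/-! ### Second derivatives, the second derivative test and comparison on half balls -/

/-- The second derivative as an iterated `fderiv`. -/
def D2 {N : ℕ} (f : Euc N → ℝ) (x : Euc N) : Euc N →L[ℝ] Euc N →L[ℝ] ℝ :=
  fderiv ℝ (fderiv ℝ f) x

section basics
variable {N : ℕ}

lemma ContDiffAt.hasFD2 {v : Euc N → ℝ} {y : Euc N} (h : ContDiffAt ℝ 2 v y) :
    HasFDerivAt (fderiv ℝ v) (D2 v y) y :=
  ((h.fderiv_right (m := 1) (by norm_num)).differentiableAt (by norm_num)).hasFDerivAt

lemma ContDiffAt.hasFD1 {v : Euc N → ℝ} {y : Euc N} (h : ContDiffAt ℝ 2 v y) :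
    HasFDerivAt v (fderiv ℝ v y) y :=
  (h.differentiableAt (by norm_num)).hasFDerivAt

lemma ContDiffAt.D2_symm {v : Euc N → ℝ} {y : Euc N} (h : ContDiffAt ℝ 2 v y) (a b : Euc N) :
    D2 v y a b = D2 v y b a :=
  (h.isSymmSndFDerivAt (by simp)) a b

lemma lap_eq_D2 {v : Euc N → ℝ} {y : Euc N} (h : ContDiffAt ℝ 2 v y) :
    lap v y = ∑ i, D2 v y (EuclideanSpace.single i 1) (EuclideanSpace.single i 1) := by
  unfold lap
  refine Finset.sum_congr rfl fun i _ => ?_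
  have := (h.hasFD2.clm_apply (hasFDerivAt_const (EuclideanSpace.single i (1:ℝ)) y)).fderiv
  rw [this]
  simp

lemma ContDiffAt.eventually_two {v : Euc N → ℝ} {y : Euc N} (h : ContDiffAt ℝ 2 v y) :
    ∀ᶠ z in 𝓝 y, ContDiffAt ℝ 2 v z := h.eventually (by simp)

/-- Second derivative test: at a local maximum the first derivative vanishes and the second
is nonpositive. -/
lemma second_deriv_test {f f1 : ℝ → ℝ} {f2 : ℝ} (hmax : IsLocalMax f 0)
    (h1 : ∀ᶠ t in 𝓝 (0:ℝ), HasDerivAt f (f1 t) t) (h2 : HasDerivAt f1 f2 0) :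
    f1 0 = 0 ∧ f2 ≤ 0 := by
  have h0 : f1 0 = 0 := hmax.hasDerivAt_eq_zero h1.self_of_nhds
  refine ⟨h0, ?_⟩
  by_contra hpos
  push Not at hpos
  have hd : deriv f =ᶠ[𝓝 0] f1 := h1.mono fun t ht => ht.deriv
  have hdd : deriv (deriv f) 0 = f2 := by rw [hd.deriv_eq, h2.deriv]
  have hmin : IsLocalMin f 0 := isLocalMin_of_deriv_deriv_pos (by rw [hdd]; exact hpos)
    (by rw [h1.self_of_nhds.deriv, h0]) h1.self_of_nhds.continuousAt
  have hc : f =ᶠ[𝓝 0] fun _ => f 0 := by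
    filter_upwards [hmax, hmin] with t ha hb
    exact le_antisymm ha hb
  have : deriv (deriv f) 0 = 0 := by
    have := hc.deriv
    rw [this.deriv_eq]
    simp
  rw [hdd] at this
  exact hpos.ne' this

/-- derivatives of a `C²` function along a line -/
lemma line_derivs {v : Euc N → ℝ} {ζ : Euc N} (h : ContDiffAt ℝ 2 v ζ) (w : Euc N) :
    (∀ᶠ t in 𝓝 (0:ℝ), HasDerivAt (fun t : ℝ => v (ζ + t • w)) (fderiv ℝ v (ζ + t • w) w) t) ∧
    HasDerivAt (fun t : ℝ => fderiv ℝ v (ζ + t • w) w) (D2 v ζ w w) 0 := by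
  have hl : ∀ t : ℝ, HasDerivAt (fun t : ℝ => ζ + t • w) w t := fun t => by
    simpa using ((hasDerivAt_id t).smul_const w).const_add ζ
  have hc : Tendsto (fun t : ℝ => ζ + t • w) (𝓝 0) (𝓝 ζ) := by
    have := (hl 0).continuousAt.tendsto
    simpa using this
  constructor
  · filter_upwards [hc.eventually h.eventually_two] with t ht
    exact ht.hasFD1.comp_hasDerivAt t (hl t)
  · have h2 : HasFDerivAt (fderiv ℝ v) (D2 v ζ) (ζ + (0:ℝ) • w) := by simpa using h.hasFD2
    have := h2.comp_hasDerivAt (0:ℝ) (hl 0)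
    simpa using this.clm_apply (hasDerivAt_const (0:ℝ) w)

/-- The operator `Σ D²v(gᵢ,gᵢ) + Dv(c)` with coefficients at the point of evaluation. -/
def Lop (g : Fin N → Euc N → Euc N) (c : Euc N → Euc N) (v : Euc N → ℝ) (y : Euc N) : ℝ :=
  ∑ i, D2 v y (g i y) (g i y) + fderiv ℝ v y (c y)

/-- the (relatively open) half ball with centre `z` on its flat side -/
def HB (ν z : Euc N) (R : ℝ) : Set (Euc N) := {y | ‖y - z‖ < R ∧ 0 < inner ℝ ν (y - z)}

lemma isOpen_HB (ν z : Euc N) (R : ℝ) : IsOpen (HB ν z R) := by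
  have h1 : IsOpen {y : Euc N | ‖y - z‖ < R} := isOpen_lt (by fun_prop) continuous_const
  have h2 : IsOpen {y : Euc N | 0 < inner ℝ ν (y - z)} := isOpen_lt continuous_const (by fun_prop)
  exact h1.inter h2

/-- One-sided comparison on a half ball: the barrier `M/R² |y-z|² + h(height)` dominates
`v` when it does so on the boundary and its image under the operator is smaller. -/
lemma comparison_one {ν z : Euc N} (hν : ‖ν‖ = 1) {R M : ℝ} (hR : 0 < R) (hM : 0 < M)
    {v : Euc N → ℝ} {g : Fin N → Euc N → Euc N} {c : Euc N → Euc N} {h h1 h2 : ℝ → ℝ}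
    (hv : ∀ y ∈ HB ν z R, ContDiffAt ℝ 2 v y) (hvM : ∀ y ∈ HB ν z R, v y ≤ M)
    (hv0 : ∀ ε > 0, ∃ η > 0, ∀ y ∈ HB ν z R, inner ℝ ν (y - z) < η → v y ≤ ε)
    (hh : ∀ t, 0 < t → t < R → HasDerivAt h (h1 t) t)
    (hh1 : ∀ t, 0 < t → t < R → HasDerivAt h1 (h2 t) t)
    (hpos : ∀ t, 0 < t → t < R → 0 ≤ h t)
    (hL : ∀ y ∈ HB ν z R, M / R ^ 2 * (2 * ∑ i, ‖g i y‖ ^ 2 + 2 * inner ℝ (y - z) (c y))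
      + h2 (inner ℝ ν (y - z)) * ∑ i, inner ℝ ν (g i y) ^ 2
      + h1 (inner ℝ ν (y - z)) * inner ℝ ν (c y) < Lop g c v y) :
    ∀ y ∈ HB ν z R, v y ≤ M / R ^ 2 * ‖y - z‖ ^ 2 + h (inner ℝ ν (y - z)) := by
  intro y0 hy0
  by_contra hcon
  push Not at hcon
  have hlt : ∀ y ∈ HB ν z R, inner ℝ ν (y - z) < R := fun y hy => by
    have := real_inner_le_norm ν (y - z)
    rw [hν, one_mul] at this
    exact this.trans_lt hy.1
  set Φ : Euc N → ℝ := fun y => v y - (M / R ^ 2 * ‖y - z‖ ^ 2 + h (inner ℝ ν (y - z))) with hΦ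
  set ε := Φ y0 / 2 with hε
  have hε0 : 0 < ε := by simp only [hε, hΦ]; linarith
  obtain ⟨η, hη, hvη⟩ := hv0 (ε / 2) (by linarith)
  set R' := R * Real.sqrt (max (1 - ε / M) 0) with hR'
  have hR'R : R' < R := by
    have : Real.sqrt (max (1 - ε / M) 0) < 1 := by
      rw [Real.sqrt_lt' one_pos]
      have : 0 < ε / M := by positivity
      simp; linarith
    nlinarith
  have hmem : ∀ y ∈ HB ν z R, ε ≤ Φ y → ‖y - z‖ ≤ R' ∧ η ≤ inner ℝ ν (y - z) := by
    intro y hy hyε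
    have hp := hpos _ hy.2 (hlt y hy)
    have hq : 0 ≤ M / R ^ 2 * ‖y - z‖ ^ 2 := by positivity
    simp only [hΦ] at hyε
    constructor
    · have h3 : M / R ^ 2 * ‖y - z‖ ^ 2 ≤ M - ε := by linarith [hvM y hy]
      have h4 : ‖y - z‖ ^ 2 ≤ R ^ 2 * (1 - ε / M) := by
        have : ‖y - z‖ ^ 2 = (M / R ^ 2 * ‖y - z‖ ^ 2) * (R ^ 2 / M) := by field_simp
        rw [this]
        have h5 : R ^ 2 * (1 - ε / M) = (M - ε) * (R ^ 2 / M) := by field_simp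
        rw [h5]
        gcongr
      apply (sq_le_sq₀ (norm_nonneg _) (by positivity)).1
      rw [hR', mul_pow, Real.sq_sqrt (le_max_right _ _)]
      exact h4.trans (by gcongr; exact le_max_left _ _)
    · by_contra hlt'
      push Not at hlt'
      linarith [hvη y hy hlt']
  set K : Set (Euc N) := {y | ‖y - z‖ ≤ R' ∧ η ≤ inner ℝ ν (y - z)} with hK
  have hKS : K ⊆ HB ν z R := fun y hy => ⟨hy.1.trans_lt hR'R, hη.trans_le hy.2⟩
  have hKc : IsCompact K := by
    have : K = Metric.closedBall z R' ∩ {y | η ≤ inner ℝ ν (y - z)} := by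
      ext y; simp [hK, dist_eq_norm]
    rw [this]
    exact (isCompact_closedBall z R').inter_right (isClosed_le continuous_const (by fun_prop))
  have hcont : ContinuousOn Φ K := by
    intro y hy
    apply ContinuousAt.continuousWithinAt
    have hyS := hKS hy
    have c1 := (hv y hyS).continuousAt
    have c2 : ContinuousAt (fun y => h (inner ℝ ν (y - z))) y :=
      ContinuousAt.comp (f := fun y => inner ℝ ν (y - z)) (hh _ hyS.2 (hlt y hyS)).continuousAt
        (by fun_prop)
    have c3 : ContinuousAt (fun y : Euc N => M / R ^ 2 * ‖y - z‖ ^ 2) y := by fun_prop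
    exact c1.sub (c3.add c2)
  have hy0K : y0 ∈ K := hmem y0 hy0 (by linarith)
  obtain ⟨ζ, hζK, hζ⟩ := hKc.exists_isMaxOn ⟨y0, hy0K⟩ hcont
  have hζS := hKS hζK
  have hmax : IsLocalMax Φ ζ := by
    filter_upwards [(isOpen_HB ν z R).mem_nhds hζS] with y hy
    by_cases hyK : y ∈ K
    · exact hζ hyK
    · have : ¬ ε ≤ Φ y := fun h' => hyK (hmem y hy h')
      have h2 : Φ y0 ≤ Φ ζ := hζ hy0K
      linarith
  have key : ∀ w : Euc N, fderiv ℝ v ζ w = M / R ^ 2 * (2 * inner ℝ (ζ - z) w)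
        + h1 (inner ℝ ν (ζ - z)) * inner ℝ ν w ∧
      D2 v ζ w w ≤ M / R ^ 2 * (2 * ‖w‖ ^ 2) + h2 (inner ℝ ν (ζ - z)) * inner ℝ ν w ^ 2 := by
    intro w
    obtain ⟨l1, l2⟩ := line_derivs (hv ζ hζS) w
    have hl : ∀ t : ℝ, HasDerivAt (fun t : ℝ => ζ + t • w) w t := fun t => by
      simpa using ((hasDerivAt_id t).smul_const w).const_add ζ
    have hc : Tendsto (fun t : ℝ => ζ + t • w) (𝓝 0) (𝓝 ζ) := by
      have := (hl 0).continuousAt.tendsto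
      simpa using this
    have hq : ∀ t : ℝ, ‖ζ + t • w - z‖ ^ 2
        = ‖ζ - z‖ ^ 2 + t * (2 * inner ℝ (ζ - z) w) + t ^ 2 * ‖w‖ ^ 2 := fun t => by
      have : ζ + t • w - z = (ζ - z) + t • w := by abel
      rw [this, norm_add_sq_real, inner_smul_right, norm_smul, mul_pow, Real.norm_eq_abs, sq_abs]
      ring
    have hi : ∀ t : ℝ, inner ℝ ν (ζ + t • w - z) = inner ℝ ν (ζ - z) + t * inner ℝ ν w := fun t => by
      have : ζ + t • w - z = (ζ - z) + t • w := by abel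
      rw [this, inner_add_right, inner_smul_right]
    have hli : ∀ t : ℝ, HasDerivAt (fun t : ℝ => inner ℝ ν (ζ - z) + t * inner ℝ ν w)
        (inner ℝ ν w) t := fun t => by
      simpa using ((hasDerivAt_id t).mul_const (inner ℝ ν w)).const_add (inner ℝ ν (ζ - z))
    have hmax' : IsLocalMax (fun t : ℝ => Φ (ζ + t • w)) 0 := by
      have h0 : Φ (ζ + (0:ℝ) • w) = Φ ζ := by simp
      have := hc.eventually hmax
      filter_upwards [this] with t ht
      rw [h0]; exact ht
    have res := second_deriv_test (f := fun t : ℝ => Φ (ζ + t • w))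
      (f1 := fun t => fderiv ℝ v (ζ + t • w) w - (M / R ^ 2 * (2 * inner ℝ (ζ - z) w
        + 2 * t * ‖w‖ ^ 2) + h1 (inner ℝ ν (ζ - z) + t * inner ℝ ν w) * inner ℝ ν w))
      (f2 := D2 v ζ w w - (M / R ^ 2 * (2 * ‖w‖ ^ 2)
        + h2 (inner ℝ ν (ζ - z)) * inner ℝ ν w * inner ℝ ν w)) hmax' ?_ ?_
    · obtain ⟨r1, r2⟩ := res
      simp at r1
      constructor
      · linarith
      · nlinarith
    · filter_upwards [l1, hc.eventually ((isOpen_HB ν z R).mem_nhds hζS)] with t ht hS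
      have e1 : HasDerivAt (fun t : ℝ => M / R ^ 2 * (‖ζ - z‖ ^ 2 + t * (2 * inner ℝ (ζ - z) w)
          + t ^ 2 * ‖w‖ ^ 2)) (M / R ^ 2 * (2 * inner ℝ (ζ - z) w + 2 * t * ‖w‖ ^ 2)) t := by
        have a := ((hasDerivAt_id t).mul_const (2 * inner ℝ (ζ - z) w)).const_add (‖ζ - z‖ ^ 2)
        have b := ((hasDerivAt_id t).pow 2).mul_const (‖w‖ ^ 2)
        have ab := (a.add b).const_mul (M / R ^ 2)
        simp only [id, Nat.cast_ofNat, one_mul, Nat.add_one_sub_one, pow_one, mul_one] at ab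
        exact ab
      have hS2 := hS.2
      have hS3 := hlt _ hS
      rw [hi] at hS2 hS3
      have e2 : HasDerivAt (fun t : ℝ => h (inner ℝ ν (ζ - z) + t * inner ℝ ν w))
          (h1 (inner ℝ ν (ζ - z) + t * inner ℝ ν w) * inner ℝ ν w) t :=
        (hh _ hS2 hS3).comp t (hli t)
      have e3 := ht.sub (e1.add e2)
      refine e3.congr_of_eventuallyEq (Eventually.of_forall fun s => ?_)
      simp only [hΦ, hq, hi, Pi.sub_apply, Pi.add_apply]
    · have e1 : HasDerivAt (fun t : ℝ => M / R ^ 2 * (2 * inner ℝ (ζ - z) w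
        + 2 * t * ‖w‖ ^ 2)) (M / R ^ 2 * (2 * ‖w‖ ^ 2)) 0 := by
        have a := ((((hasDerivAt_id (0:ℝ)).const_mul 2).mul_const (‖w‖ ^ 2)).const_add
          (2 * inner ℝ (ζ - z) w)).const_mul (M / R ^ 2)
        simpa using a
      have e2 : HasDerivAt (fun t : ℝ => h1 (inner ℝ ν (ζ - z) + t * inner ℝ ν w))
          (h2 (inner ℝ ν (ζ - z)) * inner ℝ ν w) 0 := by
        have := hh1 (inner ℝ ν (ζ - z)) hζS.2 (hlt _ hζS)
        have h' : HasDerivAt h1 (h2 (inner ℝ ν (ζ - z)))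
          (inner ℝ ν (ζ - z) + 0 * inner ℝ ν w) := by simpa using this
        exact h'.comp 0 (hli 0)
      exact l2.sub (e1.add (e2.mul_const _))
  have hfin := hL ζ hζS
  have hsum : ∑ i, D2 v ζ (g i ζ) (g i ζ) ≤ M / R ^ 2 * (2 * ∑ i, ‖g i ζ‖ ^ 2)
      + h2 (inner ℝ ν (ζ - z)) * ∑ i, inner ℝ ν (g i ζ) ^ 2 := by
    rw [Finset.mul_sum, Finset.mul_sum, Finset.mul_sum, ← Finset.sum_add_distrib]
    exact Finset.sum_le_sum fun i _ => (key (g i ζ)).2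
  have hc1 := (key (c ζ)).1
  unfold Lop at hfin
  rw [hc1] at hfin
  nlinarith

end basics

/-! ### Barriers at a flat boundary -/

section barriers
variable {N : ℕ}

lemma D2_neg (v : Euc N → ℝ) (y : Euc N) : D2 (fun y => - v y) y = - D2 v y := by
  unfold D2
  have : fderiv ℝ (fun y => - v y) = fun y => - fderiv ℝ v y := by
    funext z; exact fderiv_fun_neg
  rw [this]; exact fderiv_fun_neg

lemma Lop_neg (g : Fin N → Euc N → Euc N) (c : Euc N → Euc N) (v : Euc N → ℝ) (y : Euc N) :
    Lop g c (fun y => - v y) y = - Lop g c v y := by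
  unfold Lop
  rw [D2_neg, fderiv_fun_neg]
  simp [Finset.sum_neg_distrib]; ring

lemma D2_sub {v w : Euc N → ℝ} {y : Euc N} (hv : ContDiffAt ℝ 2 v y) (hw : ContDiffAt ℝ 2 w y) :
    D2 (fun y => v y - w y) y = D2 v y - D2 w y := by
  have : fderiv ℝ (fun y => v y - w y) =ᶠ[𝓝 y] fun z => fderiv ℝ v z - fderiv ℝ w z := by
    filter_upwards [hv.eventually_two, hw.eventually_two] with z h1 h2
    exact fderiv_fun_sub h1.hasFD1.differentiableAt h2.hasFD1.differentiableAt
  unfold D2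
  rw [this.fderiv_eq]
  exact (hv.hasFD2.sub hw.hasFD2).fderiv

lemma Lop_sub {g : Fin N → Euc N → Euc N} {c : Euc N → Euc N} {v w : Euc N → ℝ} {y : Euc N}
    (hv : ContDiffAt ℝ 2 v y) (hw : ContDiffAt ℝ 2 w y) :
    Lop g c (fun y => v y - w y) y = Lop g c v y - Lop g c w y := by
  unfold Lop
  rw [D2_sub hv hw, fderiv_fun_sub hv.hasFD1.differentiableAt hw.hasFD1.differentiableAt]
  simp [Finset.sum_sub_distrib]; ring

lemma D2_sub_const (v : Euc N → ℝ) (a : ℝ) (y : Euc N) :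
    D2 (fun y => v y - a) y = D2 v y := by
  unfold D2
  have : fderiv ℝ (fun y => v y - a) = fderiv ℝ v := by
    funext z; exact fderiv_sub_const a
  rw [this]

lemma Lop_sub_const (g : Fin N → Euc N → Euc N) (c : Euc N → Euc N) (v : Euc N → ℝ) (a : ℝ)
    (y : Euc N) : Lop g c (fun y => v y - a) y = Lop g c v y := by
  unfold Lop
  rw [D2_sub_const, fderiv_sub_const]

/-- Two-sided comparison with `M/R² |y-z|² + h(height)`, for coefficients with structure
constants `C0` and `θ`. -/
lemma comparison {ν z : Euc N} (hν : ‖ν‖ = 1) {R M C0 θ : ℝ} (hR : 0 < R) (hR1 : R ≤ 1) (hM : 0 < M)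
    {v : Euc N → ℝ} {g : Fin N → Euc N → Euc N} {c : Euc N → Euc N} {h h1 h2 k : ℝ → ℝ}
    (hg : ∀ y ∈ HB ν z R, ∑ i, ‖g i y‖ ^ 2 ≤ C0) (hc : ∀ y ∈ HB ν z R, ‖c y‖ ≤ C0)
    (hθ : ∀ y ∈ HB ν z R, θ ≤ ∑ i, inner ℝ ν (g i y) ^ 2)
    (hv : ∀ y ∈ HB ν z R, ContDiffAt ℝ 2 v y) (hvM : ∀ y ∈ HB ν z R, |v y| ≤ M)
    (hv0 : ∀ ε > 0, ∃ η > 0, ∀ y ∈ HB ν z R, inner ℝ ν (y - z) < η → |v y| ≤ ε)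
    (hh : ∀ t, 0 < t → t < R → HasDerivAt h (h1 t) t)
    (hh1 : ∀ t, 0 < t → t < R → HasDerivAt h1 (h2 t) t)
    (hpos : ∀ t, 0 < t → t < R → 0 ≤ h t)
    (hneg : ∀ t, 0 < t → t < R → h2 t ≤ 0)
    (hk : ∀ t, 0 < t → t < R → 4 * C0 * M / R ^ 2 + θ * h2 t + C0 * |h1 t| < - k t)
    (hL : ∀ y ∈ HB ν z R, |Lop g c v y| ≤ k (inner ℝ ν (y - z))) :
    ∀ y ∈ HB ν z R, |v y| ≤ M / R ^ 2 * ‖y - z‖ ^ 2 + h (inner ℝ ν (y - z)) := by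
  have hlt : ∀ y ∈ HB ν z R, inner ℝ ν (y - z) < R := fun y hy => by
    have := real_inner_le_norm ν (y - z)
    rw [hν, one_mul] at this
    exact this.trans_lt hy.1
  have main : ∀ y ∈ HB ν z R,
      M / R ^ 2 * (2 * ∑ i, ‖g i y‖ ^ 2 + 2 * inner ℝ (y - z) (c y))
      + h2 (inner ℝ ν (y - z)) * ∑ i, inner ℝ ν (g i y) ^ 2
      + h1 (inner ℝ ν (y - z)) * inner ℝ ν (c y) < - |Lop g c v y| := by
    intro y hy
    have hC := hc y hy
    have a1 : inner ℝ (y - z) (c y) ≤ C0 := by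
      calc inner ℝ (y - z) (c y) ≤ ‖y - z‖ * ‖c y‖ := real_inner_le_norm _ _
        _ ≤ 1 * C0 := by
          gcongr
          exact hy.1.le.trans hR1
        _ = C0 := one_mul _
    have a2 : M / R ^ 2 * (2 * ∑ i, ‖g i y‖ ^ 2 + 2 * inner ℝ (y - z) (c y))
        ≤ 4 * C0 * M / R ^ 2 := by
      have : 4 * C0 * M / R ^ 2 = M / R ^ 2 * (2 * C0 + 2 * C0) := by ring
      rw [this]
      gcongr
      exact hg y hy
    have a3 : h2 (inner ℝ ν (y - z)) * ∑ i, inner ℝ ν (g i y) ^ 2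
        ≤ θ * h2 (inner ℝ ν (y - z)) := by
      rw [mul_comm θ]
      exact mul_le_mul_of_nonpos_left (hθ y hy) (hneg _ hy.2 (hlt y hy))
    have a4 : h1 (inner ℝ ν (y - z)) * inner ℝ ν (c y) ≤ C0 * |h1 (inner ℝ ν (y - z))| := by
      calc _ ≤ |h1 (inner ℝ ν (y - z)) * inner ℝ ν (c y)| := le_abs_self _
        _ = |h1 (inner ℝ ν (y - z))| * |inner ℝ ν (c y)| := abs_mul _ _
        _ ≤ |h1 (inner ℝ ν (y - z))| * C0 := by
          gcongr
          calc |inner ℝ ν (c y)| ≤ ‖ν‖ * ‖c y‖ := abs_real_inner_le_norm _ _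
            _ ≤ C0 := by rw [hν, one_mul]; exact hC
        _ = _ := mul_comm _ _
    linarith [hk _ hy.2 (hlt y hy), hL y hy]
  intro y hy
  rw [abs_le']
  constructor
  · refine comparison_one hν hR hM hv (fun y hy => (le_abs_self _).trans (hvM y hy)) ?_ hh hh1 hpos
      (g := g) (c := c) ?_ y hy
    · intro ε hε
      obtain ⟨η, h1, h2⟩ := hv0 ε hε
      exact ⟨η, h1, fun y hy hy' => (le_abs_self _).trans (h2 y hy hy')⟩
    · intro y hy
      exact (main y hy).trans_le (neg_abs_le _)
  · refine comparison_one hν hR hM (v := fun y => - v y) (fun y hy => (hv y hy).neg)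
      (fun y hy => (neg_le_abs _).trans (hvM y hy)) ?_ hh hh1 hpos
      (g := g) (c := c) ?_ y hy
    · intro ε hε
      obtain ⟨η, h1, h2⟩ := hv0 ε hε
      exact ⟨η, h1, fun y hy hy' => (neg_le_abs _).trans (h2 y hy hy')⟩
    · intro y hy
      rw [Lop_neg]
      exact (main y hy).trans_le (by linarith [le_abs_self (Lop g c v y)])

/-- Barrier `A √t`: right-hand sides of size `1/t` give decay `√t`. -/
lemma barrier_half {C0 θ : ℝ} (hC0 : 0 < C0) (hθ0 : 0 < θ) {R : ℝ} (hR : 0 < R) (hR1 : R ≤ 1)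
    (hRθ : R ≤ θ / (8 * C0)) : ∃ C > 0, ∀ (ν z : Euc N) (g : Fin N → Euc N → Euc N)
    (c : Euc N → Euc N) (v : Euc N → ℝ) (M K : ℝ), ‖ν‖ = 1 → 0 < M → 0 ≤ K →
    (∀ y ∈ HB ν z R, ∑ i, ‖g i y‖ ^ 2 ≤ C0) → (∀ y ∈ HB ν z R, ‖c y‖ ≤ C0) →
    (∀ y ∈ HB ν z R, θ ≤ ∑ i, inner ℝ ν (g i y) ^ 2) →
    (∀ y ∈ HB ν z R, ContDiffAt ℝ 2 v y) → (∀ y ∈ HB ν z R, |v y| ≤ M) →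
    (∀ ε > 0, ∃ η > 0, ∀ y ∈ HB ν z R, inner ℝ ν (y - z) < η → |v y| ≤ ε) →
    (∀ y ∈ HB ν z R, |Lop g c v y| ≤ K / inner ℝ ν (y - z)) →
    ∀ t, 0 < t → t < R → |v (z + t • ν)| ≤ C * (M + K) * √t := by
  set S := √R with hS
  have hS0 : 0 < S := Real.sqrt_pos.2 hR
  have hSR : S ^ 2 = R := Real.sq_sqrt hR.le
  refine ⟨1 / S + (64 * C0 / S + 16 * S) / θ, by positivity, ?_⟩
  intro ν z g c v M K hν hM hK hg hc hθ hv hvM hv0 hL t ht0 htR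
  set A := (64 * C0 * M / S + 16 * K * S) / θ with hA
  have hA0 : 0 < A := by positivity
  have hθA1 : 64 * C0 * M / S ≤ θ * A := by
    rw [hA, mul_div_cancel₀ _ hθ0.ne']
    have : 0 ≤ 16 * K * S := by positivity
    linarith
  have hθA2 : 16 * K * S ≤ θ * A := by
    rw [hA, mul_div_cancel₀ _ hθ0.ne']
    have : 0 ≤ 64 * C0 * M / S := by positivity
    linarith
  have hmem : z + t • ν ∈ HB ν z R := by
    constructor
    · simp [norm_smul, hν, abs_of_pos ht0, htR]
    · simp [inner_smul_right, hν, ht0]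
  have key := comparison hν hR hR1 hM hg hc hθ hv hvM hv0 (h := fun t => A * √t)
    (h1 := fun t => A * (1 / (2 * √t))) (h2 := fun t => A * (-(1 / (4 * (√t) ^ 3))))
    (k := fun t => K / t) ?_ ?_ ?_ ?_ ?_ hL _ hmem
  · have e1 : inner ℝ ν (z + t • ν - z) = t := by simp [inner_smul_right, hν]
    have e2 : ‖z + t • ν - z‖ = t := by simp [norm_smul, hν, abs_of_pos ht0]
    rw [e1, e2] at key
    have hs0 : 0 < √t := Real.sqrt_pos.2 ht0
    have hst : (√t) ^ 2 = t := Real.sq_sqrt ht0.le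
    have hsS : √t ≤ S := Real.sqrt_le_sqrt htR.le
    have e3 : M / R ^ 2 * t ^ 2 ≤ M / S * √t := by
      set s := √t
      rw [← hSR, ← hst]
      have : M / (S ^ 2) ^ 2 * (s ^ 2) ^ 2 = M / S * s * (s / S) ^ 3 := by field_simp
      rw [this]
      have : (s / S) ^ 3 ≤ 1 := pow_le_one₀ (by positivity) ((div_le_one hS0).2 hsS)
      have h' : 0 ≤ M / S * s := by positivity
      nlinarith
    have e4 : M / S + A ≤ (1 / S + (64 * C0 / S + 16 * S) / θ) * (M + K) := by
      rw [hA]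
      have : (1 / S + (64 * C0 / S + 16 * S) / θ) * (M + K) =
        M / S + (64 * C0 * M / S + 16 * K * S) / θ + (K / S + (64 * C0 * K/ S + 16 * M * S) / θ) := by
        field_simp; ring
      rw [this]
      have : 0 ≤ (K / S + (64 * C0 * K/ S + 16 * M * S) / θ) := by positivity
      linarith
    calc |v (z + t • ν)| ≤ M / S * √t + A * √t := by linarith
      _ = (M / S + A) * √t := by ring
      _ ≤ _ := by gcongr
  · intro t ht _
    exact (Real.hasDerivAt_sqrt ht.ne').const_mul A
  · intro t ht _
    have hs0 : 0 < √t := Real.sqrt_pos.2 ht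
    have := (((Real.hasDerivAt_sqrt ht.ne').const_mul 2).inv (by positivity)).const_mul A
    have h' := this.congr_deriv (g' := A * (-(1 / (4 * (√t) ^ 3)))) (by field_simp; ring)
    refine h'.congr_of_eventuallyEq (Eventually.of_forall fun x => ?_)
    simp [one_div]
  · intro t ht _; positivity
  · intro t ht _
    have : 0 ≤ (1 / (4 * (√t) ^ 3)) := by positivity
    nlinarith
  · intro t ht htR
    have hs0 : 0 < √t := Real.sqrt_pos.2 ht
    have hst : (√t) ^ 2 = t := Real.sq_sqrt ht.le
    have hsS : √t ≤ S := Real.sqrt_le_sqrt htR.le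
    set s := √t
    have hRC : S ^ 2 * (8 * C0) ≤ θ := by
      rw [hSR]; exact (le_div_iff₀ (by positivity)).1 hRθ
    rw [abs_of_nonneg (by positivity), ← hst, ← hSR]
    have b1 : 4 * C0 * M / (S ^ 2) ^ 2 ≤ θ * A / (16 * s ^ 3) := by
      rw [div_le_div_iff₀ (by positivity) (by positivity)]
      have h1 : 64 * C0 * M ≤ θ * A * S := (div_le_iff₀ hS0).1 hθA1
      have h2 : s ^ 3 ≤ S ^ 3 := by gcongr
      calc 4 * C0 * M * (16 * s ^ 3) = 64 * C0 * M * s ^ 3 := by ring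
        _ ≤ (θ * A * S) * S ^ 3 := by gcongr
        _ = _ := by ring
    have b2 : C0 * (A * (1 / (2 * s))) ≤ θ * A / (16 * s ^ 3) := by
      rw [le_div_iff₀ (by positivity)]
      have h3 : C0 * (A * (1 / (2 * s))) * (16 * s ^ 3) = A * (8 * C0 * s ^ 2) := by
        field_simp; ring
      rw [h3]
      have : s ^ 2 ≤ S ^ 2 := by gcongr
      have : 8 * C0 * s ^ 2 ≤ θ := by nlinarith
      nlinarith
    have b3 : K / s ^ 2 ≤ θ * A / (16 * s ^ 3) := by
      rw [div_le_div_iff₀ (by positivity) (by positivity)]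
      calc K * (16 * s ^ 3) = 16 * K * s * s ^ 2 := by ring
        _ ≤ 16 * K * S * s ^ 2 := by gcongr
        _ ≤ _ := by gcongr
    have b4 : θ * (A * -(1 / (4 * s ^ 3))) = - (4 * (θ * A / (16 * s ^ 3))) := by
      field_simp; ring
    rw [b4]
    have : 0 < θ * A / (16 * s ^ 3) := by positivity
    linarith

/-- Barrier `A (2t - t^{3/2} R^{-1/2})`: linear decay at a scale `R`, for right-hand sides of
size `K t^{-1/2}`. -/
lemma barrier_one {C0 θ : ℝ} (hC0 : 0 < C0) (hθ0 : 0 < θ) : ∃ C > 0, ∀ (R : ℝ), 0 < R → R ≤ 1 →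
    R ≤ θ / (8 * C0) → ∀ (ν z : Euc N) (g : Fin N → Euc N → Euc N)
    (c : Euc N → Euc N) (v : Euc N → ℝ) (M K : ℝ), ‖ν‖ = 1 → 0 < M → 0 ≤ K →
    (∀ y ∈ HB ν z R, ∑ i, ‖g i y‖ ^ 2 ≤ C0) → (∀ y ∈ HB ν z R, ‖c y‖ ≤ C0) →
    (∀ y ∈ HB ν z R, θ ≤ ∑ i, inner ℝ ν (g i y) ^ 2) →
    (∀ y ∈ HB ν z R, ContDiffAt ℝ 2 v y) → (∀ y ∈ HB ν z R, |v y| ≤ M) →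
    (∀ ε > 0, ∃ η > 0, ∀ y ∈ HB ν z R, inner ℝ ν (y - z) < η → |v y| ≤ ε) →
    (∀ y ∈ HB ν z R, |Lop g c v y| ≤ K / √(inner ℝ ν (y - z))) →
    ∀ t, 0 < t → t < R → |v (z + t • ν)| ≤ C * (M / R + K * √R) * t := by
  refine ⟨1 + 64 * C0 / θ + 16 / θ, by positivity, ?_⟩
  intro R hR hR1 hRθ ν z g c v M K hν hM hK hg hc hθ hv hvM hv0 hL t ht0 htR
  set S := √R with hS
  have hS0 : 0 < S := Real.sqrt_pos.2 hR
  have hSR : S ^ 2 = R := Real.sq_sqrt hR.le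
  set A := (32 * C0 * M / S ^ 2 + 8 * K * S) / θ with hA
  have hA0 : 0 < A := by positivity
  have hθA1 : 32 * C0 * M / S ^ 2 ≤ θ * A := by
    rw [hA, mul_div_cancel₀ _ hθ0.ne']
    have : 0 ≤ 8 * K * S := by positivity
    linarith
  have hθA2 : 8 * K * S ≤ θ * A := by
    rw [hA, mul_div_cancel₀ _ hθ0.ne']
    have : 0 ≤ 32 * C0 * M / S ^ 2 := by positivity
    linarith
  have hmem : z + t • ν ∈ HB ν z R := by
    constructor
    · simp [norm_smul, hν, abs_of_pos ht0, htR]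
    · simp [inner_smul_right, hν, ht0]
  have key := comparison hν hR hR1 hM hg hc hθ hv hvM hv0 (h := fun t => A * (2 * t - t * √t / S))
    (h1 := fun t => A * (2 - 3 / 2 * √t / S)) (h2 := fun t => A * (-(3 / 4 / (√t * S))))
    (k := fun t => K / √t) ?_ ?_ ?_ ?_ ?_ hL _ hmem
  · have e1 : inner ℝ ν (z + t • ν - z) = t := by simp [inner_smul_right, hν]
    have e2 : ‖z + t • ν - z‖ = t := by simp [norm_smul, hν, abs_of_pos ht0]
    rw [e1, e2] at key
    have e3 : M / R ^ 2 * t ^ 2 ≤ M / R * t := by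
      have : M / R ^ 2 * t ^ 2 = M / R * t * (t / R) := by field_simp
      rw [this]
      have h1 : t / R ≤ 1 := (div_le_one hR).2 htR.le
      have h' : 0 ≤ M / R * t := by positivity
      nlinarith
    have e5 : 0 ≤ A * (t * √t / S) := by positivity
    have e4 : M / R + 2 * A ≤ (1 + 64 * C0 / θ + 16 / θ) * (M / R + K * S) := by
      rw [hA, hSR]
      have : (1 + 64 * C0 / θ + 16 / θ) * (M / R + K * S) =
        M / R + 2 * ((32 * C0 * M / R + 8 * K * S) / θ) + (K * S + 64 * C0 / θ * (K * S)
          + 16 / θ * (M / R)) := by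
        field_simp; ring
      rw [this]
      have : 0 ≤ (K * S + 64 * C0 / θ * (K * S) + 16 / θ * (M / R)) := by positivity
      linarith
    calc |v (z + t • ν)| ≤ M / R * t + 2 * A * t := by linarith
      _ = (M / R + 2 * A) * t := by ring
      _ ≤ _ := by gcongr
  · intro t ht _
    have hs0 : 0 < √t := Real.sqrt_pos.2 ht
    have := (((hasDerivAt_id t).const_mul 2).sub
      (((hasDerivAt_id t).mul (Real.hasDerivAt_sqrt ht.ne')).div_const S)).const_mul A
    have hst : (√t) ^ 2 = t := Real.sq_sqrt ht.le
    refine this.congr_deriv ?_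
    simp only [id]
    congr 1
    field_simp
    linear_combination hst
  · intro t ht _
    have hs0 : 0 < √t := Real.sqrt_pos.2 ht
    have := ((((Real.hasDerivAt_sqrt ht.ne').const_mul (3/2)).div_const S).const_sub 2).const_mul A
    refine this.congr_deriv ?_
    field_simp; ring
  · intro t ht htR
    have hs0 : 0 < √t := Real.sqrt_pos.2 ht
    have hsS : √t ≤ S := Real.sqrt_le_sqrt htR.le
    have : t * √t / S ≤ t := by
      rw [div_le_iff₀ hS0]; gcongr
    have : 0 ≤ 2 * t - t * √t / S := by linarith
    positivity
  · intro t ht _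
    have : 0 ≤ 3 / 4 / (√t * S) := by positivity
    nlinarith
  · intro t ht htR
    have hs0 : 0 < √t := Real.sqrt_pos.2 ht
    have hst : (√t) ^ 2 = t := Real.sq_sqrt ht.le
    have hsS : √t ≤ S := Real.sqrt_le_sqrt htR.le
    set s := √t
    have hRC : S ^ 2 * (8 * C0) ≤ θ := by
      rw [hSR]; exact (le_div_iff₀ (by positivity)).1 hRθ
    have h3 : |A * (2 - 3 / 2 * s / S)| ≤ 2 * A := by
      rw [abs_mul, abs_of_pos hA0]
      have : s / S ≤ 1 := (div_le_one hS0).2 hsS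
      have h0 : 0 ≤ s / S := by positivity
      have : |2 - 3 / 2 * s / S| ≤ 2 := by
        rw [mul_div_assoc, abs_le]; constructor <;> linarith
      nlinarith
    have b2 : C0 * |A * (2 - 3 / 2 * s / S)| ≤ 2 * (θ * A / (8 * (s * S))) := by
      calc _ ≤ C0 * (2 * A) := by gcongr
        _ ≤ _ := by
          have : 2 * (θ * A / (8 * (s * S))) = θ * A / (4 * (s * S)) := by field_simp; ring
          rw [this, le_div_iff₀ (by positivity)]
          have : s * S ≤ S ^ 2 := by nlinarith
          have : s * S * (8 * C0) ≤ θ := by nlinarith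
          nlinarith
    have b1 : 4 * C0 * M / R ^ 2 ≤ θ * A / (8 * (s * S)) := by
      rw [← hSR, div_le_div_iff₀ (by positivity) (by positivity)]
      have h1 : 32 * C0 * M ≤ θ * A * S ^ 2 := (div_le_iff₀ (by positivity)).1 hθA1
      calc 4 * C0 * M * (8 * (s * S)) = 32 * C0 * M * (s * S) := by ring
        _ ≤ (θ * A * S ^ 2) * (S * S) := by gcongr
        _ = _ := by ring
    have b3 : K / s ≤ θ * A / (8 * (s * S)) := by
      rw [div_le_div_iff₀ (by positivity) (by positivity)]
      calc K * (8 * (s * S)) = 8 * K * S * s := by ring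
        _ ≤ _ := by gcongr
    have b4 : θ * (A * -(3 / 4 / (s * S))) = - (6 * (θ * A / (8 * (s * S)))) := by
      field_simp; ring
    rw [b4]
    have : 0 < θ * A / (8 * (s * S)) := by positivity
    linarith
end barriers

/-! ### Reflection and interior gradient estimates -/

section gradient
variable {N : ℕ}

/-- Chain rule for second derivatives. -/
lemma D2_comp {v : Euc N → ℝ} {G : Euc N → Euc N} {x : Euc N}
    (hv : ContDiffAt ℝ 2 v (G x)) (hG : ContDiffAt ℝ 2 G x) (a b : Euc N) :
    D2 (fun y => v (G y)) x a b = D2 v (G x) (fderiv ℝ G x a) (fderiv ℝ G x b)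
      + fderiv ℝ v (G x) (fderiv ℝ (fderiv ℝ G) x a b) := by
  have hGc : ContinuousAt G x := hG.continuousAt
  have hGe : ∀ᶠ y in 𝓝 x, ContDiffAt ℝ 2 G y := hG.eventually (by simp)
  have h1 : fderiv ℝ (fun y => v (G y)) =ᶠ[𝓝 x]
      fun y => (fderiv ℝ v (G y)).comp (fderiv ℝ G y) := by
    filter_upwards [hGc.eventually hv.eventually_two, hGe] with y h1 h2
    exact (h1.hasFD1.comp y (h2.differentiableAt (by norm_num)).hasFDerivAt).fderiv
  have hG2 : HasFDerivAt (fderiv ℝ G) (fderiv ℝ (fderiv ℝ G) x) x :=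
    ((hG.fderiv_right (m := 1) (by norm_num)).differentiableAt (by norm_num)).hasFDerivAt
  have hG1 : HasFDerivAt G (fderiv ℝ G x) x := (hG.differentiableAt (by norm_num)).hasFDerivAt
  have h2 := (hv.hasFD2.comp x hG1).clm_comp hG2
  unfold D2
  rw [h1.fderiv_eq]
  erw [h2.fderiv]
  simp [D2]
  ring

lemma fderiv_comp_G {v : Euc N → ℝ} {G : Euc N → Euc N} {x : Euc N}
    (hv : ContDiffAt ℝ 2 v (G x)) (hG : ContDiffAt ℝ 2 G x) (a : Euc N) :
    fderiv ℝ (fun y => v (G y)) x a = fderiv ℝ v (G x) (fderiv ℝ G x a) := by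
  have hG1 : HasFDerivAt G (fderiv ℝ G x) x := (hG.differentiableAt (by norm_num)).hasFDerivAt
  have := (hv.hasFD1.comp x hG1).fderiv
  erw [this]
  rfl

/-- The Laplacian of a composition. -/
lemma lap_comp {v : Euc N → ℝ} {G : Euc N → Euc N} {x : Euc N}
    (hv : ContDiffAt ℝ 2 v (G x)) (hG : ContDiffAt ℝ 2 G x) :
    lap (fun y => v (G y)) x =
      ∑ i, D2 v (G x) (fderiv ℝ G x (EuclideanSpace.single i 1))
        (fderiv ℝ G x (EuclideanSpace.single i 1))
      + fderiv ℝ v (G x) (∑ i, fderiv ℝ (fderiv ℝ G) x (EuclideanSpace.single i 1)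
        (EuclideanSpace.single i 1)) := by
  rw [lap_eq_D2 (v := fun y => v (G y)) (hv.comp x hG), map_sum, ← Finset.sum_add_distrib]
  exact Finset.sum_congr rfl fun i _ => D2_comp hv hG _ _

/-- A one-sided linear bound near `0` controls the derivative at `0`. -/
lemma norm_deriv_le_of_right {F : Type*} [NormedAddCommGroup F] [NormedSpace ℝ F]
    {f : ℝ → F} {f' : F} {C δ : ℝ} (hδ : 0 < δ) (hf : HasDerivAt f f' 0)
    (hb : ∀ t, 0 < t → t < δ → ‖f t - f 0‖ ≤ C * t) : ‖f'‖ ≤ C := by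
  have h := (hasDerivAt_iff_tendsto_slope.1 hf).mono_left (nhdsWithin_mono (0:ℝ)
    (s := Ioi 0) (fun t ht => (ne_of_gt ht : t ≠ 0)))
  refine le_of_tendsto h.norm ?_
  filter_upwards [Ioo_mem_nhdsGT hδ] with t ht
  rw [slope_def_module, norm_smul, sub_zero, norm_inv, Real.norm_eq_abs, abs_of_pos ht.1,
    inv_mul_le_iff₀ ht.1, mul_comm]
  exact hb t ht.1 ht.2

lemma norm_clm_le_of_basis {F : Type*} [NormedAddCommGroup F] [NormedSpace ℝ F]
    (L : Euc N →L[ℝ] F) {B : ℝ} (hB : 0 ≤ B)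
    (h : ∀ i, ‖L (EuclideanSpace.single i 1)‖ ≤ B) : ‖L‖ ≤ N * B := by
  refine L.opNorm_le_bound (by positivity) fun x => ?_
  have hx : x = ∑ i, x i • EuclideanSpace.single i (1:ℝ) := by
    ext j
    simp [Finset.sum_apply, Pi.single_apply]
  calc ‖L x‖ = ‖∑ i, x i • L (EuclideanSpace.single i 1)‖ := by
        conv_lhs => rw [hx]
        rw [map_sum]; simp only [map_smul]
    _ ≤ ∑ i : Fin N, ‖x‖ * B := by
        refine (norm_sum_le _ _).trans (Finset.sum_le_sum fun i _ => ?_)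
        rw [norm_smul]
        gcongr
        · exact PiLp.norm_apply_le x i
        · exact h i
    _ = N * B * ‖x‖ := by simp; ring

/-- Reflection in the hyperplane through `x` orthogonal to the `j`-th basis vector. -/
def mirr (x : Euc N) (j : Fin N) (y : Euc N) : Euc N :=
  y - (2 * inner ℝ (EuclideanSpace.single j (1:ℝ)) (y - x)) • EuclideanSpace.single j (1:ℝ)

lemma mirr_hasFDerivAt (x : Euc N) (j : Fin N) (y : Euc N) :
    HasFDerivAt (mirr x j) (ContinuousLinearMap.id ℝ (Euc N) -
      ((2:ℝ) • innerSL ℝ (EuclideanSpace.single j (1:ℝ))).smulRight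
        (EuclideanSpace.single j (1:ℝ))) y := by
  have h1 : HasFDerivAt (fun y : Euc N => y - x) (ContinuousLinearMap.id ℝ (Euc N)) y :=
    (hasFDerivAt_id y).sub_const x
  have h2 := (((2:ℝ) • innerSL ℝ (EuclideanSpace.single j (1:ℝ) : Euc N)).hasFDerivAt.comp y h1)
  have h3 := (hasFDerivAt_id y).sub (h2.smul_const (EuclideanSpace.single j (1:ℝ) : Euc N))
  exact h3

lemma mirr_contDiff (x : Euc N) (j : Fin N) : ContDiff ℝ 2 (mirr x j) := by
  unfold mirr
  exact contDiff_id.sub ((contDiff_const.mul (contDiff_const.inner ℝ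
    (contDiff_id.sub contDiff_const))).smul contDiff_const)

lemma norm_mirr_sub (x : Euc N) (j : Fin N) (y : Euc N) : ‖mirr x j y - x‖ = ‖y - x‖ := by
  have h : mirr x j y - x = (y - x) - (2 * inner ℝ (EuclideanSpace.single j (1:ℝ)) (y - x)) •
      EuclideanSpace.single j (1:ℝ) := by unfold mirr; abel
  rw [h, ← sq_eq_sq₀ (norm_nonneg _) (norm_nonneg _), norm_sub_sq_real, inner_smul_right,
    norm_smul, mul_pow]
  rw [real_inner_comm]
  simp only [Real.norm_eq_abs, sq_abs]
  simp
  ring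

lemma lap_mirr {v : Euc N → ℝ} (x : Euc N) (j : Fin N) {y : Euc N}
    (hv : ContDiffAt ℝ 2 v (mirr x j y)) :
    lap (fun y => v (mirr x j y)) y = lap v (mirr x j y) := by
  rw [lap_comp hv (mirr_contDiff x j).contDiffAt, lap_eq_D2 hv]
  have hd : fderiv ℝ (mirr x j) = fun _ => (ContinuousLinearMap.id ℝ (Euc N) -
      ((2:ℝ) • innerSL ℝ (EuclideanSpace.single j (1:ℝ))).smulRight
        (EuclideanSpace.single j (1:ℝ))) := funext fun y => (mirr_hasFDerivAt x j y).fderiv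
  rw [hd]
  have h0 : fderiv ℝ (fun _ : Euc N => (ContinuousLinearMap.id ℝ (Euc N) -
      ((2:ℝ) • innerSL ℝ (EuclideanSpace.single j (1:ℝ))).smulRight
        (EuclideanSpace.single j (1:ℝ)))) y = 0 := by simp
  rw [h0]
  simp only [zero_apply, Finset.sum_const_zero, map_zero, add_zero]
  refine Finset.sum_congr rfl fun i _ => ?_
  by_cases hij : i = j
  · subst hij
    have : (ContinuousLinearMap.id ℝ (Euc N) -
      ((2:ℝ) • innerSL ℝ (EuclideanSpace.single i (1:ℝ))).smulRight
        (EuclideanSpace.single i (1:ℝ))) (EuclideanSpace.single i (1:ℝ))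
        = - EuclideanSpace.single i (1:ℝ) := by
      simp
      module
    rw [this]; simp
  · have : (ContinuousLinearMap.id ℝ (Euc N) -
      ((2:ℝ) • innerSL ℝ (EuclideanSpace.single j (1:ℝ))).smulRight
        (EuclideanSpace.single j (1:ℝ))) (EuclideanSpace.single i (1:ℝ))
        = EuclideanSpace.single i (1:ℝ) := by
      have h : inner ℝ (EuclideanSpace.single j (1:ℝ) : Euc N) (EuclideanSpace.single i (1:ℝ))
          = 0 := by
        rw [EuclideanSpace.inner_single_left]
        simp [Ne.symm hij]
      simp [h]
    rw [this]

/-- Interior gradient estimate for the Laplacian: odd reflection turns the partial derivative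
into a boundary normal derivative, controlled by the linear barrier. -/
lemma grad_est (hN : 0 < N) : ∃ C > 0, ∀ (R : ℝ), 0 < R → R ≤ 1 →
    ∀ (x : Euc N) (v : Euc N → ℝ) (M K : ℝ), 0 < M → 0 ≤ K →
    (∀ y ∈ Metric.ball x R, ContDiffAt ℝ 2 v y) → (∀ y ∈ Metric.ball x R, |v y| ≤ M) →
    (∀ y ∈ Metric.ball x R, |lap v y| ≤ K) → ‖fderiv ℝ v x‖ ≤ C * (M / R + K * R) := by
  have hN' : (1:ℝ) ≤ N := by exact_mod_cast hN
  obtain ⟨C, hC, hb⟩ := barrier_one (N := N) (C0 := (N:ℝ)) (θ := 1) (by positivity) one_pos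
  refine ⟨N * (C * (16 * N)), by positivity, ?_⟩
  intro R hR hR1 x v M K hM hK hv hvM hvK
  set r := R / (8 * N) with hr
  have hr0 : 0 < r := by positivity
  have hrR : r ≤ R / 8 := by
    rw [hr]; gcongr; linarith
  have hball : ∀ y, ‖y - x‖ < r → y ∈ Metric.ball x R := fun y hy => by
    rw [Metric.mem_ball, dist_eq_norm]; linarith
  have key : ∀ j : Fin N, ‖fderiv ℝ v x (EuclideanSpace.single j 1)‖
      ≤ C * (16 * N) * (M / R + K * R) := by
    intro j
    set e : Euc N := EuclideanSpace.single j 1 with he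
    have hen : ‖e‖ = 1 := by simp [he]
    have hφ : ∀ y ∈ HB e x r, ContDiffAt ℝ 2 (fun y => v y - v (mirr x j y)) y := fun y hy => by
      refine (hv y (hball y hy.1)).sub ?_
      refine ContDiffAt.comp y (hv _ (hball _ ?_)) (mirr_contDiff x j).contDiffAt
      rw [norm_mirr_sub]; exact hy.1
    have bound := hb r hr0 (by linarith) (by rw [hr]; gcongr) e x
      (fun i _ => EuclideanSpace.single i 1) (fun _ => 0) (fun y => v y - v (mirr x j y))
      (2 * M) (2 * K * √r) hen (by positivity) (by positivity) ?_ ?_ ?_ hφ ?_ ?_ ?_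
    · have hd : HasDerivAt (fun t : ℝ => v (x + t • e) - v (x - t • e)) (2 * fderiv ℝ v x e) 0 := by
        have hvx := (hv x (Metric.mem_ball_self hR)).hasFD1
        have l1 : HasDerivAt (fun t : ℝ => x + t • e) e 0 := by
          simpa using ((hasDerivAt_id (0:ℝ)).smul_const e).const_add x
        have l2 : HasDerivAt (fun t : ℝ => x - t • e) (-e) 0 := by
          simpa using ((hasDerivAt_id (0:ℝ)).smul_const e).const_sub x
        have h1 : HasFDerivAt v (fderiv ℝ v x) (x + (0:ℝ) • e) := by simpa using hvx
        have h2 : HasFDerivAt v (fderiv ℝ v x) (x - (0:ℝ) • e) := by simpa using hvx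
        have := (h1.comp_hasDerivAt 0 l1).sub (h2.comp_hasDerivAt 0 l2)
        refine this.congr_deriv ?_
        rw [map_neg]; ring
      have hle := norm_deriv_le_of_right (C := C * (2 * M / r + 2 * K * √r * √r)) hr0 hd ?_
      · rw [norm_mul, mul_assoc (2 * K), Real.mul_self_sqrt hr0.le] at hle
        simp only [Real.norm_ofNat] at hle
        have e1 : 2 * M / r = 16 * N * (M / R) := by rw [hr]; field_simp; ring
        rw [e1] at hle
        have e2 : K * r ≤ 16 * N * (K * R) := by
          have : r ≤ 16 * N * R := by nlinarith
          calc K * r ≤ K * (16 * N * R) := by gcongr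
            _ = _ := by ring
        have e3 : 0 ≤ 16 * N * (M / R) := by positivity
        have e4 : 0 ≤ 16 * N * (K * R) := by positivity
        have : 2 * ‖fderiv ℝ v x e‖ ≤ 2 * (C * (16 * N) * (M / R + K * R)) := by
          refine hle.trans ?_
          have : 16 * N * (M / R) + 2 * K * r ≤ 2 * (16 * N * (M / R) + 16 * N * (K * R)) := by
            linarith
          calc _ ≤ C * (2 * (16 * N * (M / R) + 16 * N * (K * R))) := by gcongr
            _ = _ := by ring
        linarith
      · intro t ht0 htr
        have hb' := bound t ht0 htr
        have e1 : mirr x j (x + t • e) = x - t • e := by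
          simp only [mirr, ← he]
          have : inner ℝ e (x + t • e - x) = t := by simp [inner_smul_right, hen]
          rw [this, two_mul, add_smul]; abel
        simp only [e1] at hb'
        simpa using hb'
    · intro y _; simp
    · intro y _; simp
    · intro y _
      have : inner ℝ e (EuclideanSpace.single j (1:ℝ)) ^ 2 ≤
        ∑ i, inner ℝ e (EuclideanSpace.single i (1:ℝ)) ^ 2 :=
        Finset.single_le_sum (f := fun i => inner ℝ e (EuclideanSpace.single i (1:ℝ)) ^ 2)
          (fun i _ => sq_nonneg _) (Finset.mem_univ j)
      have h2 : inner ℝ e (EuclideanSpace.single j (1:ℝ)) = (1:ℝ) := by simp [he]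
      rw [h2] at this
      simpa using this
    · intro y hy
      have h1 := hvM y (hball y hy.1)
      have h2 := hvM (mirr x j y) (hball _ (by rw [norm_mirr_sub]; exact hy.1))
      calc |v y - v (mirr x j y)| ≤ |v y| + |v (mirr x j y)| := abs_sub _ _
        _ ≤ 2 * M := by linarith
    · have huc : UniformContinuousOn v (Metric.closedBall x r) := by
        apply (isCompact_closedBall x r).uniformContinuousOn_of_continuous
        intro y hy
        refine (hv y ?_).continuousAt.continuousWithinAt
        rw [Metric.mem_closedBall] at hy
        rw [Metric.mem_ball]; linarith
      intro ε hε
      obtain ⟨δ, hδ, h⟩ := Metric.uniformContinuousOn_iff.1 huc ε hε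
      refine ⟨δ / 2, by positivity, fun y hy hyδ => ?_⟩
      have := h y (by rw [Metric.mem_closedBall, dist_eq_norm]; exact hy.1.le) (mirr x j y)
        (by rw [Metric.mem_closedBall, dist_eq_norm, norm_mirr_sub]; exact hy.1.le) ?_
      · exact this.le
      · have : y - mirr x j y = (2 * inner ℝ e (y - x)) • e := by
          simp only [mirr, ← he]; abel
        rw [dist_eq_norm, this, norm_smul, hen, mul_one, Real.norm_eq_abs,
          abs_of_pos (by linarith [hy.2])]
        linarith
    · intro y hy
      have hy2 : mirr x j y ∈ Metric.ball x R :=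
        hball _ (by rw [norm_mirr_sub]; exact hy.1)
      have e1 : Lop (fun i _ => EuclideanSpace.single i 1) (fun _ => 0)
          (fun y => v y - v (mirr x j y)) y = lap v y - lap v (mirr x j y) := by
        have hv2 : ContDiffAt ℝ 2 (fun y => v (mirr x j y)) y :=
          ContDiffAt.comp y (hv _ hy2) (mirr_contDiff x j).contDiffAt
        rw [Lop_sub (hv y (hball y hy.1)) hv2, ← lap_mirr x j (hv _ hy2)]
        rw [lap_eq_D2 (hv y (hball y hy.1)), lap_eq_D2 hv2]
        simp [Lop]
      rw [e1]
      have h1 := hvK y (hball y hy.1)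
      have h2 := hvK _ hy2
      have hlt : inner ℝ e (y - x) ≤ r := by
        have := real_inner_le_norm e (y - x)
        rw [hen, one_mul] at this
        exact this.trans hy.1.le
      have h3 : √(inner ℝ e (y - x)) ≤ √r := Real.sqrt_le_sqrt hlt
      have h4 : 0 < √(inner ℝ e (y - x)) := Real.sqrt_pos.2 hy.2
      rw [le_div_iff₀ h4]
      calc _ ≤ (|lap v y| + |lap v (mirr x j y)|) * √(inner ℝ e (y - x)) := by
            gcongr; exact abs_sub _ _
        _ ≤ (2 * K) * √r := by gcongr; linarith
  have := norm_clm_le_of_basis (fderiv ℝ v x) (B := C * (16 * N) * (M / R + K * R))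
    (by positivity) key
  linarith
end gradient

/-! ### Interior Hessian estimates, second differences and a Zygmund argument -/

section differences
variable {N : ℕ}

lemma D2_shift (v : Euc N → ℝ) (z y : Euc N) : D2 (fun y => v (y + z)) y = D2 v (y + z) := by
  unfold D2
  have : fderiv ℝ (fun y => v (y + z)) = fun y => fderiv ℝ v (y + z) :=
    funext fun y => fderiv_comp_add_right z
  rw [this, fderiv_comp_add_right]

lemma ContDiffAt.shift {v : Euc N → ℝ} {z y : Euc N} (h : ContDiffAt ℝ 2 v (y + z)) :
    ContDiffAt ℝ 2 (fun y => v (y + z)) y :=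
  ContDiffAt.comp y h (contDiffAt_id.add contDiffAt_const)

lemma lip_of_fderiv {S : Set (Euc N)} (hS : Convex ℝ S) {v : Euc N → ℝ} {C : ℝ}
    (hv : ∀ y ∈ S, ContDiffAt ℝ 2 v y) (hC : ∀ y ∈ S, ‖fderiv ℝ v y‖ ≤ C) {x y : Euc N}
    (hx : x ∈ S) (hy : y ∈ S) : |v y - v x| ≤ C * ‖y - x‖ :=
  hS.norm_image_sub_le_of_norm_hasFDerivWithin_le
    (fun z hz => (hv z hz).hasFD1.hasFDerivWithinAt) hC hx hy

lemma lip_of_D2 {S : Set (Euc N)} (hS : Convex ℝ S) {v : Euc N → ℝ} {C : ℝ}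
    (hv : ∀ y ∈ S, ContDiffAt ℝ 2 v y) (hC : ∀ y ∈ S, ‖D2 v y‖ ≤ C) {x y : Euc N}
    (hx : x ∈ S) (hy : y ∈ S) : ‖fderiv ℝ v y - fderiv ℝ v x‖ ≤ C * ‖y - x‖ :=
  hS.norm_image_sub_le_of_norm_hasFDerivWithin_le
    (fun z hz => (hv z hz).hasFD2.hasFDerivWithinAt) hC hx hy

/-- Interior estimate of second derivatives for the Laplacian with Lipschitz right-hand side. -/
lemma hess_est (hN : 0 < N) : ∃ C > 0, ∀ (R : ℝ), 0 < R → R ≤ 1 →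
    ∀ (x : Euc N) (v : Euc N → ℝ) (M L : ℝ), 0 < M → 0 ≤ L →
    (∀ y ∈ Metric.ball x R, ContDiffAt ℝ 2 v y) → (∀ y ∈ Metric.ball x R, ‖fderiv ℝ v y‖ ≤ M) →
    (∀ y ∈ Metric.ball x R, ∀ y' ∈ Metric.ball x R, |lap v y - lap v y'| ≤ L * ‖y - y'‖) →
    ‖D2 v x‖ ≤ C * (M / R + L * R) := by
  obtain ⟨C, hC, h⟩ := grad_est hN
  refine ⟨2 * C, by positivity, ?_⟩
  intro R hR hR1 x v M L hM hL hv hvM hvL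
  refine (hv x (Metric.mem_ball_self hR)).hasFD2.le_of_lip' (C := 2 * C * (M / R + L * R))
    (by positivity) ?_
  filter_upwards [Metric.ball_mem_nhds x (half_pos hR)] with x' hx'
  rw [Metric.mem_ball, dist_eq_norm] at hx'
  set z := x' - x with hz
  rcases eq_or_ne z 0 with h0 | h0
  · have : x' = x := by rw [hz, sub_eq_zero] at h0; exact h0
    simp [this]; positivity
  have hzp : 0 < ‖z‖ := norm_pos_iff.2 h0
  have hm : ∀ y ∈ Metric.ball x (R / 2), y ∈ Metric.ball x R ∧ y + z ∈ Metric.ball x R := by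
    intro y hy
    rw [Metric.mem_ball, dist_eq_norm] at *
    refine ⟨by linarith, ?_⟩
    rw [Metric.mem_ball, dist_eq_norm]
    calc ‖y + z - x‖ = ‖(y - x) + z‖ := by congr 1; abel
      _ ≤ ‖y - x‖ + ‖z‖ := norm_add_le _ _
      _ < R := by linarith
  have key := h (R / 2) (by linarith) (by linarith) x (fun y => v (y + z) - v y) (M * ‖z‖)
    (L * ‖z‖) (by positivity) (by positivity) ?_ ?_ ?_
  · have hx0 := hm x (Metric.mem_ball_self (by linarith))
    have e1 : fderiv ℝ (fun y => v (y + z) - v y) x = fderiv ℝ v x' - fderiv ℝ v x := by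
      have := fderiv_fun_sub (𝕜 := ℝ) (x := x) (hv _ hx0.2).shift.hasFD1.differentiableAt
        (hv _ hx0.1).hasFD1.differentiableAt
      rw [this, fderiv_comp_add_right]
      congr 3; rw [hz]; abel
    rw [e1] at key
    calc _ ≤ C * (M * ‖z‖ / (R / 2) + L * ‖z‖ * (R / 2)) := key
      _ = C * (2 * (M / R) + L * R / 2) * ‖z‖ := by field_simp
      _ ≤ C * (2 * (M / R) + 2 * (L * R)) * ‖z‖ := by
        have : 0 ≤ L * R := by positivity
        gcongr; linarith
      _ = _ := by ring
  · intro y hy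
    exact (hv _ (hm y hy).2).shift.sub (hv _ (hm y hy).1)
  · intro y hy
    have := lip_of_fderiv (convex_ball x R) hv hvM (hm y hy).1 (hm y hy).2
    simpa using this
  · intro y hy
    have h1 := hv _ (hm y hy).2
    have h2 := hv _ (hm y hy).1
    have e1 : lap (fun y => v (y + z) - v y) y = lap v (y + z) - lap v y := by
      rw [lap_eq_D2 (h1.shift.sub h2), lap_eq_D2 h1, lap_eq_D2 h2, ← Finset.sum_sub_distrib,
        D2_sub h1.shift h2, D2_shift]
      rfl
    rw [e1]
    simpa using hvL _ (hm y hy).2 _ (hm y hy).1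

/-- A mixed second difference is an average of second derivatives. -/
lemma second_diff {v : Euc N → ℝ} {y a b : Euc N} {q Q : ℝ}
    (hv : ∀ t ∈ Icc (0:ℝ) 1, ∀ s ∈ Icc (0:ℝ) 1, ContDiffAt ℝ 2 v (y + t • a + s • b))
    (hq : ∀ t ∈ Icc (0:ℝ) 1, ∀ s ∈ Icc (0:ℝ) 1, |D2 v (y + t • a + s • b) b a - q| ≤ Q) :
    |v (y + a + b) - v (y + a) - v (y + b) + v y - q| ≤ Q := by
  have hla : ∀ (w : Euc N) (t : ℝ), HasDerivAt (fun t : ℝ => y + t • a + w) a t := fun w t => by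
    simpa using (((hasDerivAt_id t).smul_const a).const_add y).add_const w
  have hlb : ∀ (w : Euc N) (t : ℝ), HasDerivAt (fun t : ℝ => w + t • b) b t := fun w t => by
    simpa using ((hasDerivAt_id t).smul_const b).const_add w
  have one : (1:ℝ) ∈ Icc (0:ℝ) 1 := by simp
  have zero : (0:ℝ) ∈ Icc (0:ℝ) 1 := by simp
  have h1 : ∀ t ∈ Icc (0:ℝ) 1, |fderiv ℝ v (y + t • a + b) a - fderiv ℝ v (y + t • a) a - q| ≤ Q := by
    intro t ht
    have := norm_image_sub_le_of_norm_deriv_le_segment_01'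
      (f := fun s : ℝ => fderiv ℝ v (y + t • a + s • b) a - s * q)
      (f' := fun s => D2 v (y + t • a + s • b) b a - q) (C := Q) ?_ ?_
    · simp only [one_smul, zero_smul, add_zero, one_mul, zero_mul, sub_zero] at this
      rw [Real.norm_eq_abs] at this
      refine le_trans (le_of_eq ?_) this
      congr 1; ring
    · intro s hs
      have h1 : HasDerivAt (fun s : ℝ => fderiv ℝ v (y + t • a + s • b))
          (D2 v (y + t • a + s • b) b) s :=
        (hv t ht s hs).hasFD2.comp_hasDerivAt s (hlb _ s)
      have h2 : HasDerivAt (fun s : ℝ => fderiv ℝ v (y + t • a + s • b) a)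
          (D2 v (y + t • a + s • b) b a) s := by
        simpa using h1.clm_apply (hasDerivAt_const s a)
      have h4 : HasDerivAt (fun s : ℝ => s * q) q s := by
        simpa using (hasDerivAt_id s).mul_const q
      exact (h2.sub h4).hasDerivWithinAt
    · intro s hs
      exact hq t ht s ⟨hs.1, hs.2.le⟩
  have := norm_image_sub_le_of_norm_deriv_le_segment_01'
    (f := fun t : ℝ => v (y + t • a + b) - v (y + t • a + 0) - t * q)
    (f' := fun t => fderiv ℝ v (y + t • a + b) a - fderiv ℝ v (y + t • a) a - q) (C := Q) ?_ ?_
  · simp only [one_smul, zero_smul, add_zero, one_mul, zero_mul, sub_zero] at this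
    rw [Real.norm_eq_abs] at this
    refine le_trans (le_of_eq ?_) this
    congr 1; ring
  · intro t ht
    have c1 : ContDiffAt ℝ 2 v (y + t • a + b) := by simpa using hv t ht 1 one
    have c2 : ContDiffAt ℝ 2 v (y + t • a + 0) := by simpa using hv t ht 0 zero
    have h2 : HasDerivAt (fun t : ℝ => v (y + t • a + b)) (fderiv ℝ v (y + t • a + b) a) t :=
      c1.hasFD1.comp_hasDerivAt t (hla b t)
    have h3 : HasDerivAt (fun t : ℝ => v (y + t • a + 0)) (fderiv ℝ v (y + t • a + 0) a) t :=
      c2.hasFD1.comp_hasDerivAt t (hla 0 t)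
    have h4 : HasDerivAt (fun s : ℝ => s * q) q t := by
      simpa using (hasDerivAt_id t).mul_const q
    have h5 := ((h2.sub h3).sub h4).hasDerivWithinAt (s := Icc (0:ℝ) 1)
    rw [add_zero] at h5
    exact h5
  · intro t ht
    exact h1 t ⟨ht.1, ht.2.le⟩

/-- Zygmund's dyadic argument: second differences of size `t^{1+σ}` make first differences
differ from the derivative by `k^{1+σ}`. -/
lemma zygmund {F : Type*} [NormedAddCommGroup F] [NormedSpace ℝ F] {σ : ℝ} (hσ : 0 < σ) :
    ∃ C > 0, ∀ (f : ℝ → F) (f' : F) (A k : ℝ), 0 < k → 0 ≤ A → HasDerivAt f f' 0 →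
    (∀ t, 0 < t → t ≤ k → ‖f (t + t) - (2:ℝ) • f t + f 0‖ ≤ A * (t * t ^ σ)) →
    ‖f k - f 0 - k • f'‖ ≤ C * A * (k * k ^ σ) := by
  set r : ℝ := (1 / 2) ^ σ with hr
  have hr1 : r < 1 := Real.rpow_lt_one (by norm_num) (by norm_num) hσ
  have hr0 : 0 < r := by positivity
  refine ⟨1 / (1 - r), by have := sub_pos.2 hr1; positivity, ?_⟩
  intro f f' A k hk hA hf h2
  set τ : ℕ → ℝ := fun n => k * (1 / 2) ^ n with hτ
  have hτ0 : ∀ n, 0 < τ n := fun n => by positivity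
  have hτk : ∀ n, τ n ≤ k := fun n => by
    have : ((1:ℝ) / 2) ^ n ≤ 1 := pow_le_one₀ (by norm_num) (by norm_num)
    simp only [hτ]; nlinarith
  have hτs : ∀ n, τ n = τ (n + 1) + τ (n + 1) := fun n => by simp only [hτ, pow_succ]; ring
  set a : ℕ → F := fun n => (τ n)⁻¹ • (f (τ n) - f 0) with ha
  have hlim : Tendsto a atTop (𝓝 f') := by
    have h := (hasDerivAt_iff_tendsto_slope.1 hf)
    have ht : Tendsto τ atTop (𝓝[≠] 0) := by
      rw [tendsto_nhdsWithin_iff]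
      refine ⟨?_, Eventually.of_forall fun n => (hτ0 n).ne'⟩
      have := (tendsto_pow_atTop_nhds_zero_of_lt_one (r := (1:ℝ)/2) (by norm_num) (by norm_num)).const_mul k
      simpa only [mul_zero] using this
    have h3 := h.comp ht
    refine h3.congr fun n => ?_
    simp [ha, slope_def_module]
  have hu : ∀ n, dist (a n) (a (n + 1)) ≤ A * k ^ σ * r ^ n := by
    intro n
    set t := τ (n + 1) with ht
    have ht0 : 0 < t := hτ0 _
    have e1 : a n - a (n + 1) = (2 * t)⁻¹ • (f (t + t) - (2:ℝ) • f t + f 0) := by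
      have h1 : τ n = t + t := hτs n
      simp only [ha, ← ht, h1]
      have h3 : (t)⁻¹ = (2 * t)⁻¹ * 2 := by field_simp
      rw [h3, ← two_mul, mul_smul, ← smul_sub]
      congr 1
      module
    rw [dist_eq_norm, e1, norm_smul, norm_inv, Real.norm_eq_abs, abs_of_pos (by positivity)]
    have h3 := h2 t ht0 (hτk _)
    have h4 : t ^ σ ≤ k ^ σ * r ^ n := by
      have : t ^ σ = k ^ σ * r ^ (n + 1) := by
        rw [ht, hτ, Real.mul_rpow hk.le (by positivity), hr, ← Real.rpow_natCast, ← Real.rpow_mul (by norm_num),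
          mul_comm ((n + 1 : ℕ) : ℝ) σ, Real.rpow_mul (by norm_num), Real.rpow_natCast]
      rw [this, pow_succ]
      have : 0 ≤ k ^ σ * r ^ n := by positivity
      nlinarith
    calc (2 * t)⁻¹ * ‖f (t + t) - (2:ℝ) • f t + f 0‖ ≤ (2 * t)⁻¹ * (A * (t * t ^ σ)) := by gcongr
      _ = A * t ^ σ / 2 := by field_simp
      _ ≤ A * t ^ σ := by
        have : 0 ≤ A * t ^ σ := by positivity
        linarith
      _ ≤ A * (k ^ σ * r ^ n) := by gcongr
      _ = _ := by ring
  have hfin := dist_le_of_le_geometric_of_tendsto₀ r (A * k ^ σ) hr1 hu hlim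
  have e0 : f k - f 0 - k • f' = k • (a 0 - f') := by
    simp only [ha, hτ, pow_zero, mul_one]
    rw [smul_sub, smul_smul, mul_inv_cancel₀ hk.ne', one_smul]
  rw [e0, norm_smul, Real.norm_eq_abs, abs_of_pos hk, ← dist_eq_norm]
  calc k * dist (a 0) f' ≤ k * (A * k ^ σ / (1 - r)) := by gcongr
    _ = _ := by ring

/-- A symmetric form is controlled by its action on `ν^⊥` and the value of the non-degenerate
trace-like quantity `Σ B(gᵢ,gᵢ)`. -/
lemma full_of_tangential {C0 θ : ℝ} (hC0 : 0 < C0) (hθ0 : 0 < θ) : ∃ C > 0,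
    ∀ (ν : Euc N) (g : Fin N → Euc N) (B : Euc N →L[ℝ] Euc N →L[ℝ] ℝ) (η : ℝ), ‖ν‖ = 1 → 0 ≤ η →
    (∀ a b, B a b = B b a) → ∑ i, ‖g i‖ ^ 2 ≤ C0 → θ ≤ ∑ i, inner ℝ ν (g i) ^ 2 →
    (∀ e, ‖e‖ = 1 → inner ℝ ν e = 0 → ‖B e‖ ≤ η) → |∑ i, B (g i) (g i)| ≤ η → ‖B‖ ≤ C * η := by
  refine ⟨2 + (1 + 3 * C0) / θ, by positivity, ?_⟩
  intro ν g B η hν hη hsym hg hθ htan htr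
  have htan' : ∀ e, inner ℝ ν e = 0 → ‖B e‖ ≤ η * ‖e‖ := by
    intro e he
    rcases eq_or_ne e 0 with h0 | h0
    · simp [h0]
    have hp : 0 < ‖e‖ := norm_pos_iff.2 h0
    have := htan (‖e‖⁻¹ • e) (by rw [norm_smul, norm_inv, norm_norm, inv_mul_cancel₀ hp.ne'])
      (by rw [inner_smul_right, he, mul_zero])
    rw [map_smul, norm_smul, norm_inv, norm_norm, inv_mul_le_iff₀ hp] at this
    linarith
  -- orthogonal splitting `x = a ν + τ`
  have hsplit : ∀ x : Euc N, ∃ τ, x = inner ℝ ν x • ν + τ ∧ inner ℝ ν τ = 0 ∧ ‖τ‖ ≤ ‖x‖ ∧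
      |inner ℝ ν x| ≤ ‖x‖ := by
    intro x
    have h2 : inner ℝ ν (x - inner ℝ ν x • ν) = 0 := by
      rw [inner_sub_right, inner_smul_right, real_inner_self_eq_norm_sq, hν]; ring
    refine ⟨x - inner ℝ ν x • ν, by abel, h2, ?_, ?_⟩
    · apply (sq_le_sq₀ (norm_nonneg _) (norm_nonneg _)).1
      have : ‖x‖ ^ 2 = ‖x - inner ℝ ν x • ν‖ ^ 2 + inner ℝ ν x ^ 2 := by
        conv_lhs => rw [show x = (x - inner ℝ ν x • ν) + inner ℝ ν x • ν by abel]
        rw [norm_add_sq_real, inner_smul_right, real_inner_comm ν (x - inner ℝ ν x • ν), h2, norm_smul, hν]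
        simp
      nlinarith [sq_nonneg (inner ℝ ν x)]
    · have := abs_real_inner_le_norm ν x
      rwa [hν, one_mul] at this
  have hνν : |B ν ν| ≤ (1 + 3 * C0) / θ * η := by
    have hterm : ∀ i, |B (g i) (g i) - inner ℝ ν (g i) ^ 2 * B ν ν| ≤ 3 * ‖g i‖ ^ 2 * η := by
      intro i
      obtain ⟨τ, h1, h2, h3, h4⟩ := hsplit (g i)
      set α := inner ℝ ν (g i) with hα
      have e : B (g i) (g i) - α ^ 2 * B ν ν = 2 * (α * B τ ν) + B τ τ := by
        conv_lhs => rw [h1]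
        simp only [map_add, map_smul, add_apply, smul_apply,
          smul_eq_mul, hsym ν τ]
        ring
      have b0 := htan' τ h2
      have b1 : |B τ ν| ≤ η * ‖g i‖ := by
        calc |B τ ν| ≤ ‖B τ‖ * ‖ν‖ := (B τ).le_opNorm ν
          _ ≤ η * ‖g i‖ := by rw [hν, mul_one]; exact b0.trans (by gcongr)
      have b2 : |B τ τ| ≤ η * ‖g i‖ * ‖g i‖ := by
        calc |B τ τ| ≤ ‖B τ‖ * ‖τ‖ := (B τ).le_opNorm τ
          _ ≤ η * ‖g i‖ * ‖g i‖ := by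
            gcongr
            exact b0.trans (by gcongr)
      rw [e]
      calc |2 * (α * B τ ν) + B τ τ| ≤ |2 * (α * B τ ν)| + |B τ τ| := abs_add_le _ _
        _ = 2 * (|α| * |B τ ν|) + |B τ τ| := by rw [abs_mul, abs_mul]; norm_num
        _ ≤ 2 * (‖g i‖ * (η * ‖g i‖)) + η * ‖g i‖ * ‖g i‖ := by gcongr
        _ = _ := by ring
    have hsum : |∑ i, B (g i) (g i) - (∑ i, inner ℝ ν (g i) ^ 2) * B ν ν| ≤ 3 * C0 * η := by
      rw [Finset.sum_mul, ← Finset.sum_sub_distrib]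
      calc _ ≤ ∑ i, 3 * ‖g i‖ ^ 2 * η :=
            (Finset.abs_sum_le_sum_abs _ _).trans (Finset.sum_le_sum fun i _ => hterm i)
        _ = 3 * (∑ i, ‖g i‖ ^ 2) * η := by rw [Finset.mul_sum, Finset.sum_mul]
        _ ≤ _ := by gcongr
    have h3 : (∑ i, inner ℝ ν (g i) ^ 2) * |B ν ν| ≤ (1 + 3 * C0) * η := by
      have h5 : 0 ≤ ∑ i, inner ℝ ν (g i) ^ 2 := hθ0.le.trans hθ
      rw [← abs_of_nonneg h5, ← abs_mul]
      have := abs_sub_abs_le_abs_sub ((∑ i, inner ℝ ν (g i) ^ 2) * B ν ν) (∑ i, B (g i) (g i))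
      rw [abs_sub_comm] at this
      linarith
    rw [div_mul_eq_mul_div, le_div_iff₀ hθ0, mul_comm]
    exact (mul_le_mul_of_nonneg_right hθ (abs_nonneg _)).trans h3
  have hBν : ‖B ν‖ ≤ (1 + (1 + 3 * C0) / θ) * η := by
    refine (B ν).opNorm_le_bound (by positivity) fun y => ?_
    obtain ⟨τ, h1, h2, h3, h4⟩ := hsplit y
    have e : B ν y = inner ℝ ν y * B ν ν + B τ ν := by
      conv_lhs => rw [h1]
      simp only [map_add, map_smul, smul_eq_mul, hsym ν τ]
    have b1 : |B τ ν| ≤ η * ‖y‖ := by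
      calc |B τ ν| ≤ ‖B τ‖ * ‖ν‖ := (B τ).le_opNorm ν
        _ ≤ η * ‖y‖ := by rw [hν, mul_one]; exact (htan' τ h2).trans (by gcongr)
    rw [e, Real.norm_eq_abs]
    calc _ ≤ |inner ℝ ν y| * |B ν ν| + |B τ ν| := by rw [← abs_mul]; exact abs_add_le _ _
      _ ≤ ‖y‖ * ((1 + 3 * C0) / θ * η) + η * ‖y‖ := by gcongr
      _ = _ := by ring
  refine B.opNorm_le_bound (by positivity) fun x => ?_
  obtain ⟨τ, h1, h2, h3, h4⟩ := hsplit x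
  have e : B x = inner ℝ ν x • B ν + B τ := by
    conv_lhs => rw [h1]
    simp only [map_add, map_smul]
  rw [e]
  calc _ ≤ |inner ℝ ν x| * ‖B ν‖ + ‖B τ‖ := by
        refine (norm_add_le _ _).trans ?_
        rw [norm_smul, Real.norm_eq_abs]
    _ ≤ ‖x‖ * ((1 + (1 + 3 * C0) / θ) * η) + η * ‖x‖ := by
        gcongr
        exact (htan' τ h2).trans (by gcongr)
    _ = _ := by ring
end differences

/-! ### Elliptic operators near a flat boundary: decay and difference quotients -/

section local_theory
variable {N : ℕ}

/-- The part of the ball of radius `s` about `y` in the upper half space `⟨ν, ·⟩ > 0`. -/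
def hb (ν y : Euc N) (s : ℝ) : Set (Euc N) := {y' | ‖y' - y‖ < s ∧ 0 < inner ℝ ν y'}

lemma convex_hb (ν y : Euc N) (s : ℝ) : Convex ℝ (hb ν y s) := by
  have h1 : {y' : Euc N | ‖y' - y‖ < s} = Metric.ball y s := by
    ext; simp [dist_eq_norm]
  have h2 : Convex ℝ {y' : Euc N | 0 < inner ℝ ν y'} :=
    convex_halfSpace_gt (f := fun y' => inner ℝ ν y')
      ⟨fun a b => inner_add_right _ _ _, fun a b => inner_smul_right _ _ _⟩ 0
  have h3 : Convex ℝ {y' : Euc N | ‖y' - y‖ < s} := h1 ▸ convex_ball y s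
  exact h3.inter h2

lemma hb_mono (ν y : Euc N) {s t : ℝ} (h : s ≤ t) : hb ν y s ⊆ hb ν y t :=
  fun _ hy => ⟨hy.1.trans_le h, hy.2⟩

lemma hb_add {ν y0 y z : Euc N} {s t : ℝ} (hy : y ∈ hb ν y0 s) (hz : inner ℝ ν z = 0)
    (hst : s + ‖z‖ ≤ t) : y + z ∈ hb ν y0 t := by
  refine ⟨?_, by rw [inner_add_right, hz, add_zero]; exact hy.2⟩
  calc ‖y + z - y0‖ = ‖(y - y0) + z‖ := by congr 1; abel
    _ ≤ ‖y - y0‖ + ‖z‖ := norm_add_le _ _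
    _ < t := by linarith [hy.1]

lemma hb_sub {ν y0 y : Euc N} {a b s : ℝ} (hy : ‖y - y0‖ < a) (hs : a + s ≤ b) :
    hb ν y s ⊆ hb ν y0 b := by
  intro y' h
  refine ⟨?_, h.2⟩
  calc ‖y' - y0‖ = ‖(y' - y) + (y - y0)‖ := by congr 1; abel
    _ ≤ ‖y' - y‖ + ‖y - y0‖ := norm_add_le _ _
    _ < b := by linarith [h.1]

lemma inner_ball {ν y0 y y' : Euc N} (hν : ‖ν‖ = 1) {a b κ : ℝ} (hy : y ∈ hb ν y0 a)
    (h1 : inner ℝ ν y ≤ 1) (hκ : κ ≤ 1 / 2) (hκ2 : κ ≤ b - a)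
    (hκ0 : 0 < κ) (hy' : y' ∈ Metric.ball y (κ * inner ℝ ν y)) :
    y' ∈ hb ν y0 b ∧ inner ℝ ν y / 2 ≤ inner ℝ ν y' ∧ inner ℝ ν y' ≤ 2 * inner ℝ ν y := by
  rw [Metric.mem_ball, dist_eq_norm] at hy'
  have h0 := hy.2
  have h2 : |inner ℝ ν y' - inner ℝ ν y| ≤ inner ℝ ν y / 2 := by
    rw [← inner_sub_right]
    refine (abs_real_inner_le_norm _ _).trans ?_
    rw [hν, one_mul]
    nlinarith
  rw [abs_le] at h2
  refine ⟨⟨?_, by linarith⟩, by linarith, by linarith⟩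
  calc ‖y' - y0‖ = ‖(y' - y) + (y - y0)‖ := by congr 1; abel
    _ ≤ ‖y' - y‖ + ‖y - y0‖ := norm_add_le _ _
    _ < κ * inner ℝ ν y + a := by linarith [hy.1]
    _ ≤ κ * 1 + a := by gcongr
    _ ≤ b := by linarith

/-- Coefficients of an elliptic operator near a point `y0` of a closed half space, with the
interior estimates for first and second derivatives that the operator satisfies. -/
structure LocData (N : ℕ) where
  /-- second order coefficients, as vector fields -/
  g : Fin N → Euc N → Euc N
  /-- first order coefficient -/
  c : Euc N → Euc N
  /-- inner normal of the half space -/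
  ν : Euc N
  /-- centre -/
  y0 : Euc N
  /-- radius of the ball where everything is defined -/
  ρ : ℝ
  /-- bound and Lipschitz constant of the coefficients -/
  C0 : ℝ
  /-- ellipticity constant in the normal direction -/
  θ : ℝ
  /-- constant of the interior estimates -/
  C1 : ℝ
  hν : ‖ν‖ = 1
  hρ : 0 < ρ
  hρ1 : ρ ≤ 1
  hC0 : 1 ≤ C0
  hθ : 0 < θ
  hC1 : 0 < C1
  g_bd : ∀ y ∈ hb ν y0 ρ, ∑ i, ‖g i y‖ ^ 2 ≤ C0
  c_bd : ∀ y ∈ hb ν y0 ρ, ‖c y‖ ≤ C0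
  g_ell : ∀ y ∈ hb ν y0 ρ, θ ≤ ∑ i, inner ℝ ν (g i y) ^ 2
  g_lip : ∀ y ∈ hb ν y0 ρ, ∀ y' ∈ hb ν y0 ρ, ∀ i, ‖g i y - g i y'‖ ≤ C0 * ‖y - y'‖
  c_lip : ∀ y ∈ hb ν y0 ρ, ∀ y' ∈ hb ν y0 ρ, ‖c y - c y'‖ ≤ C0 * ‖y - y'‖
  height : ∀ y ∈ hb ν y0 ρ, inner ℝ ν y ≤ 1
  ge : ∀ (y : Euc N) (s : ℝ) (v : Euc N → ℝ) (M K : ℝ), 0 < s → s ≤ 1 →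
    Metric.ball y s ⊆ hb ν y0 ρ → 0 < M → 0 ≤ K →
    (∀ y' ∈ Metric.ball y s, ContDiffAt ℝ 2 v y') → (∀ y' ∈ Metric.ball y s, |v y'| ≤ M) →
    (∀ y' ∈ Metric.ball y s, |Lop g c v y'| ≤ K) → ‖fderiv ℝ v y‖ ≤ C1 * (M / s + K * s)
  he : ∀ (y : Euc N) (s : ℝ) (v : Euc N → ℝ) (M L : ℝ), 0 < s → s ≤ 1 →
    Metric.ball y s ⊆ hb ν y0 ρ → 0 < M → 0 ≤ L →
    (∀ y' ∈ Metric.ball y s, ContDiffAt ℝ 2 v y') →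
    (∀ y' ∈ Metric.ball y s, ‖fderiv ℝ v y'‖ ≤ M) →
    (∀ y' ∈ Metric.ball y s, ∀ y'' ∈ Metric.ball y s,
      |Lop g c v y' - Lop g c v y''| ≤ L * ‖y' - y''‖) → ‖D2 v y‖ ≤ C1 * (M / s + L * s)

/-- `C²` functions on `S`, bounded by `M`, vanishing on the boundary of the half space, on which
the operator is at most `k(height)`. -/
structure Adm (D : LocData N) (S : Set (Euc N)) (v : Euc N → ℝ) (M : ℝ) (k : ℝ → ℝ) : Prop where
  cd : ∀ y ∈ S, ContDiffAt ℝ 2 v y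
  bd : ∀ y ∈ S, |v y| ≤ M
  van : ∀ ε > 0, ∃ η > 0, ∀ y ∈ S, inner ℝ D.ν y < η → |v y| ≤ ε
  L : ∀ y ∈ S, |Lop D.g D.c v y| ≤ k (inner ℝ D.ν y)

lemma Adm.mono {D : LocData N} {S S' : Set (Euc N)} {v : Euc N → ℝ} {M M' : ℝ} {k k' : ℝ → ℝ}
    (h : Adm D S v M k) (hS : S' ⊆ S) (hM : M ≤ M')
    (hk : ∀ y ∈ S', k (inner ℝ D.ν y) ≤ k' (inner ℝ D.ν y)) : Adm D S' v M' k' where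
  cd y hy := h.cd y (hS hy)
  bd y hy := (h.bd y (hS hy)).trans hM
  van ε hε := by
    obtain ⟨η, h1, h2⟩ := h.van ε hε
    exact ⟨η, h1, fun y hy => h2 y (hS hy)⟩
  L y hy := (h.L y (hS hy)).trans (hk y hy)

/-- Solutions of the transplanted semilinear problem. -/
structure LSol (D : LocData N) (M0 K0 : ℝ) (w : Euc N → ℝ) : Prop where
  adm : Adm D (hb D.ν D.y0 D.ρ) w M0 (fun _ => K0)
  LL : ∀ y ∈ hb D.ν D.y0 D.ρ, ∀ y' ∈ hb D.ν D.y0 D.ρ,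
    |Lop D.g D.c w y - Lop D.g D.c w y'| ≤ K0 * |w y - w y'|

lemma HB_eq_hb {ν y : Euc N} (hν : ‖ν‖ = 1) {R : ℝ} (hR : inner ℝ ν y < R)
    (hpos : 0 < inner ℝ ν y) :
    HB ν (y - inner ℝ ν y • ν) R ⊆ hb ν y (2 * R) ∧
    ∀ y', inner ℝ ν (y' - (y - inner ℝ ν y • ν)) = inner ℝ ν y' := by
  have h2 : ∀ y', inner ℝ ν (y' - (y - inner ℝ ν y • ν)) = inner ℝ ν y' := by
    intro y'
    rw [inner_sub_right, inner_sub_right, inner_smul_right, real_inner_self_eq_norm_sq, hν]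
    ring
  refine ⟨fun y' hy' => ⟨?_, by have := hy'.2; rwa [h2] at this⟩, h2⟩
  calc ‖y' - y‖ = ‖(y' - (y - inner ℝ ν y • ν)) - inner ℝ ν y • ν‖ := by congr 1; abel
    _ ≤ ‖y' - (y - inner ℝ ν y • ν)‖ + ‖inner ℝ ν y • ν‖ := norm_sub_le _ _
    _ < 2 * R := by
      rw [norm_smul, hν, mul_one, Real.norm_eq_abs, abs_of_pos hpos]
      linarith [hy'.1]

/-- Linear decay at the boundary, at any small scale `R`. -/
lemma LocData.decay_one (D : LocData N) : ∃ C > 0, ∃ R0 > 0, R0 ≤ 1 ∧ ∀ R, 0 < R → R ≤ R0 →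
    ∀ (y : Euc N) (v : Euc N → ℝ) (M K : ℝ), hb D.ν y (2 * R) ⊆ hb D.ν D.y0 D.ρ →
    0 < inner ℝ D.ν y → 0 < M → 0 ≤ K → Adm D (hb D.ν y (2 * R)) v M (fun t => K / √t) →
    |v y| ≤ C * (M / R + K * √R) * inner ℝ D.ν y := by
  have hC0 : 0 < D.C0 := by linarith [D.hC0]
  have hθ := D.hθ
  obtain ⟨C, hC, h⟩ := barrier_one (N := N) hC0 D.hθ
  refine ⟨C + 1, by positivity, min 1 (D.θ / (8 * D.C0)), by positivity, min_le_left _ _, ?_⟩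
  intro R hR hR0 y v M K hsub hy hM hK hadm
  have hyS : y ∈ hb D.ν y (2 * R) := ⟨by simpa using hR, hy⟩
  rcases lt_or_ge (inner ℝ D.ν y) R with hlt | hge
  · obtain ⟨hs, hi⟩ := HB_eq_hb D.hν hlt hy
    have := h R hR (hR0.trans (min_le_left _ _)) (hR0.trans (min_le_right _ _)) D.ν
      (y - inner ℝ D.ν y • D.ν) D.g D.c v M K D.hν hM hK
      (fun y' hy' => D.g_bd _ (hsub (hs hy'))) (fun y' hy' => D.c_bd _ (hsub (hs hy')))
      (fun y' hy' => D.g_ell _ (hsub (hs hy'))) (fun y' hy' => hadm.cd _ (hs hy'))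
      (fun y' hy' => hadm.bd _ (hs hy')) ?_ ?_ (inner ℝ D.ν y) hy hlt
    · rw [sub_add_cancel] at this
      refine this.trans ?_
      gcongr
      linarith
    · intro ε hε
      obtain ⟨η, h1, h2⟩ := hadm.van ε hε
      refine ⟨η, h1, fun y' hy' hlt' => h2 y' (hs hy') (by rwa [hi] at hlt')⟩
    · intro y' hy'
      rw [hi]
      exact hadm.L y' (hs hy')
  · refine (hadm.bd y hyS).trans ?_
    have h1 : M ≤ M / R * inner ℝ D.ν y := by
      rw [div_mul_eq_mul_div, le_div_iff₀ hR]; gcongr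
    have h2 : 0 ≤ C * (M / R + K * √R) * inner ℝ D.ν y := by positivity
    have h3 : 0 ≤ K * √R * inner ℝ D.ν y := by positivity
    linarith

/-- Square root decay at the boundary for operators of size `1/height`. -/
lemma LocData.decay_half (D : LocData N) {r : ℝ} (hr : 0 < r) : ∃ C > 0, ∃ R > 0, R ≤ r ∧
    ∀ (y : Euc N) (v : Euc N → ℝ) (M K : ℝ), hb D.ν y (2 * R) ⊆ hb D.ν D.y0 D.ρ →
    0 < inner ℝ D.ν y → 0 < M → 0 ≤ K → Adm D (hb D.ν y (2 * R)) v M (fun t => K / t) →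
    |v y| ≤ C * (M + K) * √(inner ℝ D.ν y) := by
  have hC0 : 0 < D.C0 := by linarith [D.hC0]
  have hθ := D.hθ
  set R := min r (min 1 (D.θ / (8 * D.C0))) with hRdef
  have hR : 0 < R := by positivity
  obtain ⟨C, hC, h⟩ := barrier_half (N := N) hC0 D.hθ hR
    ((min_le_right _ _).trans (min_le_left _ _)) ((min_le_right _ _).trans (min_le_right _ _))
  refine ⟨C + 1 / √R, by positivity, R, hR, min_le_left _ _, ?_⟩
  intro y v M K hsub hy hM hK hadm
  have hyS : y ∈ hb D.ν y (2 * R) := ⟨by simpa using hR, hy⟩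
  rcases lt_or_ge (inner ℝ D.ν y) R with hlt | hge
  · obtain ⟨hs, hi⟩ := HB_eq_hb D.hν hlt hy
    have := h D.ν
      (y - inner ℝ D.ν y • D.ν) D.g D.c v M K D.hν hM hK
      (fun y' hy' => D.g_bd _ (hsub (hs hy'))) (fun y' hy' => D.c_bd _ (hsub (hs hy')))
      (fun y' hy' => D.g_ell _ (hsub (hs hy'))) (fun y' hy' => hadm.cd _ (hs hy'))
      (fun y' hy' => hadm.bd _ (hs hy')) ?_ ?_ (inner ℝ D.ν y) hy hlt
    · rw [sub_add_cancel] at this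
      refine this.trans ?_
      gcongr
      have : 0 ≤ 1 / √R := by positivity
      linarith
    · intro ε hε
      obtain ⟨η, h1, h2⟩ := hadm.van ε hε
      refine ⟨η, h1, fun y' hy' hlt' => h2 y' (hs hy') (by rwa [hi] at hlt')⟩
    · intro y' hy'
      rw [hi]
      exact hadm.L y' (hs hy')
  · refine (hadm.bd y hyS).trans ?_
    have hsq : √R ≤ √(inner ℝ D.ν y) := Real.sqrt_le_sqrt hge
    have hsR : 0 < √R := Real.sqrt_pos.2 hR
    have h1 : M ≤ 1 / √R * M * √(inner ℝ D.ν y) := by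
      rw [one_div, mul_assoc, inv_mul_eq_div, le_div_iff₀ hsR]; gcongr
    have h2 : 0 ≤ C * (M + K) * √(inner ℝ D.ν y) := by positivity
    have h3 : 0 ≤ 1 / √R * K * √(inner ℝ D.ν y) := by positivity
    linarith

lemma LocData.g_le (D : LocData N) {y : Euc N} (hy : y ∈ hb D.ν D.y0 D.ρ) (i : Fin N) :
    ‖D.g i y‖ ≤ D.C0 := by
  have h1 : ‖D.g i y‖ ^ 2 ≤ D.C0 :=
    (Finset.single_le_sum (f := fun i => ‖D.g i y‖ ^ 2) (fun i _ => sq_nonneg _)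
      (Finset.mem_univ i)).trans (D.g_bd y hy)
  have h2 := D.hC0
  exact (sq_le_sq₀ (norm_nonneg _) (by linarith)).1 (h1.trans (by nlinarith))

/-- Effect of moving the coefficients. -/
lemma LocData.coeff_diff (D : LocData N) {y y' : Euc N} (hy : y ∈ hb D.ν D.y0 D.ρ)
    (hy' : y' ∈ hb D.ν D.y0 D.ρ) (B : Euc N →L[ℝ] Euc N →L[ℝ] ℝ) :
    |∑ i, B (D.g i y) (D.g i y) - ∑ i, B (D.g i y') (D.g i y')|
      ≤ N * (2 * D.C0 ^ 2) * ‖y - y'‖ * ‖B‖ := by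
  have hC0 := D.hC0
  rw [← Finset.sum_sub_distrib]
  have : ∀ i, |B (D.g i y) (D.g i y) - B (D.g i y') (D.g i y')|
      ≤ (2 * D.C0 ^ 2) * ‖y - y'‖ * ‖B‖ := by
    intro i
    have e : B (D.g i y) (D.g i y) - B (D.g i y') (D.g i y')
        = B (D.g i y) (D.g i y - D.g i y') + B (D.g i y - D.g i y') (D.g i y') := by
      simp only [map_sub, sub_apply]; ring
    have h1 := B.le_opNorm₂ (D.g i y) (D.g i y - D.g i y')
    have h2 := B.le_opNorm₂ (D.g i y - D.g i y') (D.g i y')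
    have h3 := D.g_lip y hy y' hy' i
    have h4 := D.g_le hy i
    have h5 := D.g_le hy' i
    rw [e]
    calc _ ≤ ‖B (D.g i y) (D.g i y - D.g i y')‖ + ‖B (D.g i y - D.g i y') (D.g i y')‖ :=
          abs_add_le _ _
      _ ≤ ‖B‖ * D.C0 * (D.C0 * ‖y - y'‖) + ‖B‖ * (D.C0 * ‖y - y'‖) * D.C0 := by
          refine add_le_add (h1.trans ?_) (h2.trans ?_) <;> gcongr
      _ = _ := by ring
  calc _ ≤ ∑ i : Fin N, (2 * D.C0 ^ 2) * ‖y - y'‖ * ‖B‖ :=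
        (Finset.abs_sum_le_sum_abs _ _).trans (Finset.sum_le_sum fun i _ => this i)
    _ = _ := by simp; ring

/-- The operator of a translate, compared with the operator of the function itself. -/
lemma LSol.shift_L {D : LocData N} {M0 K0 : ℝ} {w : Euc N → ℝ} (hw : LSol D M0 K0 w)
    {A s : ℝ} (hK0 : 0 ≤ K0) (hs : s ≤ D.ρ)
    (hA : ∀ y ∈ hb D.ν D.y0 s, ‖fderiv ℝ w y‖ ≤ A)
    {y z : Euc N} (hy : y ∈ hb D.ν D.y0 s) (hyz : y + z ∈ hb D.ν D.y0 s) :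
    |Lop D.g D.c (fun y => w (y + z)) y - Lop D.g D.c w y| ≤
      (N * (2 * D.C0 ^ 2) + D.C0 * A + K0 * A) * (‖z‖ * (1 + ‖D2 w (y + z)‖)) := by
  have hC0 := D.hC0
  have hy2 := hb_mono D.ν D.y0 hs hy
  have hyz2 := hb_mono D.ν D.y0 hs hyz
  have hA0 : 0 ≤ A := (norm_nonneg _).trans (hA y hy)
  have e1 : Lop D.g D.c (fun y => w (y + z)) y - Lop D.g D.c w y =
      (∑ i, D2 w (y + z) (D.g i y) (D.g i y)
        - ∑ i, D2 w (y + z) (D.g i (y + z)) (D.g i (y + z)))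
      + fderiv ℝ w (y + z) (D.c y - D.c (y + z))
      + (Lop D.g D.c w (y + z) - Lop D.g D.c w y) := by
    simp only [Lop, D2_shift, fderiv_comp_add_right, map_sub]
    ring
  have h1 := D.coeff_diff hy2 hyz2 (D2 w (y + z))
  have hn : ‖y - (y + z)‖ = ‖z‖ := by simp
  have h2 : |fderiv ℝ w (y + z) (D.c y - D.c (y + z))| ≤ A * (D.C0 * ‖z‖) := by
    calc _ ≤ ‖fderiv ℝ w (y + z)‖ * ‖D.c y - D.c (y + z)‖ := (fderiv ℝ w (y + z)).le_opNorm _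
      _ ≤ A * (D.C0 * ‖z‖) := by
        gcongr
        · exact hA _ hyz
        · rw [← hn]; exact D.c_lip _ hy2 _ hyz2
  have h3 : |Lop D.g D.c w (y + z) - Lop D.g D.c w y| ≤ K0 * (A * ‖z‖) := by
    refine (hw.LL _ hyz2 _ hy2).trans ?_
    gcongr
    have := lip_of_fderiv (convex_hb D.ν D.y0 s)
      (fun y hy => hw.adm.cd y (hb_mono D.ν D.y0 hs hy)) hA hy hyz
    simpa using this
  rw [e1]
  rw [hn] at h1
  have hB : 0 ≤ ‖D2 w (y + z)‖ := norm_nonneg (D2 w (y + z))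
  set B := ‖D2 w (y + z)‖
  calc _ ≤ N * (2 * D.C0 ^ 2) * ‖z‖ * B + A * (D.C0 * ‖z‖) + K0 * (A * ‖z‖) :=
        (abs_add_le _ _).trans (add_le_add ((abs_add_le _ _).trans (add_le_add h1 h2)) h3)
    _ ≤ N * (2 * D.C0 ^ 2) * ‖z‖ * B + A * (D.C0 * ‖z‖) + K0 * (A * ‖z‖)
        + (N * (2 * D.C0 ^ 2) * ‖z‖ + A * (D.C0 * ‖z‖) * B + K0 * (A * ‖z‖) * B) := by
        have : 0 ≤ (N * (2 * D.C0 ^ 2) * ‖z‖ + A * (D.C0 * ‖z‖) * B + K0 * (A * ‖z‖) * B) := by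
          positivity
        linarith
    _ = _ := by ring

/-- Tangential difference quotients are admissible. -/
lemma LSol.diff_adm {D : LocData N} {M0 K0 : ℝ} {w : Euc N → ℝ} (hw : LSol D M0 K0 w)
    {A s s' : ℝ} (hK0 : 0 ≤ K0) (hs : s ≤ D.ρ) {κ : ℝ → ℝ}
    (hA : ∀ y ∈ hb D.ν D.y0 s, ‖fderiv ℝ w y‖ ≤ A)
    (hκ : ∀ y ∈ hb D.ν D.y0 s, ‖D2 w y‖ ≤ κ (inner ℝ D.ν y))
    {z : Euc N} (hz : inner ℝ D.ν z = 0) (hzs : s' + ‖z‖ ≤ s) :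
    Adm D (hb D.ν D.y0 s') (fun y => w (y + z) - w y) (A * ‖z‖)
      (fun t => (N * (2 * D.C0 ^ 2) + D.C0 * A + K0 * A) * (‖z‖ * (1 + κ t))) := by
  have hss : s' ≤ s := by linarith [norm_nonneg z]
  have hC0 := D.hC0
  have m1 : ∀ y ∈ hb D.ν D.y0 s', y ∈ hb D.ν D.y0 s := fun y hy => hb_mono _ _ hss hy
  have m2 : ∀ y ∈ hb D.ν D.y0 s', y + z ∈ hb D.ν D.y0 s := fun y hy => hb_add hy hz hzs
  have cd : ∀ y ∈ hb D.ν D.y0 s, ContDiffAt ℝ 2 w y :=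
    fun y hy => hw.adm.cd y (hb_mono D.ν D.y0 hs hy)
  have hi : ∀ y, inner ℝ D.ν (y + z) = inner ℝ D.ν y := fun y => by
    rw [inner_add_right, hz, add_zero]
  refine ⟨fun y hy => (cd _ (m2 y hy)).shift.sub (cd _ (m1 y hy)), fun y hy => ?_, ?_, ?_⟩
  · have := lip_of_fderiv (convex_hb D.ν D.y0 s) cd hA (m1 y hy) (m2 y hy)
    simpa using this
  · intro ε hε
    obtain ⟨η, h1, h2⟩ := hw.adm.van (ε / 2) (by linarith)
    refine ⟨η, h1, fun y hy hlt => ?_⟩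
    have a1 := h2 y (hb_mono _ _ hs (m1 y hy)) hlt
    have a2 := h2 (y + z) (hb_mono _ _ hs (m2 y hy)) (by rwa [hi])
    calc |w (y + z) - w y| ≤ |w (y + z)| + |w y| := abs_sub _ _
      _ ≤ ε := by linarith
  · intro y hy
    have hA0 : 0 ≤ A := (norm_nonneg _).trans (hA y (m1 y hy))
    rw [Lop_sub (cd _ (m2 y hy)).shift (cd _ (m1 y hy))]
    refine (hw.shift_L hK0 hs hA (m1 y hy) (m2 y hy)).trans ?_
    have := hκ _ (m2 y hy)
    rw [hi] at this
    gcongr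

/-- Tangential control of the Hessian gives full control, through the equation. -/
lemma LocData.full (D : LocData N) : ∃ C > 0, ∀ (M0 K0 : ℝ) (w : Euc N → ℝ) (y : Euc N) (A Q : ℝ),
    LSol D M0 K0 w → y ∈ hb D.ν D.y0 D.ρ → ‖fderiv ℝ w y‖ ≤ A → K0 + D.C0 * A ≤ Q →
    (∀ e, ‖e‖ = 1 → inner ℝ D.ν e = 0 → ‖D2 w y e‖ ≤ Q) → ‖D2 w y‖ ≤ C * Q := by
  have hC0 : 0 < D.C0 := by linarith [D.hC0]
  obtain ⟨C, hC, h⟩ := full_of_tangential (N := N) hC0 D.hθ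
  refine ⟨C, hC, ?_⟩
  intro M0 K0 w y A Q hw hy hA hQ ht
  have hL := hw.adm.L y hy
  have hK0 : 0 ≤ K0 := (abs_nonneg _).trans hL
  have hA0 : 0 ≤ A := (norm_nonneg _).trans hA
  refine h D.ν (fun i => D.g i y) _ Q D.hν (le_trans (by positivity) hQ)
    (hw.adm.cd y hy).D2_symm (D.g_bd y hy) (D.g_ell y hy) ht ?_
  have e : ∑ i, D2 w y (D.g i y) (D.g i y) = Lop D.g D.c w y - fderiv ℝ w y (D.c y) := by
    simp [Lop]
  rw [e]
  calc _ ≤ |Lop D.g D.c w y| + |fderiv ℝ w y (D.c y)| := abs_sub _ _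
    _ ≤ K0 + A * D.C0 := by
      refine add_le_add hL (((fderiv ℝ w y).le_opNorm _).trans ?_)
      gcongr
      exact D.c_bd y hy
    _ ≤ Q := by linarith

/-- Bounds for difference quotients of `Dw` in a direction `e` pass to `D²w(e, ·)`. -/
lemma D2_apply_le_of_diff {w : Euc N → ℝ} {y e : Euc N} {Q k0 : ℝ} (hk0 : 0 < k0)
    (hw : ContDiffAt ℝ 2 w y)
    (h : ∀ k, 0 < k → k < k0 → ‖fderiv ℝ w (y + k • e) - fderiv ℝ w y‖ ≤ Q * k) :
    ‖D2 w y e‖ ≤ Q := by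
  have l : HasDerivAt (fun t : ℝ => y + t • e) e 0 := by
    simpa using ((hasDerivAt_id (0:ℝ)).smul_const e).const_add y
  have h1 : HasFDerivAt (fderiv ℝ w) (D2 w y) (y + (0:ℝ) • e) := by simpa using hw.hasFD2
  have h2 : HasDerivAt (fun t : ℝ => fderiv ℝ w (y + t • e)) (D2 w y e) 0 :=
    h1.comp_hasDerivAt 0 l
  refine norm_deriv_le_of_right hk0 h2 ?_
  intro t h3 h4
  simpa using h t h3 h4

end local_theory

/-! ### Bounded second derivatives up to the flat boundary -/

section boundedness
variable {N : ℕ}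

/-- Solutions decay linearly at the flat boundary. -/
lemma LocData.step1 (D : LocData N) {M0 K0 : ℝ} (hM0 : 0 < M0) (hK0 : 0 ≤ K0) :
    ∃ C > 0, ∀ w, LSol D M0 K0 w → ∀ y ∈ hb D.ν D.y0 (D.ρ / 2), |w y| ≤ C * inner ℝ D.ν y := by
  obtain ⟨C, hC, R0, hR0, hR01, h⟩ := D.decay_one
  have hρ := D.hρ
  set R := min R0 (D.ρ / 4) with hR
  have hRp : 0 < R := by positivity
  refine ⟨C * (M0 / R + K0 * √R), by positivity, fun w hw y hy => ?_⟩
  have hsub : hb D.ν y (2 * R) ⊆ hb D.ν D.y0 D.ρ :=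
    hb_sub hy.1 (by have := min_le_right R0 (D.ρ / 4); linarith)
  refine h R hRp (min_le_left _ _) y w M0 K0 hsub hy.2 hM0 hK0 (hw.adm.mono hsub le_rfl ?_)
  intro y' hy'
  have h1 := D.height y' (hsub hy')
  have h2 : 0 < √(inner ℝ D.ν y') := Real.sqrt_pos.2 hy'.2
  rw [le_div_iff₀ h2]
  have : √(inner ℝ D.ν y') ≤ 1 := Real.sqrt_le_one.2 h1
  nlinarith

/-- Gradient bound up to the flat boundary: rescaled interior estimate plus linear decay. -/
lemma LocData.step2 (D : LocData N) {M0 K0 : ℝ} (hM0 : 0 < M0) (hK0 : 0 ≤ K0) :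
    ∃ C > 0, ∀ w, LSol D M0 K0 w → ∀ y ∈ hb D.ν D.y0 (D.ρ / 4), ‖fderiv ℝ w y‖ ≤ C := by
  obtain ⟨C, hC, h⟩ := D.step1 hM0 hK0
  have hρ := D.hρ
  have hρ1 := D.hρ1
  have hC1 := D.hC1
  refine ⟨D.C1 * (2 * C / (D.ρ / 4) + K0), by positivity, fun w hw y hy => ?_⟩
  have ht := hy.2
  have ht1 := D.height y (hb_mono _ _ (by linarith) hy)
  have hb1 : ∀ y' ∈ Metric.ball y (D.ρ / 4 * inner ℝ D.ν y), _ := fun y' hy' =>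
    inner_ball (b := D.ρ / 2) D.hν hy ht1 (by linarith) (by linarith) (by linarith) hy'
  have hb2 : Metric.ball y (D.ρ / 4 * inner ℝ D.ν y) ⊆ hb D.ν D.y0 D.ρ :=
    fun y' hy' => hb_mono _ _ (by linarith) (hb1 y' hy').1
  have hs1 : D.ρ / 4 * inner ℝ D.ν y ≤ 1 := by nlinarith
  have := D.ge y (D.ρ / 4 * inner ℝ D.ν y) w (C * (2 * inner ℝ D.ν y)) K0 (by positivity) hs1 hb2
    (by positivity) hK0 (fun y' hy' => hw.adm.cd _ (hb2 hy'))
    (fun y' hy' => (h w hw y' (hb1 y' hy').1).trans (by have := (hb1 y' hy').2.2; gcongr))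
    (fun y' hy' => hw.adm.L _ (hb2 hy'))
  refine this.trans (mul_le_mul_of_nonneg_left (add_le_add (le_of_eq ?_) ?_) hC1.le)
  · field_simp
  · exact mul_le_of_le_one_right hK0 hs1

/-- A first, singular Hessian bound: `‖D²w‖ ≲ 1/height`. -/
lemma LocData.step2' (D : LocData N) {M0 K0 : ℝ} (hM0 : 0 < M0) (hK0 : 0 ≤ K0) :
    ∃ C > 0, ∀ w, LSol D M0 K0 w → ∀ y ∈ hb D.ν D.y0 (D.ρ / 8),
      ‖D2 w y‖ ≤ C * (inner ℝ D.ν y) ^ (-1 : ℝ) := by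
  obtain ⟨C, hC, h⟩ := D.step2 hM0 hK0
  have hρ := D.hρ
  have hρ1 := D.hρ1
  have hC1 := D.hC1
  refine ⟨D.C1 * (C / (D.ρ / 8) + K0 * C), by positivity, fun w hw y hy => ?_⟩
  have ht := hy.2
  have ht1 := D.height y (hb_mono _ _ (by linarith) hy)
  have hb1 : ∀ y' ∈ Metric.ball y (D.ρ / 8 * inner ℝ D.ν y), _ := fun y' hy' =>
    inner_ball (b := D.ρ / 4) D.hν hy ht1 (by linarith) (by linarith) (by linarith) hy'
  have hb2 : Metric.ball y (D.ρ / 8 * inner ℝ D.ν y) ⊆ hb D.ν D.y0 D.ρ :=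
    fun y' hy' => hb_mono _ _ (by linarith) (hb1 y' hy').1
  have hs1 : D.ρ / 8 * inner ℝ D.ν y ≤ 1 := by nlinarith
  have := D.he y (D.ρ / 8 * inner ℝ D.ν y) w C (K0 * C) (by positivity) hs1 hb2
    (by positivity) (by positivity) (fun y' hy' => hw.adm.cd _ (hb2 hy'))
    (fun y' hy' => h w hw y' (hb1 y' hy').1)
    (fun y' hy' y'' hy'' => by
      refine (hw.LL _ (hb2 hy') _ (hb2 hy'')).trans ?_
      have := lip_of_fderiv (convex_hb D.ν D.y0 (D.ρ / 4))
        (fun z hz => hw.adm.cd z (hb_mono D.ν D.y0 (by linarith) hz)) (h w hw)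
        (hb1 y'' hy'').1 (hb1 y' hy').1
      rw [mul_assoc]
      gcongr)
  refine this.trans ?_
  rw [Real.rpow_neg_one, mul_assoc D.C1]
  refine mul_le_mul_of_nonneg_left ?_ hC1.le
  rw [add_mul]
  refine add_le_add (le_of_eq (by field_simp)) ?_
  have h3 : D.ρ / 8 * inner ℝ D.ν y ≤ (inner ℝ D.ν y)⁻¹ :=
    hs1.trans ((one_le_inv₀ ht).2 ht1)
  gcongr

/-- From a bound `‖D²w‖ ≲ t ^ (-γ)` and a decay estimate with exponent `β` for tangential
differences, the improved bound `‖D²w‖ ≲ t ^ (β - 1)` follows. -/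
lemma LocData.gstep (D : LocData N) {M0 K0 A A2 Cd γ β s s1 s2 s3 : ℝ} (hK0 : 0 ≤ K0)
    (hA : 0 < A) (hA2 : 0 < A2) (hCd : 0 < Cd) (hγ0 : 0 ≤ γ) (hγ1 : γ ≤ 1) (hβ0 : 0 ≤ β)
    (hβ1 : β ≤ 1) (hβγ : β - 1 ≤ -γ + 1) (hs : s ≤ D.ρ) (hs1 : s1 < s) (hs2 : s2 ≤ s1)
    (hs3 : s3 < s2)
    (Hd : ∀ (v : Euc N → ℝ) (M K : ℝ), 0 < M → 0 ≤ K →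
      Adm D (hb D.ν D.y0 s1) v M (fun t => K * t ^ (-γ)) →
      ∀ y ∈ hb D.ν D.y0 s2, |v y| ≤ Cd * (M + K) * (inner ℝ D.ν y) ^ β) :
    ∃ C > 0, ∀ w, LSol D M0 K0 w → (∀ y ∈ hb D.ν D.y0 s, ‖fderiv ℝ w y‖ ≤ A) →
      (∀ y ∈ hb D.ν D.y0 s, ‖D2 w y‖ ≤ A2 * (inner ℝ D.ν y) ^ (-γ)) →
      ∀ y ∈ hb D.ν D.y0 s3, ‖D2 w y‖ ≤ C * (inner ℝ D.ν y) ^ (β - 1) := by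
  have hC0 := D.hC0
  have hC1 := D.hC1
  obtain ⟨Cf, hCf, hfull⟩ := D.full
  set CL := (N * (2 * D.C0 ^ 2) + D.C0 * A + K0 * A) with hCL
  have hCLp : 0 < CL := by positivity
  set KK := CL * (1 + A2) with hKK
  have hKKp : 0 < KK := by positivity
  set κ := min (1 / 2) (s2 - s3) with hκ
  have hκ0 : 0 < κ := lt_min (by norm_num) (by linarith)
  have hκ1 : κ ≤ 1 / 2 := min_le_left _ _
  set Q0 := D.C1 * (Cd * (A + KK) * 2 / κ + 2 * KK) with hQ0
  have hQ0p : 0 < Q0 := by positivity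
  refine ⟨Cf * (K0 + D.C0 * A + Q0), by positivity, fun w hw hw1 hw2 y hy => ?_⟩
  have ht := hy.2
  have hyρ : y ∈ hb D.ν D.y0 D.ρ := hb_mono _ _ (by linarith) hy
  have ht1 := D.height y hyρ
  set t := inner ℝ D.ν y with htdef
  have hpow1 : 1 ≤ t ^ (β - 1) := by
    exact Real.one_le_rpow_of_pos_of_le_one_of_nonpos ht ht1 (by linarith)
  have htan : ∀ e, ‖e‖ = 1 → inner ℝ D.ν e = 0 → ‖D2 w y e‖ ≤ Q0 * t ^ (β - 1) := by
    intro e he hνe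
    refine D2_apply_le_of_diff (k0 := s - s1) (by linarith) (hw.adm.cd y hyρ) ?_
    intro k hk hk0
    have hnk : ‖k • e‖ = k := by rw [norm_smul, he, mul_one, Real.norm_of_nonneg hk.le]
    have had := hw.diff_adm (s' := s1) (z := k • e) hK0 hs hw1 hw2
      (κ := fun t => A2 * t ^ (-γ)) (by rw [inner_smul_right, hνe, mul_zero])
      (by rw [hnk]; linarith)
    rw [hnk] at had
    have had2 : Adm D (hb D.ν D.y0 s1) (fun y => w (y + k • e) - w y) (A * k)
        (fun t => KK * k * t ^ (-γ)) := by
      refine had.mono subset_rfl le_rfl ?_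
      intro y' hy'
      have h1 : (1:ℝ) ≤ (inner ℝ D.ν y') ^ (-γ) := by
        rw [← Real.rpow_zero (inner ℝ D.ν y')]
        exact Real.rpow_le_rpow_of_exponent_ge hy'.2
          (D.height _ (hb_mono _ _ (by linarith) hy')) (by linarith)
      calc CL * (k * (1 + A2 * (inner ℝ D.ν y') ^ (-γ)))
          ≤ CL * (k * ((inner ℝ D.ν y') ^ (-γ) + A2 * (inner ℝ D.ν y') ^ (-γ))) := by gcongr
        _ = _ := by rw [hKK]; ring
    have hdec := Hd _ _ _ (by positivity) (by positivity) had2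
    have hb1 : ∀ y' ∈ Metric.ball y (κ * t), _ := fun y' hy' =>
      inner_ball (b := s2) D.hν hy ht1 hκ1 (min_le_right _ _) hκ0 hy'
    have hb2 : Metric.ball y (κ * t) ⊆ hb D.ν D.y0 s1 :=
      fun y' hy' => hb_mono _ _ (by linarith) (hb1 y' hy').1
    have hge := D.ge y (κ * t) (fun y => w (y + k • e) - w y)
      (Cd * (A * k + KK * k) * (2 * t ^ β)) (KK * k * (2 * t ^ (-γ))) (by positivity)
      (by nlinarith) (hb2.trans (hb_mono _ _ (by linarith))) (by positivity) (by positivity)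
      (fun y' hy' => had2.cd _ (hb2 hy'))
      (fun y' hy' => (hdec _ (hb1 y' hy').1).trans (by
        gcongr
        calc (inner ℝ D.ν y') ^ β ≤ (2 * t) ^ β :=
              Real.rpow_le_rpow (hb1 y' hy').1.2.le (hb1 y' hy').2.2 hβ0
          _ = 2 ^ β * t ^ β := Real.mul_rpow (by norm_num) ht.le
          _ ≤ 2 * t ^ β := by
              gcongr
              calc (2:ℝ) ^ β ≤ 2 ^ (1:ℝ) := Real.rpow_le_rpow_of_exponent_le (by norm_num) hβ1
                _ = 2 := Real.rpow_one 2))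
      (fun y' hy' => (had2.L _ (hb2 hy')).trans (by
        gcongr
        calc (inner ℝ D.ν y') ^ (-γ) ≤ (t / 2) ^ (-γ) :=
              Real.rpow_le_rpow_of_nonpos (by positivity) (hb1 y' hy').2.1 (by linarith)
          _ = 2 ^ γ * t ^ (-γ) := by
              rw [Real.div_rpow ht.le (by norm_num), Real.rpow_neg (by norm_num : (0:ℝ) ≤ 2)]
              field_simp
          _ ≤ 2 * t ^ (-γ) := by
              gcongr
              calc (2:ℝ) ^ γ ≤ 2 ^ (1:ℝ) := Real.rpow_le_rpow_of_exponent_le (by norm_num) hγ1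
                _ = 2 := Real.rpow_one 2))
    have hfd : fderiv ℝ (fun y => w (y + k • e) - w y) y
        = fderiv ℝ w (y + k • e) - fderiv ℝ w y := by
      have c1 := hw.adm.cd (y + k • e) (hb_mono _ _ hs
        (hb_add hy (by rw [inner_smul_right, hνe, mul_zero]) (by rw [hnk]; linarith)))
      rw [fderiv_fun_sub (c1.shift.differentiableAt (by norm_num))
        ((hw.adm.cd y hyρ).differentiableAt (by norm_num)), fderiv_comp_add_right]
    rw [hfd] at hge
    refine hge.trans ?_
    have e1 : t ^ β = t ^ (β - 1) * t := by
      rw [Real.rpow_sub_one ht.ne']; field_simp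
    have e2 : t ^ (-γ) * t ≤ t ^ (β - 1) := by
      calc t ^ (-γ) * t = t ^ (-γ + 1) := by rw [Real.rpow_add_one ht.ne']
        _ ≤ _ := Real.rpow_le_rpow_of_exponent_ge ht ht1 hβγ
    rw [hQ0]
    calc D.C1 * (Cd * (A * k + KK * k) * (2 * t ^ β) / (κ * t) + KK * k * (2 * t ^ (-γ)) * (κ * t))
        = D.C1 * (Cd * (A + KK) * 2 / κ * t ^ (β - 1) + 2 * KK * κ * (t ^ (-γ) * t)) * k := by
          rw [e1]; field_simp
      _ ≤ D.C1 * (Cd * (A + KK) * 2 / κ * t ^ (β - 1) + 2 * KK * 1 * t ^ (β - 1)) * k := by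
          gcongr; linarith
      _ = _ := by ring
  have := hfull M0 K0 w y A ((K0 + D.C0 * A + Q0) * t ^ (β - 1)) hw hyρ
    (hw1 y (hb_mono _ _ (by linarith) hy)) (by nlinarith [mul_nonneg (by linarith : 0 ≤ D.C0) hA.le])
    (fun e he hνe => (htan e he hνe).trans (by
      gcongr
      nlinarith [mul_nonneg (by linarith : 0 ≤ D.C0) hA.le]))
  rw [mul_assoc]
  exact this

/-- Bounds for first and second derivatives up to the flat boundary. -/
lemma LocData.bounded (D : LocData N) {M0 K0 : ℝ} (hM0 : 0 < M0) (hK0 : 0 ≤ K0) :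
    ∃ C > 0, ∃ s > 0, s ≤ D.ρ ∧ ∀ w, LSol D M0 K0 w → ∀ y ∈ hb D.ν D.y0 s,
      ‖fderiv ℝ w y‖ ≤ C ∧ ‖D2 w y‖ ≤ C := by
  obtain ⟨A, hA, h2⟩ := D.step2 hM0 hK0
  obtain ⟨A2, hA2, h2'⟩ := D.step2' hM0 hK0
  have hρ := D.hρ
  obtain ⟨Cd, hCd, R, hR, hRr, hdec⟩ := D.decay_half (r := D.ρ / 64) (by positivity)
  obtain ⟨A3, hA3, h3⟩ := D.gstep (M0 := M0) (γ := 1) (β := 1 / 2) (s := D.ρ / 8)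
    (s1 := D.ρ / 16) (s2 := D.ρ / 32) (s3 := D.ρ / 64) hK0 hA hA2 hCd (by norm_num) (by norm_num)
    (by norm_num) (by norm_num) (by norm_num) (by linarith) (by linarith) (by linarith)
    (by linarith) (by
      intro v M K hM hK had y hy
      have hsub : hb D.ν y (2 * R) ⊆ hb D.ν D.y0 (D.ρ / 16) := hb_sub hy.1 (by linarith)
      have := hdec y v M K (hsub.trans (hb_mono _ _ (by linarith))) hy.2 hM hK
        (had.mono hsub le_rfl (fun y' _ => by rw [Real.rpow_neg_one, div_eq_mul_inv]))
      rwa [Real.sqrt_eq_rpow] at this)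
  obtain ⟨Cd', hCd', R0, hR0, hR01, hdec'⟩ := D.decay_one
  set R' := min R0 (D.ρ / 512) with hR'
  have hR'p : 0 < R' := by positivity
  have hR'le : R' ≤ D.ρ / 512 := min_le_right _ _
  have hR'1 : R' ≤ 1 := (min_le_left _ _).trans hR01
  obtain ⟨A4, hA4, h4⟩ := D.gstep (M0 := M0) (γ := 1 / 2) (β := 1) (s := D.ρ / 64)
    (s1 := D.ρ / 128) (s2 := D.ρ / 256) (s3 := D.ρ / 512) (Cd := Cd' / R') hK0 hA hA3
    (by positivity) (by norm_num) (by norm_num)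
    (by norm_num) (by norm_num) (by norm_num) (by linarith) (by linarith) (by linarith)
    (by linarith) (by
      intro v M K hM hK had y hy
      have hsub : hb D.ν y (2 * R') ⊆ hb D.ν D.y0 (D.ρ / 128) := hb_sub hy.1 (by linarith)
      have := hdec' R' hR'p (min_le_left _ _) y v M K (hsub.trans (hb_mono _ _ (by linarith)))
        hy.2 hM hK (had.mono hsub le_rfl (fun y' hy' => by
          rw [Real.rpow_neg hy'.2.le, Real.sqrt_eq_rpow]; exact le_of_eq (div_eq_mul_inv _ _).symm))
      rw [Real.rpow_one]
      have ht := hy.2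
      refine this.trans (mul_le_mul_of_nonneg_right ?_ ht.le)
      have h1 : √R' ≤ 1 := Real.sqrt_le_one.2 hR'1
      have h2 : K * √R' ≤ K / R' := by
        rw [le_div_iff₀ hR'p]
        have : √R' * R' ≤ 1 := by nlinarith [Real.sqrt_nonneg R']
        nlinarith
      calc Cd' * (M / R' + K * √R') ≤ Cd' * (M / R' + K / R') := by gcongr
        _ = _ := by ring)
  refine ⟨A + A4, by positivity, D.ρ / 512, by positivity, by linarith, fun w hw y hy => ?_⟩
  have hw1 := h2 w hw
  have hw2 := h3 w hw (fun y hy => hw1 y (hb_mono _ _ (by linarith) hy))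
    (fun y hy => h2' w hw y (hb_mono _ _ (by linarith) hy))
  have hw3 := h4 w hw (fun y hy => hw1 y (hb_mono _ _ (by linarith) hy))
    (fun y hy => (hw2 y hy).trans_eq (by norm_num))
  refine ⟨(hw1 y (hb_mono _ _ (by linarith) hy)).trans (by linarith), ?_⟩
  have := hw3 y hy
  rw [sub_self, Real.rpow_zero, mul_one] at this
  linarith

end boundedness

/-! ### Second tangential differences -/

section hoelder
variable {N : ℕ}

/-- Second difference of `w` at `y` in the directions `a`, `b`. -/
def dd (w : Euc N → ℝ) (a b y : Euc N) : ℝ := w (y + a + b) - w (y + a) - w (y + b) + w y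

/-- Bounds on `Dw`, `D²w`, an `s`-Hölder bound for `D²w`, and decay of the tangential second
derivatives at the flat boundary. -/
structure Reg (D : LocData N) (s ρ' C : ℝ) (w : Euc N → ℝ) : Prop where
  b1 : ∀ y ∈ hb D.ν D.y0 ρ', ‖fderiv ℝ w y‖ ≤ C
  b2 : ∀ y ∈ hb D.ν D.y0 ρ', ‖D2 w y‖ ≤ C
  hol : ∀ y ∈ hb D.ν D.y0 ρ', ∀ y' ∈ hb D.ν D.y0 ρ', ‖D2 w y' - D2 w y‖ ≤ C * ‖y' - y‖ ^ s
  tan : ∀ y ∈ hb D.ν D.y0 ρ', ∀ e e', ‖e‖ = 1 → ‖e'‖ = 1 → inner ℝ D.ν e = 0 →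
    inner ℝ D.ν e' = 0 → |D2 w y e e'| ≤ C * (inner ℝ D.ν y) ^ s

lemma Adm.sub {D : LocData N} {S : Set (Euc N)} {v v' : Euc N → ℝ} {M M' : ℝ} {k k' : ℝ → ℝ}
    (h : Adm D S v M k) (h' : Adm D S v' M' k') :
    Adm D S (fun y => v y - v' y) (M + M') (fun t => k t + k' t) where
  cd y hy := (h.cd y hy).sub (h'.cd y hy)
  bd y hy := (abs_sub _ _).trans (add_le_add (h.bd y hy) (h'.bd y hy))
  van ε hε := by
    obtain ⟨η, h1, h2⟩ := h.van (ε / 2) (by linarith)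
    obtain ⟨η', h1', h2'⟩ := h'.van (ε / 2) (by linarith)
    refine ⟨min η η', lt_min h1 h1', fun y hy hlt => ?_⟩
    have a1 := h2 y hy (hlt.trans_le (min_le_left _ _))
    have a2 := h2' y hy (hlt.trans_le (min_le_right _ _))
    exact (abs_sub _ _).trans (by linarith)
  L y hy := by
    rw [Lop_sub (h.cd y hy) (h'.cd y hy)]
    exact (abs_sub _ _).trans (add_le_add (h.L y hy) (h'.L y hy))

/-- Bound for the operator applied to second differences, per unit length. -/
def CL (D : LocData N) (K0 C : ℝ) : ℝ := (N * (2 * D.C0 ^ 2) + D.C0 * C + K0 * C) * (1 + C)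

lemma CL_nonneg (D : LocData N) {K0 C : ℝ} (hK0 : 0 ≤ K0) (hC : 0 ≤ C) : 0 ≤ CL D K0 C := by
  have := D.hC0
  unfold CL
  positivity

lemma norm_ke {e : Euc N} (he : ‖e‖ = 1) {k : ℝ} (hk : 0 ≤ k) : ‖k • e‖ = k := by
  rw [norm_smul, he, mul_one, Real.norm_of_nonneg hk]

lemma inner_ke {ν e : Euc N} (he : inner ℝ ν e = 0) (k : ℝ) : inner ℝ ν (k • e) = 0 := by
  rw [inner_smul_right, he, mul_zero]

/-- Second tangential differences are admissible, with bounds linear in the step `k`. -/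
lemma dd_adm {D : LocData N} {M0 K0 s ρ' C k : ℝ} {w : Euc N → ℝ} (hK0 : 0 ≤ K0)
    (hw : LSol D M0 K0 w) (hρ' : ρ' ≤ D.ρ) (hC : 0 ≤ C) (hR : Reg D s ρ' C w) {e e' : Euc N}
    (he : ‖e‖ = 1) (he' : ‖e'‖ = 1) (hνe : inner ℝ D.ν e = 0) (hνe' : inner ℝ D.ν e' = 0)
    (hk : 0 < k) (hkρ : 4 * k ≤ ρ') :
    Adm D (hb D.ν D.y0 (ρ' / 2)) (dd w (k • e) (k • e')) (4 * C * k)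
      (fun _ => 4 * CL D K0 C * k) := by
  have key : ∀ z, inner ℝ D.ν z = 0 → ‖z‖ ≤ 2 * k →
      Adm D (hb D.ν D.y0 (ρ' / 2)) (fun y => w (y + z) - w y) (C * ‖z‖)
        (fun _ => CL D K0 C * ‖z‖) := by
    intro z hz hzk
    have := hw.diff_adm (s' := ρ' / 2) (κ := fun _ => C) hK0 hρ' hR.b1 hR.b2 hz (by linarith)
    refine this.mono subset_rfl le_rfl (fun y hy => le_of_eq ?_)
    simp only [CL]; ring
  have n1 := norm_ke he hk.le
  have n2 := norm_ke he' hk.le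
  have n3 : ‖k • e + k • e'‖ ≤ 2 * k := (norm_add_le _ _).trans (by linarith)
  have h1 := key (k • e) (inner_ke hνe k) (by linarith)
  have h2 := key (k • e') (inner_ke hνe' k) (by linarith)
  have h3 := key (k • e + k • e') (by rw [inner_add_right, inner_ke hνe, inner_ke hνe', add_zero]) n3
  have h4 := (h3.sub h1).sub h2
  have e1 : (fun y => w (y + (k • e + k • e')) - w y - (w (y + k • e) - w y) - (w (y + k • e') - w y))
      = dd w (k • e) (k • e') := by
    funext y; simp only [dd, add_assoc]; ring
  rw [e1] at h4
  rw [n1, n2] at h4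
  have hCL := CL_nonneg D hK0 hC
  refine h4.mono subset_rfl ?_ (fun y hy => ?_)
  · nlinarith
  · show CL D K0 C * ‖k • e + k • e'‖ + CL D K0 C * k + CL D K0 C * k ≤ _
    nlinarith

lemma abs_D2_ke {w : Euc N → ℝ} {y e e' : Euc N} {k B : ℝ} (hk : 0 < k)
    (h : |D2 w y e e'| ≤ B) : |D2 w y (k • e) (k • e')| ≤ k ^ 2 * B := by
  have : D2 w y (k • e) (k • e') = k ^ 2 * D2 w y e e' := by
    simp only [map_smul, smul_apply, smul_eq_mul]; ring
  rw [this, abs_mul, abs_of_pos (by positivity)]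
  gcongr

lemma dd_mem {D : LocData N} {r r' k : ℝ} {y e e' : Euc N}
    (he : ‖e‖ = 1) (he' : ‖e'‖ = 1) (hνe : inner ℝ D.ν e = 0) (hνe' : inner ℝ D.ν e' = 0)
    (hk : 0 < k) (hkr : r + 2 * k ≤ r') (hy : y ∈ hb D.ν D.y0 r) {t u : ℝ}
    (ht : t ∈ Icc (0:ℝ) 1) (hu : u ∈ Icc (0:ℝ) 1) :
    y + t • k • e + u • k • e' ∈ hb D.ν D.y0 r' ∧
    inner ℝ D.ν (y + t • k • e + u • k • e') = inner ℝ D.ν y ∧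
    ‖(y + t • k • e + u • k • e') - y‖ ≤ 2 * k := by
  have n1 : ‖t • k • e‖ ≤ k := by
    rw [norm_smul, norm_ke he hk.le, Real.norm_of_nonneg ht.1]; nlinarith [ht.2]
  have n2 : ‖u • k • e'‖ ≤ k := by
    rw [norm_smul, norm_ke he' hk.le, Real.norm_of_nonneg hu.1]; nlinarith [hu.2]
  have i0 : inner ℝ D.ν (t • k • e + u • k • e') = 0 := by
    rw [inner_add_right, inner_ke (inner_ke hνe _), inner_ke (inner_ke hνe' _), add_zero]
  have n0 : ‖t • k • e + u • k • e'‖ ≤ 2 * k := (norm_add_le _ _).trans (by linarith)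
  refine ⟨?_, ?_, ?_⟩
  · rw [add_assoc]; exact hb_add hy i0 (by linarith)
  · rw [add_assoc, inner_add_right, i0, add_zero]
  · rw [add_assoc, add_sub_cancel_left]; exact n0

/-- Second tangential differences inherit the decay of the tangential second derivatives. -/
lemma dd_bd {D : LocData N} {M0 K0 s ρ' C k : ℝ} {w : Euc N → ℝ}
    (hw : LSol D M0 K0 w) (hρ' : ρ' ≤ D.ρ) (hR : Reg D s ρ' C w) {e e' : Euc N}
    (he : ‖e‖ = 1) (he' : ‖e'‖ = 1) (hνe : inner ℝ D.ν e = 0) (hνe' : inner ℝ D.ν e' = 0)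
    (hk : 0 < k) (hkρ : 4 * k ≤ ρ') {y : Euc N} (hy : y ∈ hb D.ν D.y0 (ρ' / 2)) :
    |dd w (k • e) (k • e') y| ≤ k ^ 2 * (C * (inner ℝ D.ν y) ^ s) := by
  have := second_diff (v := w) (y := y) (a := k • e) (b := k • e') (q := 0)
    (Q := k ^ 2 * (C * (inner ℝ D.ν y) ^ s))
    (fun t ht u hu => hw.adm.cd _ (hb_mono _ _ hρ'
      (dd_mem he he' hνe hνe' hk (by linarith) hy ht hu).1))
    (fun t ht u hu => by
      obtain ⟨m1, m2, _⟩ := dd_mem he he' hνe hνe' hk (r' := ρ') (by linarith) hy ht hu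
      rw [sub_zero, ← m2]
      exact abs_D2_ke hk (hR.tan _ m1 e' e he' he hνe' hνe))
  rwa [sub_zero] at this

/-- Oscillation of second differences at scale `‖z‖`. -/
lemma dd_osc {D : LocData N} {M0 K0 s ρ' C k : ℝ} {w : Euc N → ℝ}
    (hw : LSol D M0 K0 w) (hρ' : ρ' ≤ D.ρ) (hR : Reg D s ρ' C w) {e e' : Euc N}
    (he : ‖e‖ = 1) (he' : ‖e'‖ = 1) (hνe : inner ℝ D.ν e = 0) (hνe' : inner ℝ D.ν e' = 0)
    (hk : 0 < k) (hkρ : 4 * k ≤ ρ') {y z : Euc N} (hy : y ∈ hb D.ν D.y0 (ρ' / 2))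
    (hyz : y + z ∈ hb D.ν D.y0 (ρ' / 2)) :
    |dd w (k • e) (k • e') (y + z) - dd w (k • e) (k • e') y| ≤ k ^ 2 * (C * ‖z‖ ^ s) := by
  have cd : ∀ y ∈ hb D.ν D.y0 ρ', ContDiffAt ℝ 2 w y :=
    fun y hy => hw.adm.cd y (hb_mono _ _ hρ' hy)
  have key : ∀ t ∈ Icc (0:ℝ) 1, ∀ u ∈ Icc (0:ℝ) 1,
      y + t • k • e + u • k • e' ∈ hb D.ν D.y0 ρ' ∧
      (y + t • k • e + u • k • e') + z ∈ hb D.ν D.y0 ρ' := by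
    intro t ht u hu
    refine ⟨(dd_mem he he' hνe hνe' hk (by linarith) hy ht hu).1, ?_⟩
    have := (dd_mem he he' hνe hνe' hk (r' := ρ') (by linarith) hyz ht hu).1
    convert this using 1; abel
  have := second_diff (v := fun y => w (y + z) - w y) (y := y) (a := k • e) (b := k • e') (q := 0)
    (Q := k ^ 2 * (C * ‖z‖ ^ s))
    (fun t ht u hu => (cd _ (key t ht u hu).2).shift.sub (cd _ (key t ht u hu).1))
    (fun t ht u hu => by
      obtain ⟨m1, m2⟩ := key t ht u hu
      rw [sub_zero, D2_sub (cd _ m2).shift (cd _ m1), D2_shift]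
      have h1 := hR.hol _ m1 _ m2
      rw [add_sub_cancel_left] at h1
      refine ((D2 w (y + t • k • e + u • k • e' + z) -
        D2 w (y + t • k • e + u • k • e')).le_opNorm₂ _ _).trans ?_
      rw [norm_ke he hk.le, norm_ke he' hk.le]
      calc _ ≤ C * ‖z‖ ^ s * k * k := by gcongr
        _ = _ := by ring)
  rw [sub_zero] at this
  refine le_of_eq_of_le ?_ this
  congr 1
  simp only [dd]
  have e1 : y + z + k • e + k • e' = y + k • e + k • e' + z := by abel
  have e2 : y + z + k • e = y + k • e + z := by abel
  have e3 : y + z + k • e' = y + k • e' + z := by abel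
  rw [e1, e2, e3]; ring

end hoelder

/-! ### The basic estimate for second tangential differences -/

section hoelder
variable {N : ℕ}

set_option maxHeartbeats 1000000 in
/-- Second tangential differences at step `k` and scale `R`, `k = R ^ (2 - s)`. -/
lemma LocData.core (D : LocData N) {M0 K0 s ρ' C : ℝ} (hK0 : 0 ≤ K0) (hρ'0 : 0 < ρ')
    (hρ' : ρ' ≤ D.ρ) (hC : 0 < C) (hs0 : 0 ≤ s) (hs1 : s < 1) :
    ∃ C' > 0, ∃ R1 > 0, R1 ≤ ρ' / 16 ∧ ∀ w, LSol D M0 K0 w → Reg D s ρ' C w → ∀ R k, 0 < R →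
    R ≤ R1 → k = R ^ (2 - s) → ∀ e e', ‖e‖ = 1 → ‖e'‖ = 1 → inner ℝ D.ν e = 0 →
    inner ℝ D.ν e' = 0 → ∀ y ∈ hb D.ν D.y0 (ρ' / 8),
    (inner ℝ D.ν y ≤ R → |dd w (k • e) (k • e') y| ≤ C' * (k * R) * inner ℝ D.ν y) ∧
    ‖fderiv ℝ (dd w (k • e) (k • e')) y‖ ≤ C' * (k * R) := by
  obtain ⟨Cd, hCd, R0, hR0, hR01, hdec⟩ := D.decay_one
  have hρ1 := D.hρ1
  have hC1 := D.hC1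
  set KL := 4 * CL D K0 C + 1 with hKL
  have hKLp : 0 < KL := by have := CL_nonneg D hK0 hC.le; positivity
  set κ := ρ' / 8 with hκ
  have hκ0 : 0 < κ := by positivity
  have hκ1 : κ ≤ 1 / 2 := by linarith
  set Cv := Cd * (4 * C + 2 * KL) with hCv
  have hCvp : 0 < Cv := by positivity
  set Cg := D.C1 * (2 * Cv / κ + KL) + D.C1 * (C / κ + KL) with hCg
  have hCgp : 0 < Cg := by positivity
  refine ⟨Cv + Cg, by positivity, min R0 (ρ' / 16), by positivity, min_le_right _ _, ?_⟩
  intro w hw hreg R k hR hR1 hk e e' he he' hνe hνe' y hy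
  have hRρ : R ≤ ρ' / 16 := hR1.trans (min_le_right _ _)
  have hRR0 : R ≤ R0 := hR1.trans (min_le_left _ _)
  have hRone : R ≤ 1 := by linarith
  have hkp : 0 < k := by rw [hk]; positivity
  have hkR : k ≤ R := by
    rw [hk]
    calc R ^ (2 - s) ≤ R ^ (1:ℝ) := Real.rpow_le_rpow_of_exponent_ge hR hRone (by linarith)
      _ = R := Real.rpow_one R
  have hkRs : k * R ^ s = R ^ 2 := by
    rw [hk, ← Real.rpow_add hR, sub_add_cancel]; norm_cast
  have had := dd_adm hK0 hw hρ' hC.le hreg he he' hνe hνe' hkp (by linarith)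
  have hL : ∀ η ∈ hb D.ν D.y0 (ρ' / 2), |Lop D.g D.c (dd w (k • e) (k • e')) η| ≤ KL * k :=
    fun η hη => (had.L η hη).trans (by rw [hKL]; nlinarith)
  set v := dd w (k • e) (k • e') with hv
  -- decay at points of height at most `2R`
  have hA2 : ∀ η ∈ hb D.ν D.y0 (ρ' / 4), inner ℝ D.ν η ≤ 2 * R →
      |v η| ≤ Cv * (k * R) * inner ℝ D.ν η := by
    intro η hη hηR
    have hsub : hb D.ν η (2 * R) ⊆ hb D.ν D.y0 (ρ' / 2) := hb_sub hη.1 (by linarith)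
    have hht : ∀ y' ∈ hb D.ν η (2 * R), inner ℝ D.ν y' ≤ 4 * R := by
      intro y' hy'
      have h1 : inner ℝ D.ν y' - inner ℝ D.ν η ≤ 2 * R := by
        rw [← inner_sub_right]
        refine (real_inner_le_norm _ _).trans ?_
        rw [D.hν, one_mul]; exact hy'.1.le
      linarith
    have := hdec R hR hRR0 η v (4 * C * (k * R ^ 2)) (2 * KL * k * √R)
      (hsub.trans (hb_mono _ _ (by linarith))) hη.2 (by positivity) (by positivity) ?_
    · refine this.trans (mul_le_mul_of_nonneg_right (le_of_eq ?_) hη.2.le)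
      have e1 : √R * √R = R := Real.mul_self_sqrt hR.le
      calc Cd * (4 * C * (k * R ^ 2) / R + 2 * KL * k * √R * √R)
          = Cd * (4 * C * (k * R ^ 2) / R + 2 * KL * k * (√R * √R)) := by ring
        _ = Cv * (k * R) := by rw [e1, hCv]; field_simp
    · refine ⟨fun y' hy' => had.cd y' (hsub hy'), fun y' hy' => ?_, ?_, fun y' hy' => ?_⟩
      · refine (dd_bd hw hρ' hreg he he' hνe hνe' hkp (by linarith) (hsub hy')).trans ?_
        calc k ^ 2 * (C * inner ℝ D.ν y' ^ s) ≤ k ^ 2 * (C * (4 * R) ^ s) := by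
              gcongr
              · exact hy'.2.le
              · exact hht y' hy'
          _ = k ^ 2 * (C * (4 ^ s * R ^ s)) := by rw [Real.mul_rpow (by norm_num) hR.le]
          _ ≤ k ^ 2 * (C * (4 * R ^ s)) := by
              gcongr
              calc (4:ℝ) ^ s ≤ 4 ^ (1:ℝ) :=
                    Real.rpow_le_rpow_of_exponent_le (by norm_num) hs1.le
                _ = 4 := Real.rpow_one 4
          _ = 4 * C * (k * (k * R ^ s)) := by ring
          _ = _ := by rw [hkRs]
      · intro ε hε
        obtain ⟨η', h1, h2⟩ := had.van ε hε
        exact ⟨η', h1, fun y' hy' => h2 y' (hsub hy')⟩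
      · refine (hL y' (hsub hy')).trans ?_
        have h2 : 0 < √(inner ℝ D.ν y') := Real.sqrt_pos.2 hy'.2
        rw [le_div_iff₀ h2]
        have h3 : √(inner ℝ D.ν y') ≤ 2 * √R := by
          rw [show (2:ℝ) * √R = √(4 * R) by
            rw [Real.sqrt_mul (by norm_num), show (4:ℝ) = 2 ^ 2 by norm_num,
              Real.sqrt_sq (by norm_num)]]
          exact Real.sqrt_le_sqrt (hht y' hy')
        calc KL * k * √(inner ℝ D.ν y') ≤ KL * k * (2 * √R) := by gcongr
          _ = _ := by ring
  have ht := hy.2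
  have ht1 := D.height y (hb_mono _ _ (by linarith) hy)
  refine ⟨fun hyR => ?_, ?_⟩
  · refine (hA2 y (hb_mono _ _ (by linarith) hy) (by linarith)).trans ?_
    have : 0 ≤ Cg * (k * R) * inner ℝ D.ν y := by positivity
    nlinarith
  suffices hh : ‖fderiv ℝ v y‖ ≤ Cg * (k * R) by
    have : 0 ≤ Cv * (k * R) := by positivity
    nlinarith
  have hA : 0 ≤ D.C1 * (2 * Cv / κ + KL) * (k * R) := by positivity
  have hB : 0 ≤ D.C1 * (C / κ + KL) * (k * R) := by positivity
  rcases le_total (inner ℝ D.ν y) R with hyR | hyR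
  · set t := inner ℝ D.ν y with htdef
    have hb1 : ∀ y' ∈ Metric.ball y (κ * t), _ := fun y' hy' =>
      inner_ball (b := ρ' / 4) D.hν hy ht1 hκ1 (by linarith) hκ0 hy'
    have hb2 : Metric.ball y (κ * t) ⊆ hb D.ν D.y0 (ρ' / 2) :=
      fun y' hy' => hb_mono _ _ (by linarith) (hb1 y' hy').1
    have hge := D.ge y (κ * t) v (Cv * (k * R) * (2 * t)) (KL * k) (by positivity)
      (mul_le_one₀ (by linarith) ht.le ht1) (hb2.trans (hb_mono _ _ (by linarith))) (by positivity) (by positivity)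
      (fun y' hy' => had.cd _ (hb2 hy'))
      (fun y' hy' => (hA2 y' (hb1 y' hy').1 ((hb1 y' hy').2.2.trans (by linarith))).trans
        (mul_le_mul_of_nonneg_left (hb1 y' hy').2.2 (by positivity)))
      (fun y' hy' => hL y' (hb2 hy'))
    refine hge.trans ?_
    calc D.C1 * (Cv * (k * R) * (2 * t) / (κ * t) + KL * k * (κ * t))
        ≤ D.C1 * (Cv * (k * R) * (2 * t) / (κ * t) + KL * k * (1 * R)) := by
          gcongr; linarith
      _ = D.C1 * (2 * Cv / κ + KL) * (k * R) := by field_simp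
      _ ≤ _ := by rw [hCg]; nlinarith
  · have hb1 : Metric.ball y (κ * R) ⊆ hb D.ν D.y0 (ρ' / 2) := fun y' hy' =>
      (inner_ball (b := ρ' / 2) D.hν hy ht1 hκ1 (by linarith) hκ0
        (Metric.ball_subset_ball (by gcongr) hy')).1
    have hge := D.ge y (κ * R) (fun η => v η - v y) (C * (k * R ^ 2)) (KL * k) (by positivity)
      (mul_le_one₀ (by linarith) hR.le hRone) (hb1.trans (hb_mono _ _ (by linarith))) (by positivity) (by positivity)
      (fun y' hy' => (had.cd _ (hb1 hy')).sub contDiffAt_const)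
      (fun y' hy' => by
        have h1 := dd_osc hw hρ' hreg he he' hνe hνe' hkp (by linarith) (y := y) (z := y' - y)
          (hb_mono _ _ (by linarith) hy) (by rw [add_sub_cancel]; exact hb1 hy')
        rw [add_sub_cancel] at h1
        refine h1.trans ?_
        have h2 : ‖y' - y‖ ≤ R := by
          rw [Metric.mem_ball, dist_eq_norm] at hy'
          nlinarith
        calc k ^ 2 * (C * ‖y' - y‖ ^ s) ≤ k ^ 2 * (C * R ^ s) := by gcongr
          _ = C * (k * (k * R ^ s)) := by ring
          _ = _ := by rw [hkRs])
      (fun y' hy' => by rw [Lop_sub_const]; exact hL y' (hb1 hy'))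
    rw [fderiv_sub_const] at hge
    refine hge.trans ?_
    calc D.C1 * (C * (k * R ^ 2) / (κ * R) + KL * k * (κ * R))
        ≤ D.C1 * (C * (k * R ^ 2) / (κ * R) + KL * k * (1 * R)) := by
          gcongr; linarith
      _ = D.C1 * (C / κ + KL) * (k * R) := by field_simp
      _ ≤ _ := by rw [hCg]; nlinarith

end hoelder

/-! ### Improvement of the Hölder exponent -/

section hoelder
variable {N : ℕ}

lemma bil_sub_self (A : Euc N →L[ℝ] Euc N →L[ℝ] ℝ) : ‖A - A‖ = 0 := by
  rw [sub_self A]; exact norm_zero (E := Euc N →L[ℝ] Euc N →L[ℝ] ℝ)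

lemma bil_tri (A B C : Euc N →L[ℝ] Euc N →L[ℝ] ℝ) : ‖A - C‖ ≤ ‖A - B‖ + ‖B - C‖ :=
  norm_sub_le_norm_sub_add_norm_sub A B C

lemma bil_sub_le (A B : Euc N →L[ℝ] Euc N →L[ℝ] ℝ) : ‖A - B‖ ≤ ‖A‖ + ‖B‖ := norm_sub_le A B

lemma bil_sub_rev (A B : Euc N →L[ℝ] Euc N →L[ℝ] ℝ) : ‖A - B‖ = ‖B - A‖ := norm_sub_rev A B

lemma hb_add' {ν y0 y z : Euc N} {s t : ℝ} (hy : y ∈ hb ν y0 s) (hz : 0 ≤ inner ℝ ν z)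
    (hst : s + ‖z‖ ≤ t) : y + z ∈ hb ν y0 t := by
  refine ⟨?_, by rw [inner_add_right]; linarith [hy.2]⟩
  calc ‖y + z - y0‖ = ‖(y - y0) + z‖ := by congr 1; abel
    _ ≤ ‖y - y0‖ + ‖z‖ := norm_add_le _ _
    _ < t := by linarith [hy.1]

lemma fderiv_dd {w : Euc N → ℝ} {a b y : Euc N} (h1 : ContDiffAt ℝ 2 w (y + a + b))
    (h2 : ContDiffAt ℝ 2 w (y + a)) (h3 : ContDiffAt ℝ 2 w (y + b)) (h4 : ContDiffAt ℝ 2 w y) :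
    fderiv ℝ (dd w a b) y
      = fderiv ℝ w (y + a + b) - fderiv ℝ w (y + a) - fderiv ℝ w (y + b) + fderiv ℝ w y := by
  have e : dd w a b = fun y => (w (y + (a + b)) - w (y + a) - w (y + b)) + w y := by
    funext y; simp only [dd, add_assoc]
  rw [add_assoc y a b] at h1 ⊢
  have d1 := h1.shift.differentiableAt (by norm_num)
  have d2 := h2.shift.differentiableAt (by norm_num)
  have d3 := h3.shift.differentiableAt (by norm_num)
  have d4 := h4.differentiableAt (by norm_num)
  rw [e, fderiv_fun_add ((d1.fun_sub d2).fun_sub d3) d4, fderiv_fun_sub (d1.fun_sub d2) d3,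
    fderiv_fun_sub d1 d2, fderiv_comp_add_right, fderiv_comp_add_right, fderiv_comp_add_right]

/-- The estimate `LocData.core` in terms of the step: second tangential differences of `Dw` are
of size `k^(1 + 1/(2-s))`. -/
lemma LocData.core_k (D : LocData N) {M0 K0 s ρ' C : ℝ} (hK0 : 0 ≤ K0) (hρ'0 : 0 < ρ')
    (hρ' : ρ' ≤ D.ρ) (hC : 0 < C) (hs0 : 0 ≤ s) (hs1 : s < 1) :
    ∃ C' > 0, ∃ k0 > 0, k0 ≤ ρ' / 256 ∧ ∀ w, LSol D M0 K0 w → Reg D s ρ' C w → ∀ k, 0 < k →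
    k ≤ k0 → ∀ e e', ‖e‖ = 1 → ‖e'‖ = 1 → inner ℝ D.ν e = 0 →
    inner ℝ D.ν e' = 0 → ∀ y ∈ hb D.ν D.y0 (ρ' / 8),
    (inner ℝ D.ν y ≤ k →
      |dd w (k • e) (k • e') y| ≤ C' * (k * k ^ (1 / (2 - s))) * inner ℝ D.ν y) ∧
    ‖fderiv ℝ w (y + k • e + k • e') - fderiv ℝ w (y + k • e) - fderiv ℝ w (y + k • e')
      + fderiv ℝ w y‖ ≤ C' * (k * k ^ (1 / (2 - s))) := by
  obtain ⟨C', hC', R1, hR1, hR1ρ, h⟩ := D.core (M0 := M0) hK0 hρ'0 hρ' hC hs0 hs1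
  have hρ1 := D.hρ1
  refine ⟨C', hC', min (R1 ^ (2 - s)) (ρ' / 256), by positivity, min_le_right _ _, ?_⟩
  intro w hw hreg k hk hk0 e e' he he' hνe hνe' y hy
  have hkρ : k ≤ ρ' / 256 := hk0.trans (min_le_right _ _)
  have h2s : 0 < 2 - s := by linarith
  have hR : k ^ (1 / (2 - s)) ≤ R1 := by
    calc k ^ (1 / (2 - s)) ≤ (R1 ^ (2 - s)) ^ (1 / (2 - s)) := by
          gcongr; exact hk0.trans (min_le_left _ _)
      _ = R1 := by rw [← Real.rpow_mul hR1.le, mul_one_div_cancel h2s.ne', Real.rpow_one]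
  have hkk : k = (k ^ (1 / (2 - s))) ^ (2 - s) := by
    rw [← Real.rpow_mul hk.le, one_div_mul_cancel h2s.ne', Real.rpow_one]
  have hkR : k ≤ k ^ (1 / (2 - s)) := by
    calc k = k ^ (1:ℝ) := (Real.rpow_one k).symm
      _ ≤ _ := Real.rpow_le_rpow_of_exponent_ge hk (by linarith)
        (by rw [div_le_one h2s]; linarith)
  obtain ⟨a1, a2⟩ := h w hw hreg (k ^ (1 / (2 - s))) k (by positivity) hR hkk e e' he he' hνe hνe' y hy
  refine ⟨fun hh => a1 (hh.trans hkR), ?_⟩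
  have n1 := norm_ke he hk.le
  have n2 := norm_ke he' hk.le
  have m1 : y + k • e ∈ hb D.ν D.y0 (ρ' / 4) := hb_add hy (inner_ke hνe k) (by linarith)
  rwa [fderiv_dd
    (hw.adm.cd _ (hb_add m1 (inner_ke hνe' k) (by linarith)))
    (hw.adm.cd _ (hb_mono _ _ (by linarith) m1))
    (hw.adm.cd _ (hb_add hy (inner_ke hνe' k) (by linarith)))
    (hw.adm.cd _ (hb_mono _ _ (by linarith) hy))] at a2

/-- Increments of `D²w` are Lipschitz when traced against the coefficients, by the equation. -/
lemma LSol.trace {D : LocData N} {M0 K0 : ℝ} {w : Euc N → ℝ} (hw : LSol D M0 K0 w)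
    {C s : ℝ} (hK0 : 0 ≤ K0) (hs : s ≤ D.ρ)
    (h1 : ∀ y ∈ hb D.ν D.y0 s, ‖fderiv ℝ w y‖ ≤ C) (h2 : ∀ y ∈ hb D.ν D.y0 s, ‖D2 w y‖ ≤ C)
    {y z : Euc N} (hy : y ∈ hb D.ν D.y0 s) (hyz : y + z ∈ hb D.ν D.y0 s) :
    |∑ i, (D2 w (y + z) - D2 w y) (D.g i y) (D.g i y)| ≤ (CL D K0 C + C * D.C0) * ‖z‖ := by
  have hC0 := D.hC0
  have hC : 0 ≤ C := (norm_nonneg _).trans (h1 y hy)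
  have e1 : ∑ i, (D2 w (y + z) - D2 w y) (D.g i y) (D.g i y)
      = (Lop D.g D.c (fun y => w (y + z)) y - Lop D.g D.c w y)
        - (fderiv ℝ w (y + z) - fderiv ℝ w y) (D.c y) := by
    simp only [Lop, D2_shift, fderiv_comp_add_right, sub_apply, Finset.sum_sub_distrib]
    ring
  rw [e1]
  have a1 := hw.shift_L hK0 hs h1 hy hyz
  have a2 : |(fderiv ℝ w (y + z) - fderiv ℝ w y) (D.c y)| ≤ C * ‖z‖ * D.C0 := by
    refine ((fderiv ℝ w (y + z) - fderiv ℝ w y).le_opNorm _).trans ?_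
    have := lip_of_D2 (convex_hb D.ν D.y0 s)
      (fun y hy => hw.adm.cd y (hb_mono _ _ hs hy)) h2 hy hyz
    rw [add_sub_cancel_left] at this
    gcongr
    exact D.c_bd y (hb_mono _ _ hs hy)
  have a3 := h2 _ hyz
  calc _ ≤ _ := abs_sub _ _
    _ ≤ (N * (2 * D.C0 ^ 2) + D.C0 * C + K0 * C) * (‖z‖ * (1 + C)) + C * ‖z‖ * D.C0 := by
      refine add_le_add (a1.trans ?_) a2
      gcongr
    _ = _ := by unfold CL; ring

set_option maxHeartbeats 1000000 in
/-- One step of the improvement of the Hölder exponent. -/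
lemma LocData.improve (D : LocData N) {M0 K0 s ρ' C : ℝ} (hK0 : 0 ≤ K0) (hρ'0 : 0 < ρ')
    (hρ' : ρ' ≤ D.ρ) (hC : 0 < C) (hs0 : 0 ≤ s) (hs1 : s < 1) :
    ∃ C' > 0, ∀ w, LSol D M0 K0 w → Reg D s ρ' C w → Reg D (1 / (2 - s)) (ρ' / 128) C' w := by
  obtain ⟨C1, hC1, k0, hk0, hk0ρ, hcore⟩ := D.core_k (M0 := M0) hK0 hρ'0 hρ' hC hs0 hs1
  set σ := 1 / (2 - s) with hσ
  have hσ0 : 0 < σ := by have : 0 < 2 - s := by linarith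
                         positivity
  have hσ1 : σ ≤ 1 := by rw [hσ, div_le_one (by linarith)]; linarith
  obtain ⟨Cz, hCz, hzyg⟩ := zygmund (F := Euc N →L[ℝ] ℝ) hσ0
  have hC0 := D.hC0
  have hC0p : 0 < D.C0 := by linarith
  obtain ⟨Cf, hCf, hfull⟩ := full_of_tangential (N := N) hC0p D.hθ
  have hρ1 := D.hρ1
  have hCLn := CL_nonneg D hK0 hC.le
  set CT := Cz * C1 with hCT
  set Ctr := CL D K0 C + C * D.C0 with hCtr
  have hCtrp : 0 < Ctr := by positivity
  set C2 := C1 + 2 * CT with hC2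
  set C3 := Cf * (C2 + Ctr) with hC3
  set C4 := C3 + 2 * CT with hC4
  set C5 := Cf * (C4 + Ctr) with hC5
  set C6 := C3 + C5 + 2 * C / k0 ^ σ with hC6
  have hCTp : 0 < CT := by positivity
  have hC2p : 0 < C2 := by positivity
  have hC3p : 0 < C3 := by positivity
  have hC4p : 0 < C4 := by positivity
  have hC5p : 0 < C5 := by positivity
  have hC6p : 0 < C6 := by positivity
  refine ⟨C + C6 + (C1 + 2 * C6) + C / k0 ^ σ, by positivity, fun w hw hreg => ?_⟩
  have cd : ∀ y ∈ hb D.ν D.y0 ρ', ContDiffAt ℝ 2 w y :=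
    fun y hy => hw.adm.cd y (hb_mono _ _ hρ' hy)
  -- first order Taylor expansion of the gradient in tangential directions
  have taylor : ∀ k, 0 < k → k ≤ k0 → ∀ e, ‖e‖ = 1 → inner ℝ D.ν e = 0 →
      ∀ y ∈ hb D.ν D.y0 (ρ' / 8),
      ‖fderiv ℝ w (y + k • e) - fderiv ℝ w y - k • D2 w y e‖ ≤ CT * (k * k ^ σ) := by
    intro k hk hkk e he hνe y hy
    have l : HasDerivAt (fun t : ℝ => y + t • e) e 0 := by
      simpa using ((hasDerivAt_id (0:ℝ)).smul_const e).const_add y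
    have h1 : HasFDerivAt (fderiv ℝ w) (D2 w y) (y + (0:ℝ) • e) := by
      simpa using (cd y (hb_mono _ _ (by linarith) hy)).hasFD2
    have h2 : HasDerivAt (fun t : ℝ => fderiv ℝ w (y + t • e)) (D2 w y e) 0 :=
      h1.comp_hasDerivAt 0 l
    have := hzyg (fun t : ℝ => fderiv ℝ w (y + t • e)) (D2 w y e) C1 k hk hC1.le h2 (by
      intro t ht htk
      have h3 := (hcore w hw hreg t ht (htk.trans hkk) e e he he hνe hνe y hy).2
      refine le_of_eq_of_le ?_ h3
      congr 1
      have : y + (t + t) • e = y + t • e + t • e := by rw [add_smul, add_assoc]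
      simp only [this, zero_smul, add_zero, two_smul]
      abel)
    simpa using this
  -- from tangential columns to the whole Hessian
  have fullB : ∀ (k B : ℝ), 0 < k → k ≤ 1 → 0 ≤ B → ∀ y ∈ hb D.ν D.y0 ρ', ∀ z, ‖z‖ = k →
      y + z ∈ hb D.ν D.y0 ρ' →
      (∀ e, ‖e‖ = 1 → inner ℝ D.ν e = 0 → ‖D2 w (y + z) e - D2 w y e‖ ≤ B * k ^ σ) →
      ‖D2 w (y + z) - D2 w y‖ ≤ Cf * (B + Ctr) * k ^ σ := by
    intro k B hk hk1 hB y hy z hz hyz hh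
    have hkσ : k ≤ k ^ σ := by
      calc k = k ^ (1:ℝ) := (Real.rpow_one k).symm
        _ ≤ _ := Real.rpow_le_rpow_of_exponent_ge hk hk1 hσ1
    rw [mul_assoc]
    refine hfull D.ν (fun i => D.g i y) (D2 w (y + z) - D2 w y) ((B + Ctr) * k ^ σ) D.hν
      (by positivity) ?_ (D.g_bd y (hb_mono _ _ hρ' hy)) (D.g_ell y (hb_mono _ _ hρ' hy)) ?_ ?_
    · intro a b
      rw [sub_apply, sub_apply, sub_apply, sub_apply, (cd y hy).D2_symm a b,
        (cd _ hyz).D2_symm a b]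
    · intro e he hνe
      refine (hh e he hνe).trans ?_
      gcongr; linarith
    · refine (hw.trace hK0 hρ' hreg.b1 hreg.b2 hy hyz).trans ?_
      rw [hz]
      calc Ctr * k ≤ Ctr * k ^ σ := by gcongr
        _ ≤ _ := by gcongr; linarith
  have tanE : ∀ k, 0 < k → k ≤ k0 → ∀ e', ‖e'‖ = 1 → inner ℝ D.ν e' = 0 →
      ∀ y ∈ hb D.ν D.y0 (ρ' / 16), ‖D2 w (y + k • e') - D2 w y‖ ≤ C3 * k ^ σ := by
    intro k hk hkk e' he' hνe' y hy
    have n2 := norm_ke he' hk.le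
    have m1 : y + k • e' ∈ hb D.ν D.y0 (ρ' / 8) := hb_add hy (inner_ke hνe' k) (by linarith)
    refine fullB k C2 hk (by linarith) hC2p.le y (hb_mono _ _ (by linarith) hy) (k • e') n2
      (hb_mono _ _ (by linarith) m1) ?_
    intro e he hνe
    have t1 := taylor k hk hkk e he hνe y (hb_mono _ _ (by linarith) hy)
    have t2 := taylor k hk hkk e he hνe _ m1
    have t3 := (hcore w hw hreg k hk hkk e' e he' he hνe' hνe y (hb_mono _ _ (by linarith) hy)).2
    have e1 : k • (D2 w (y + k • e') e - D2 w y e)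
        = (fderiv ℝ w (y + k • e' + k • e) - fderiv ℝ w (y + k • e') - fderiv ℝ w (y + k • e)
            + fderiv ℝ w y)
          - (fderiv ℝ w (y + k • e' + k • e) - fderiv ℝ w (y + k • e') - k • D2 w (y + k • e') e)
          + (fderiv ℝ w (y + k • e) - fderiv ℝ w y - k • D2 w y e) := by
      rw [smul_sub]; abel
    have e2 : k * ‖D2 w (y + k • e') e - D2 w y e‖ ≤ k * (C2 * k ^ σ) := by
      rw [← Real.norm_of_nonneg hk.le, ← norm_smul, Real.norm_of_nonneg hk.le, e1]
      refine (norm_add_le _ _).trans ((add_le_add ((norm_sub_le _ _).trans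
        (add_le_add t3 t2)) t1).trans (le_of_eq ?_))
      rw [hC2]; ring
    exact le_of_mul_le_mul_left e2 hk
  have norE : ∀ k, 0 < k → k ≤ k0 →
      ∀ y ∈ hb D.ν D.y0 (ρ' / 32), ‖D2 w (y + k • D.ν) - D2 w y‖ ≤ C5 * k ^ σ := by
    intro k hk hkk y hy
    have n2 := norm_ke D.hν hk.le
    have iν : inner ℝ D.ν D.ν = 1 := by rw [real_inner_self_eq_norm_sq, D.hν]; norm_num
    have mt : ∀ t ∈ Icc (0:ℝ) 1, y + t • k • D.ν ∈ hb D.ν D.y0 (ρ' / 16) := by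
      intro t ht
      refine hb_add' hy ?_ ?_
      · rw [inner_smul_right, inner_smul_right, iν]
        have := ht.1
        positivity
      · rw [norm_smul, n2, Real.norm_of_nonneg ht.1]
        nlinarith [ht.2]
    have m1 : y + k • D.ν ∈ hb D.ν D.y0 (ρ' / 16) := by
      simpa using mt 1 (by simp)
    refine fullB k C4 hk (by linarith) hC4p.le y (hb_mono _ _ (by linarith) hy) (k • D.ν) n2
      (hb_mono _ _ (by linarith) m1) ?_
    intro e he hνe
    have n1 := norm_ke he hk.le
    have t1 := taylor k hk hkk e he hνe y (hb_mono _ _ (by linarith) hy)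
    have t2 := taylor k hk hkk e he hνe _ (hb_mono _ _ (by linarith) m1)
    have t3 : ‖(fderiv ℝ w (y + k • D.ν + k • e) - fderiv ℝ w (y + k • D.ν))
        - (fderiv ℝ w (y + k • e) - fderiv ℝ w y)‖ ≤ k * (C3 * k ^ σ) := by
      have hd : ∀ t ∈ Icc (0:ℝ) 1, HasDerivWithinAt
          (fun t : ℝ => fderiv ℝ w (y + t • k • D.ν + k • e) - fderiv ℝ w (y + t • k • D.ν))
          (D2 w (y + t • k • D.ν + k • e) (k • D.ν) - D2 w (y + t • k • D.ν) (k • D.ν))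
          (Icc 0 1) t := by
        intro t ht
        have l0 : HasDerivAt (fun t : ℝ => y + t • k • D.ν) (k • D.ν) t := by
          simpa using ((hasDerivAt_id t).smul_const (k • D.ν)).const_add y
        have a1 : HasFDerivAt (fderiv ℝ w) (D2 w (y + t • k • D.ν)) (y + t • k • D.ν) :=
          (cd _ (hb_mono _ _ (by linarith) (mt t ht))).hasFD2
        have a2 : HasFDerivAt (fderiv ℝ w) (D2 w (y + t • k • D.ν + k • e))
            (y + t • k • D.ν + k • e) :=
          (cd _ (hb_add (mt t ht) (inner_ke hνe k) (by linarith))).hasFD2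
        have b1 : HasDerivAt (fun t : ℝ => fderiv ℝ w (y + t • k • D.ν))
          (D2 w (y + t • k • D.ν) (k • D.ν)) t := a1.comp_hasDerivAt t l0
        have b2 : HasDerivAt (fun t : ℝ => fderiv ℝ w (y + t • k • D.ν + k • e))
          (D2 w (y + t • k • D.ν + k • e) (k • D.ν)) t :=
          a2.comp_hasDerivAt t (l0.add_const (k • e))
        exact (b2.sub b1).hasDerivWithinAt
      have := norm_image_sub_le_of_norm_deriv_le_segment_01' hd (C := k * (C3 * k ^ σ)) (by
        intro t ht
        have ht' : t ∈ Icc (0:ℝ) 1 := ⟨ht.1, ht.2.le⟩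
        show ‖(D2 w (y + t • k • D.ν + k • e) - D2 w (y + t • k • D.ν)) (k • D.ν)‖ ≤ _
        refine ((D2 w (y + t • k • D.ν + k • e) - D2 w (y + t • k • D.ν)).le_opNorm _).trans ?_
        rw [n2, mul_comm]
        gcongr
        exact tanE k hk hkk e he hνe _ (mt t ht'))
      simpa using this
    have e1 : k • (D2 w (y + k • D.ν) e - D2 w y e)
        = ((fderiv ℝ w (y + k • D.ν + k • e) - fderiv ℝ w (y + k • D.ν))
            - (fderiv ℝ w (y + k • e) - fderiv ℝ w y))
          - (fderiv ℝ w (y + k • D.ν + k • e) - fderiv ℝ w (y + k • D.ν)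
              - k • D2 w (y + k • D.ν) e)
          + (fderiv ℝ w (y + k • e) - fderiv ℝ w y - k • D2 w y e) := by
      rw [smul_sub]; abel
    have e2 : k * ‖D2 w (y + k • D.ν) e - D2 w y e‖ ≤ k * (C4 * k ^ σ) := by
      rw [← Real.norm_of_nonneg hk.le, ← norm_smul, Real.norm_of_nonneg hk.le, e1]
      refine (norm_add_le _ _).trans ((add_le_add ((norm_sub_le _ _).trans
        (add_le_add t3 t2)) t1).trans (le_of_eq ?_))
      rw [hC4]; ring
    exact le_of_mul_le_mul_left e2 hk
  -- general directions, the second point being the higher one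
  have up : ∀ y ∈ hb D.ν D.y0 (ρ' / 64), ∀ z, ‖z‖ ≤ k0 → 0 ≤ inner ℝ D.ν z →
      ‖D2 w (y + z) - D2 w y‖ ≤ (C3 + C5) * ‖z‖ ^ σ := by
    intro y hy z hz hνz
    set b := inner ℝ D.ν z with hb'
    set a := z - b • D.ν with ha
    have iν : inner ℝ D.ν D.ν = 1 := by rw [real_inner_self_eq_norm_sq, D.hν]; norm_num
    have hνa : inner ℝ D.ν a = 0 := by
      rw [ha, inner_sub_right, inner_smul_right, iν, mul_one, sub_self]
    have hbz : b ≤ ‖z‖ := by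
      have := real_inner_le_norm D.ν z
      rwa [D.hν, one_mul] at this
    have haz : ‖a‖ ≤ ‖z‖ := by
      have h1 : ‖z‖ ^ 2 = ‖a‖ ^ 2 + b ^ 2 := by
        have h2 : z = a + b • D.ν := by rw [ha]; abel
        have h3 : inner ℝ a (b • D.ν) = 0 := by
          rw [inner_smul_right, real_inner_comm, hνa, mul_zero]
        have h4 := norm_add_sq_real a (b • D.ν)
        rw [← h2, h3, norm_smul, D.hν] at h4
        rw [h4, Real.norm_of_nonneg hνz]; ring
      nlinarith [norm_nonneg z, norm_nonneg a, sq_nonneg b]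
    have s1 : ‖D2 w (y + a) - D2 w y‖ ≤ C3 * ‖z‖ ^ σ := by
      rcases eq_or_ne a 0 with h0 | h0
      · rw [h0, add_zero, bil_sub_self]; positivity
      have hp : 0 < ‖a‖ := norm_pos_iff.2 h0
      have hae : ‖a‖ • (‖a‖⁻¹ • a) = a := by
        rw [smul_smul, mul_inv_cancel₀ hp.ne', one_smul]
      have := tanE ‖a‖ hp (haz.trans hz) (‖a‖⁻¹ • a)
        (by rw [norm_smul, norm_inv, norm_norm, inv_mul_cancel₀ hp.ne'])
        (inner_ke hνa _) y (hb_mono _ _ (by linarith) hy)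
      rw [hae] at this
      exact this.trans (by gcongr)
    have s2 : ‖D2 w (y + z) - D2 w (y + a)‖ ≤ C5 * ‖z‖ ^ σ := by
      have hz' : y + z = (y + a) + b • D.ν := by rw [ha]; abel
      rcases eq_or_lt_of_le hνz with h0 | h0
      · rw [hz', ← h0, zero_smul, add_zero, bil_sub_self]; positivity
      rw [hz']
      refine (norE b h0 (hbz.trans hz) (y + a) (hb_add hy hνa (by linarith))).trans ?_
      gcongr
    calc ‖D2 w (y + z) - D2 w y‖
        ≤ ‖D2 w (y + z) - D2 w (y + a)‖ + ‖D2 w (y + a) - D2 w y‖ := bil_tri _ _ _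
      _ ≤ C5 * ‖z‖ ^ σ + C3 * ‖z‖ ^ σ := add_le_add s2 s1
      _ = _ := by ring
  have hol : ∀ y ∈ hb D.ν D.y0 (ρ' / 64), ∀ y' ∈ hb D.ν D.y0 (ρ' / 64),
      ‖D2 w y' - D2 w y‖ ≤ C6 * ‖y' - y‖ ^ σ := by
    intro y hy y' hy'
    rcases le_total ‖y' - y‖ k0 with hle | hge
    · have hc : (C3 + C5) * ‖y' - y‖ ^ σ ≤ C6 * ‖y' - y‖ ^ σ := by
        gcongr
        rw [hC6]
        have : 0 < 2 * C / k0 ^ σ := by positivity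
        linarith
      rcases le_total 0 (inner ℝ D.ν (y' - y)) with h0 | h0
      · have := up y hy (y' - y) hle h0
        rw [add_sub_cancel] at this
        exact this.trans hc
      · have := up y' hy' (y - y') (by rwa [norm_sub_rev])
          (by rw [← neg_sub, inner_neg_right]; linarith)
        rw [add_sub_cancel, bil_sub_rev, norm_sub_rev y y'] at this
        exact this.trans hc
    · have h1 := hreg.b2 y (hb_mono _ _ (by linarith) hy)
      have h2 := hreg.b2 y' (hb_mono _ _ (by linarith) hy')
      have h3 : 2 * C ≤ 2 * C / k0 ^ σ * ‖y' - y‖ ^ σ := by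
        rw [div_mul_eq_mul_div, le_div_iff₀ (by positivity)]
        gcongr
      have h4 : 0 ≤ (C3 + C5) * ‖y' - y‖ ^ σ := by positivity
      calc ‖D2 w y' - D2 w y‖ ≤ _ := bil_sub_le _ _
        _ ≤ 2 * C := by linarith
        _ ≤ _ := by rw [hC6, add_mul]; linarith
  have hq : 0 < C / k0 ^ σ := by positivity
  refine ⟨fun y hy => (hreg.b1 y (hb_mono _ _ (by linarith) hy)).trans (by linarith),
    fun y hy => (hreg.b2 y (hb_mono _ _ (by linarith) hy)).trans (by linarith),
    fun y hy y' hy' => (hol y (hb_mono _ _ (by linarith) hy) y'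
      (hb_mono _ _ (by linarith) hy')).trans (by gcongr; linarith), ?_⟩
  intro y hy e e' he he' hνe hνe'
  have ht := hy.2
  rcases le_total k0 (inner ℝ D.ν y) with hle | hge
  · have h1 := hreg.b2 y (hb_mono _ _ (by linarith) hy)
    have h2 : |D2 w y e e'| ≤ C := by
      have := (D2 w y).le_opNorm₂ e e'
      rw [he, he', mul_one, mul_one] at this
      exact this.trans h1
    refine h2.trans ?_
    have h3 : C ≤ C / k0 ^ σ * inner ℝ D.ν y ^ σ := by
      rw [div_mul_eq_mul_div, le_div_iff₀ (by positivity)]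
      gcongr
    refine h3.trans ?_
    gcongr
    linarith
  · set k := inner ℝ D.ν y with hkdef
    have h1 := (hcore w hw hreg k ht hge e' e he' he hνe' hνe y
      (hb_mono _ _ (by linarith) hy)).1 le_rfl
    have h2 := second_diff (v := w) (y := y) (a := k • e') (b := k • e)
      (q := D2 w y (k • e) (k • e')) (Q := k ^ 2 * (C6 * (2 * k ^ σ)))
      (fun t ht' u hu => cd _ (dd_mem he' he hνe' hνe ht (by linarith) hy ht' hu).1)
      (fun t ht' u hu => by
        obtain ⟨m1, _, m3⟩ := dd_mem he' he hνe' hνe ht (r' := ρ' / 64) (by linarith) hy ht' hu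
        have h3 := hol y (hb_mono _ _ (by linarith) hy) _ m1
        show ‖(D2 w (y + t • k • e' + u • k • e) - D2 w y) (k • e) (k • e')‖ ≤ _
        refine ((D2 w (y + t • k • e' + u • k • e) - D2 w y).le_opNorm₂ _ _).trans ?_
        rw [norm_ke he ht.le, norm_ke he' ht.le]
        have h4 : ‖y + t • k • e' + u • k • e - y‖ ^ σ ≤ 2 * k ^ σ := by
          calc _ ≤ (2 * k) ^ σ := by gcongr
            _ = 2 ^ σ * k ^ σ := Real.mul_rpow (by norm_num) ht.le
            _ ≤ 2 * k ^ σ := by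
              gcongr
              calc (2:ℝ) ^ σ ≤ 2 ^ (1:ℝ) := Real.rpow_le_rpow_of_exponent_le (by norm_num) hσ1
                _ = 2 := Real.rpow_one 2
        calc _ ≤ C6 * (2 * k ^ σ) * k * k := by
              gcongr
              exact h3.trans (by gcongr)
          _ = _ := by ring)
    have h3 : k ^ 2 * |D2 w y e e'| ≤ k ^ 2 * ((C1 + 2 * C6) * k ^ σ) := by
      have e1 : k ^ 2 * |D2 w y e e'| = |D2 w y (k • e) (k • e')| := by
        have : D2 w y (k • e) (k • e') = k ^ 2 * D2 w y e e' := by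
          simp only [map_smul, smul_apply, smul_eq_mul]; ring
        rw [this, abs_mul, abs_of_pos (by positivity : 0 < k ^ 2)]
      rw [e1]
      have e2 : D2 w y (k • e) (k • e') = dd w (k • e') (k • e) y
          - (dd w (k • e') (k • e) y - D2 w y (k • e) (k • e')) := by ring
      rw [e2]
      refine (abs_sub _ _).trans ((add_le_add h1 h2).trans (le_of_eq ?_))
      ring
    refine (le_of_mul_le_mul_left h3 (by positivity)).trans
      (mul_le_mul_of_nonneg_right ?_ (by positivity))
    linarith

end hoelder

/-! ### Hölder bounds for all exponents below one -/

section hoelder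
variable {N : ℕ}

/-- Iterating `s ↦ 1/(2-s)` from `0` gives the exponents `n/(n+1)`. -/
lemma LocData.reg_n (D : LocData N) {M0 K0 : ℝ} (hM0 : 0 < M0) (hK0 : 0 ≤ K0) (n : ℕ) :
    ∃ C > 0, ∃ ρ' > 0, ρ' ≤ D.ρ ∧ ∀ w, LSol D M0 K0 w → Reg D (n / (n + 1)) ρ' C w := by
  induction n with
  | zero =>
    obtain ⟨C, hC, s, hs, hsρ, h⟩ := D.bounded hM0 hK0
    refine ⟨2 * C, by positivity, s, hs, hsρ, fun w hw => ?_⟩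
    have h1 : ∀ y ∈ hb D.ν D.y0 s, ‖D2 w y‖ ≤ C := fun y hy => (h w hw y hy).2
    refine ⟨fun y hy => ((h w hw y hy).1).trans (by linarith),
      fun y hy => (h1 y hy).trans (by linarith), fun y hy y' hy' => ?_, ?_⟩
    · simp only [Nat.cast_zero, zero_div, Real.rpow_zero, mul_one]
      exact (bil_sub_le _ _).trans (by linarith [h1 y hy, h1 y' hy'])
    · intro y hy e e' he he' _ _
      simp only [Nat.cast_zero, zero_div, Real.rpow_zero, mul_one]
      have := (D2 w y).le_opNorm₂ e e'
      rw [he, he', mul_one, mul_one] at this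
      exact this.trans ((h1 y hy).trans (by linarith))
  | succ n ih =>
    obtain ⟨C, hC, ρ', hρ', hρρ, h⟩ := ih
    have hn : (0:ℝ) < n + 1 := by positivity
    obtain ⟨C', hC', h'⟩ := D.improve (M0 := M0) (s := n / (n + 1)) hK0 hρ' hρρ hC (by positivity)
      (by rw [div_lt_one hn]; linarith)
    refine ⟨C', hC', ρ' / 128, by positivity, by linarith, fun w hw => ?_⟩
    have := h' w hw (h w hw)
    have e : ((n + 1 : ℕ) : ℝ) / (((n + 1 : ℕ) : ℝ) + 1) = 1 / (2 - (n : ℝ) / (n + 1)) := by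
      have h2 : (2 : ℝ) - n / (n + 1) = (n + 2) / (n + 1) := by field_simp; ring
      have h3 : (0 : ℝ) < n + 2 := by positivity
      rw [h2, one_div_div]
      push_cast
      congr 1
      ring
    rw [e]
    exact this

/-- Uniform `C^{2,r}` bounds up to the flat boundary. -/
lemma LocData.local_reg (D : LocData N) {M0 K0 r : ℝ} (hM0 : 0 < M0) (hK0 : 0 ≤ K0)
    (hr1 : r < 1) : ∃ C > 0, ∃ s > 0, s ≤ D.ρ ∧ ∀ w, LSol D M0 K0 w →
    (∀ y ∈ hb D.ν D.y0 s, ‖fderiv ℝ w y‖ ≤ C ∧ ‖D2 w y‖ ≤ C) ∧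
    ∀ y ∈ hb D.ν D.y0 s, ∀ y' ∈ hb D.ν D.y0 s, y ≠ y' → ‖D2 w y' - D2 w y‖ ≤ C * ‖y' - y‖ ^ r := by
  obtain ⟨n, hn⟩ : ∃ n : ℕ, r ≤ n / (n + 1) := by
    obtain ⟨n, hn⟩ := exists_nat_gt (1 / (1 - r))
    refine ⟨n, ?_⟩
    have h1 : 0 < 1 - r := by linarith
    rw [div_lt_iff₀ h1] at hn
    rw [le_div_iff₀ (by positivity)]
    nlinarith
  obtain ⟨C, hC, ρ', hρ', hρρ, h⟩ := D.reg_n hM0 hK0 n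
  refine ⟨C, hC, min ρ' (1 / 2), by positivity, (min_le_left _ _).trans hρρ, fun w hw => ?_⟩
  have hR := h w hw
  have hm : hb D.ν D.y0 (min ρ' (1 / 2)) ⊆ hb D.ν D.y0 ρ' := hb_mono _ _ (min_le_left _ _)
  refine ⟨fun y hy => ⟨hR.b1 y (hm hy), hR.b2 y (hm hy)⟩, fun y hy y' hy' hne => ?_⟩
  refine (hR.hol y (hm hy) y' (hm hy')).trans ?_
  have hp : 0 < ‖y' - y‖ := norm_pos_iff.2 (sub_ne_zero.2 hne.symm)
  have h1 : ‖y' - y‖ ≤ 1 := by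
    have a := hy.1.trans_le (min_le_right _ _)
    have b := hy'.1.trans_le (min_le_right _ _)
    calc ‖y' - y‖ = ‖(y' - D.y0) - (y - D.y0)‖ := by congr 1; abel
      _ ≤ _ := norm_sub_le _ _
      _ ≤ 1 := by linarith
  gcongr ?_ * ?_
  exact Real.rpow_le_rpow_of_exponent_ge hp h1 hn

end hoelder

/-! ### Straightening the boundary -/

section charts
variable {N : ℕ}

/-- A `C³` map `G` with local inverse `H` near `x0`, with quantitative bounds: `G` maps
`ball x0 δ` injectively, and `H` is defined on `ball (G x0) ρ`. -/
structure Chart (N : ℕ) where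
  /-- the straightening map -/
  G : Euc N → Euc N
  /-- its local inverse -/
  H : Euc N → Euc N
  /-- centre -/
  x0 : Euc N
  /-- radius in the source -/
  δ : ℝ
  /-- radius in the target -/
  ρ : ℝ
  /-- common bound for all derivatives -/
  A : ℝ
  hδ : 0 < δ
  hδ1 : δ ≤ 1
  hρ : 0 < ρ
  hρ4 : ρ ≤ 1 / 4
  hA : 1 ≤ A
  cG : ContDiff ℝ 3 G
  cH : ∀ y ∈ Metric.ball (G x0) ρ, ContDiffAt ℝ 2 H y
  inv1 : ∀ x ∈ Metric.ball x0 δ, H (G x) = x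
  inv2 : ∀ y ∈ Metric.ball (G x0) ρ, G (H y) = y
  mem : ∀ y ∈ Metric.ball (G x0) ρ, H y ∈ Metric.ball x0 (δ / 2)
  Glip : ∀ x ∈ Metric.ball x0 δ, ∀ x' ∈ Metric.ball x0 δ, ‖G x - G x'‖ ≤ A * ‖x - x'‖
  DGlip : ∀ x ∈ Metric.ball x0 δ, ∀ x' ∈ Metric.ball x0 δ,
    ‖fderiv ℝ G x - fderiv ℝ G x'‖ ≤ A * ‖x - x'‖
  D2Glip : ∀ x ∈ Metric.ball x0 δ, ∀ x' ∈ Metric.ball x0 δ,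
    ‖fderiv ℝ (fderiv ℝ G) x - fderiv ℝ (fderiv ℝ G) x'‖ ≤ A * ‖x - x'‖
  DGb : ∀ x ∈ Metric.ball x0 δ, ‖fderiv ℝ G x‖ ≤ A
  D2Gb : ∀ x ∈ Metric.ball x0 δ, ‖fderiv ℝ (fderiv ℝ G) x‖ ≤ A
  Hlip : ∀ y ∈ Metric.ball (G x0) ρ, ∀ y' ∈ Metric.ball (G x0) ρ, ‖H y - H y'‖ ≤ A * ‖y - y'‖
  DHb : ∀ y ∈ Metric.ball (G x0) ρ, ‖fderiv ℝ H y‖ ≤ A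
  D2Hb : ∀ y ∈ Metric.ball (G x0) ρ, ‖fderiv ℝ (fderiv ℝ H) y‖ ≤ A

/-- A `C¹` map is bounded and Lipschitz near a point. -/
lemma lip_near {F : Type*} [NormedAddCommGroup F] [NormedSpace ℝ F] {f : Euc N → F} {x : Euc N}
    (h : ContDiffAt ℝ 1 f x) : ∃ K : ℝ, ∃ η > 0, ∀ y ∈ Metric.ball x η,
      ‖f y‖ ≤ K ∧ ∀ y' ∈ Metric.ball x η, ‖f y - f y'‖ ≤ K * ‖y - y'‖ := by
  obtain ⟨K, t, ht, hK⟩ := h.exists_lipschitzOnWith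
  have h2 : ∀ᶠ y in 𝓝 x, ‖f y‖ < ‖f x‖ + 1 :=
    h.continuousAt.norm.eventually (gt_mem_nhds (by linarith))
  obtain ⟨η, hη, hs⟩ := Metric.mem_nhds_iff.1 (inter_mem ht h2)
  refine ⟨max K (‖f x‖ + 1), η, hη, fun y hy => ⟨(hs hy).2.le.trans (le_max_right _ _), ?_⟩⟩
  intro y' hy'
  have := hK.norm_sub_le (hs hy).1 (hs hy').1
  exact this.trans (mul_le_mul_of_nonneg_right (le_max_left _ _) (norm_nonneg _))

/-- The inverse function theorem, with uniform bounds on a small ball. -/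
lemma chart_exists {G : Euc N → Euc N} (hG : ContDiff ℝ 3 G) {x0 : Euc N}
    (e : Euc N ≃L[ℝ] Euc N) (he : HasFDerivAt G (e : Euc N →L[ℝ] Euc N) x0)
    {U : Set (Euc N)} (hU : U ∈ 𝓝 x0) :
    ∃ X : Chart N, X.G = G ∧ X.x0 = x0 ∧ Metric.ball x0 X.δ ⊆ U := by
  have hGa : ContDiffAt ℝ 3 G x0 := hG.contDiffAt
  set h := hGa.toOpenPartialHomeomorph G he (by norm_num) with hh
  have hcoe : ∀ x, h x = G x := fun x => rfl
  set H : Euc N → Euc N := fun y => h.symm y with hHdef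
  have hsrc : x0 ∈ h.source := hGa.mem_toOpenPartialHomeomorph_source he (by norm_num)
  have htgt : G x0 ∈ h.target := h.map_source hsrc
  have hH3 : ContDiffAt ℝ 3 H (G x0) := hGa.to_localInverse he (by norm_num)
  have hHx : H (G x0) = x0 := h.left_inv hsrc
  obtain ⟨K1, η1, hη1, h1⟩ := lip_near (f := G) (x := x0) (hGa.of_le (by norm_num))
  obtain ⟨K2, η2, hη2, h2⟩ := lip_near (f := fderiv ℝ G) (x := x0)
    (hGa.fderiv_right (m := 1) (by norm_num))
  obtain ⟨K3, η3, hη3, h3⟩ := lip_near (f := fderiv ℝ (fderiv ℝ G)) (x := x0)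
    ((hGa.fderiv_right (m := 2) (by norm_num)).fderiv_right (m := 1) (by norm_num))
  obtain ⟨K4, ζ1, hζ1, h4⟩ := lip_near (f := H) (x := G x0) (hH3.of_le (by norm_num))
  obtain ⟨K5, ζ2, hζ2, h5⟩ := lip_near (f := fderiv ℝ H) (x := G x0)
    (hH3.fderiv_right (m := 1) (by norm_num))
  obtain ⟨K6, ζ3, hζ3, h6⟩ := lip_near (f := fderiv ℝ (fderiv ℝ H)) (x := G x0)
    ((hH3.fderiv_right (m := 2) (by norm_num)).fderiv_right (m := 1) (by norm_num))
  obtain ⟨η4, hη4, h7⟩ := Metric.mem_nhds_iff.1 (inter_mem hU (h.open_source.mem_nhds hsrc))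
  set δ := min (min (min η1 η2) (min η3 η4)) 1 with hδ
  have hδ0 : 0 < δ := by positivity
  have hev : ∀ᶠ y in 𝓝 (G x0), y ∈ h.target ∧ ContDiffAt ℝ 2 H y ∧
      H y ∈ Metric.ball x0 (δ / 2) := by
    have ht : ∀ᶠ y in 𝓝 (G x0), y ∈ h.target := h.open_target.mem_nhds htgt
    refine ht.and
      (((hH3.of_le (by norm_num : (2 : WithTop ℕ∞) ≤ 3)).eventually (by simp)).and ?_)
    have hc := hH3.continuousAt
    have hb : Metric.ball x0 (δ / 2) ∈ 𝓝 (H (G x0)) := by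
      rw [hHx]; exact Metric.ball_mem_nhds _ (by positivity)
    exact hc hb
  obtain ⟨ζ4, hζ4, h8⟩ := Metric.mem_nhds_iff.1 hev
  set ρ := min (min (min ζ1 ζ2) (min ζ3 ζ4)) (1 / 4) with hρ
  have hρ0 : 0 < ρ := by positivity
  set A := 1 + |K1| + |K2| + |K3| + |K4| + |K5| + |K6| with hA
  have a1 := abs_nonneg K1
  have a2 := abs_nonneg K2
  have a3 := abs_nonneg K3
  have a4 := abs_nonneg K4
  have a5 := abs_nonneg K5
  have a6 := abs_nonneg K6
  have b1 : K1 ≤ A := by linarith [le_abs_self K1]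
  have b2 : K2 ≤ A := by linarith [le_abs_self K2]
  have b3 : K3 ≤ A := by linarith [le_abs_self K3]
  have b4 : K4 ≤ A := by linarith [le_abs_self K4]
  have b5 : K5 ≤ A := by linarith [le_abs_self K5]
  have b6 : K6 ≤ A := by linarith [le_abs_self K6]
  have d1 : Metric.ball x0 δ ⊆ Metric.ball x0 η1 := Metric.ball_subset_ball
    ((min_le_left _ _).trans ((min_le_left _ _).trans (min_le_left _ _)))
  have d2 : Metric.ball x0 δ ⊆ Metric.ball x0 η2 := Metric.ball_subset_ball
    ((min_le_left _ _).trans ((min_le_left _ _).trans (min_le_right _ _)))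
  have d3 : Metric.ball x0 δ ⊆ Metric.ball x0 η3 := Metric.ball_subset_ball
    ((min_le_left _ _).trans ((min_le_right _ _).trans (min_le_left _ _)))
  have d4 : Metric.ball x0 δ ⊆ Metric.ball x0 η4 := Metric.ball_subset_ball
    ((min_le_left _ _).trans ((min_le_right _ _).trans (min_le_right _ _)))
  have e1 : Metric.ball (G x0) ρ ⊆ Metric.ball (G x0) ζ1 := Metric.ball_subset_ball
    ((min_le_left _ _).trans ((min_le_left _ _).trans (min_le_left _ _)))
  have e2 : Metric.ball (G x0) ρ ⊆ Metric.ball (G x0) ζ2 := Metric.ball_subset_ball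
    ((min_le_left _ _).trans ((min_le_left _ _).trans (min_le_right _ _)))
  have e3 : Metric.ball (G x0) ρ ⊆ Metric.ball (G x0) ζ3 := Metric.ball_subset_ball
    ((min_le_left _ _).trans ((min_le_right _ _).trans (min_le_left _ _)))
  have e4 : Metric.ball (G x0) ρ ⊆ Metric.ball (G x0) ζ4 := Metric.ball_subset_ball
    ((min_le_left _ _).trans ((min_le_right _ _).trans (min_le_right _ _)))
  have mr : ∀ {K t : ℝ}, K ≤ A → 0 ≤ t → K * t ≤ A * t := fun h ht =>
    mul_le_mul_of_nonneg_right h ht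
  refine ⟨{ G := G, H := H, x0 := x0, δ := δ, ρ := ρ, A := A, hδ := hδ0,
            hδ1 := min_le_right _ _, hρ := hρ0, hρ4 := min_le_right _ _, hA := by linarith,
            cG := hG, cH := fun y hy => (h8 (e4 hy)).2.1,
            inv1 := fun x hx => h.left_inv (h7 (d4 hx)).2,
            inv2 := fun y hy => h.right_inv (h8 (e4 hy)).1,
            mem := fun y hy => (h8 (e4 hy)).2.2,
            Glip := fun x hx x' hx' =>
              ((h1 x (d1 hx)).2 x' (d1 hx')).trans (mr b1 (norm_nonneg _)),
            DGlip := fun x hx x' hx' =>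
              ((h2 x (d2 hx)).2 x' (d2 hx')).trans (mr b2 (norm_nonneg _)),
            D2Glip := fun x hx x' hx' =>
              ((h3 x (d3 hx)).2 x' (d3 hx')).trans (mr b3 (norm_nonneg _)),
            DGb := fun x hx => ((h2 x (d2 hx)).1).trans b2,
            D2Gb := fun x hx => ((h3 x (d3 hx)).1).trans b3,
            Hlip := fun y hy y' hy' =>
              ((h4 y (e1 hy)).2 y' (e1 hy')).trans (mr b4 (norm_nonneg _)),
            DHb := fun y hy => ((h5 y (e2 hy)).1).trans b5,
            D2Hb := fun y hy => ((h6 y (e3 hy)).1).trans b6 }, rfl, rfl,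
          fun x hx => (h7 (d4 hx)).1⟩

/-- Near each point of the closure a `C³` domain is the preimage of a half space under a `C³`
local diffeomorphism. -/
lemma straighten {Ω : Set (Euc N)} (hN : 0 < N) (hΩ : IsC3Domain Ω) {x0 : Euc N}
    (hx0 : x0 ∈ closure Ω) :
    ∃ (G : Euc N → Euc N) (ν : Euc N) (e : Euc N ≃L[ℝ] Euc N), ContDiff ℝ 3 G ∧ ‖ν‖ = 1 ∧
      HasFDerivAt G (e : Euc N →L[ℝ] Euc N) x0 ∧ inner ℝ ν (G x0) ≤ 1 / 2 ∧
      ∀ᶠ x in 𝓝 x0, (x ∈ Ω ↔ 0 < inner ℝ ν (G x)) := by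
  obtain ⟨hop, -, -, F, hF, hΩF, hreg⟩ := hΩ
  by_cases hx : x0 ∈ Ω
  · set ν : Euc N := EuclideanSpace.single ⟨0, hN⟩ 1 with hν
    have hν1 : ‖ν‖ = 1 := by simp [hν]
    have hνν : inner ℝ ν ν = (1:ℝ) := by rw [real_inner_self_eq_norm_sq, hν1]; norm_num
    refine ⟨fun x => x + ((1 / 2 : ℝ) • ν - x0), ν, ContinuousLinearEquiv.refl ℝ _,
      contDiff_id.add contDiff_const, hν1, ?_, ?_, ?_⟩
    · exact (hasFDerivAt_id x0).add_const _
    · simp only [add_sub_cancel, inner_smul_right, hνν]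
      norm_num
    · have hc : ContinuousAt (fun x => inner ℝ ν (x + ((1 / 2 : ℝ) • ν - x0))) x0 :=
        (continuous_const.inner (continuous_id.add continuous_const)).continuousAt
      have h1 : ∀ᶠ x in 𝓝 x0, 0 < inner ℝ ν (x + ((1 / 2 : ℝ) • ν - x0)) := by
        refine hc.eventually (lt_mem_nhds ?_)
        simp only [add_sub_cancel, inner_smul_right, hνν]
        norm_num
      filter_upwards [h1, hop.mem_nhds hx] with x h1 h2
      exact ⟨fun _ => h1, fun _ => h2⟩
  · have hfr : x0 ∈ frontier Ω := by rw [hop.frontier_eq]; exact ⟨hx0, hx⟩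
    have hF0 : F x0 = 0 := by
      have h1 : F x0 ≤ 0 := by
        have : closure Ω ⊆ {x | F x ≤ 0} := by
          refine closure_minimal ?_ (isClosed_le hF.continuous continuous_const)
          rw [hΩF]; exact fun x hx => (show F x < 0 from hx).le
        exact this hx0
      have h2 : ¬ F x0 < 0 := by rw [hΩF] at hx; exact hx
      linarith
    have hne := hreg x0 hfr
    obtain ⟨v, hv⟩ : ∃ v, fderiv ℝ F x0 v ≠ 0 := by
      by_contra hcon
      push Not at hcon
      exact hne (ContinuousLinearMap.ext hcon)
    have hv0 : v ≠ 0 := fun h => hv (by rw [h, map_zero])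
    set ν := (‖v‖⁻¹ : ℝ) • v with hν
    have hν1 : ‖ν‖ = 1 := by 
      rw [hν, norm_smul, norm_inv, norm_norm, inv_mul_cancel₀ (norm_ne_zero_iff.2 hv0)]
    have hνν : inner ℝ ν ν = (1:ℝ) := by rw [real_inner_self_eq_norm_sq, hν1]; norm_num
    have hFν : fderiv ℝ F x0 ν ≠ 0 := by
      rw [hν, map_smul, smul_eq_mul]
      exact mul_ne_zero (inv_ne_zero (norm_ne_zero_iff.2 hv0)) hv
    set G : Euc N → Euc N := fun x => x - x0 - (inner ℝ ν (x - x0) + F x) • ν with hGdef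
    have hGν : ∀ x, inner ℝ ν (G x) = - F x := fun x => by
      simp only [hGdef, inner_sub_right, inner_smul_right, hνν]
      ring
    have hGc : ContDiff ℝ 3 G := by
      refine (contDiff_id.sub contDiff_const).sub (ContDiff.smul (ContDiff.add ?_ hF) contDiff_const)
      exact contDiff_const.inner ℝ (contDiff_id.sub contDiff_const)
    set L := fderiv ℝ G x0 with hL
    have hGd : HasFDerivAt G L x0 := (hGc.differentiable (by norm_num) x0).hasFDerivAt
    have hLa : ∀ a, L a = a - (inner ℝ ν a + fderiv ℝ F x0 a) • ν := by
      have hFd : HasFDerivAt F (fderiv ℝ F x0) x0 :=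
        (hF.differentiable (by norm_num) x0).hasFDerivAt
      have hid : HasFDerivAt (fun x : Euc N => x - x0) (ContinuousLinearMap.id ℝ (Euc N)) x0 :=
        (hasFDerivAt_id x0).sub_const _
      have hin : HasFDerivAt (fun x : Euc N => inner ℝ ν (x - x0)) (innerSL ℝ ν) x0 :=
        ((innerSL ℝ ν).hasFDerivAt.comp x0 hid)
      have hh := hid.sub ((hin.add hFd).smul_const ν)
      intro a
      have : L = _ := hGd.unique hh
      rw [this]
      simp
    have hinj : Function.Injective L := by
      refine (injective_iff_map_eq_zero L).2 fun a ha => ?_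
      rw [hLa] at ha
      have h1 : inner ℝ ν a = inner ℝ ν a + fderiv ℝ F x0 a := by
        have := congrArg (fun z => inner ℝ ν z) ha
        simp only [inner_sub_right, inner_smul_right, hνν, inner_zero_right] at this
        linarith
      have h2 : fderiv ℝ F x0 a = 0 := by linarith
      rw [h2, add_zero, sub_eq_zero] at ha
      have h3 : inner ℝ ν a * fderiv ℝ F x0 ν = 0 := by
        rw [← smul_eq_mul, ← map_smul, ← ha, h2]
      have h4 : inner ℝ ν a = (0:ℝ) := (mul_eq_zero.1 h3).resolve_right hFν
      rw [ha, h4, zero_smul]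
    set e := (LinearEquiv.ofInjectiveEndo (L : Euc N →ₗ[ℝ] Euc N) hinj).toContinuousLinearEquiv
      with he
    refine ⟨G, ν, e, hGc, hν1, ?_, ?_, ?_⟩
    · have : (e : Euc N →L[ℝ] Euc N) = L := by ext a; rfl
      rw [this]; exact hGd
    · rw [hGν, hF0]; norm_num
    · refine Eventually.of_forall fun x => ?_
      rw [hGν, hΩF]
      show F x < 0 ↔ _
      constructor <;> intro h <;> linarith

end charts

/-! ### The Laplacian in straightened coordinates -/

section chartdata
variable {N : ℕ}

/-- Second order coefficients of the Laplacian in the coordinates `y = G x`. -/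
def Chart.g (X : Chart N) (i : Fin N) (y : Euc N) : Euc N :=
  fderiv ℝ X.G (X.H y) (EuclideanSpace.single i 1)

/-- First order coefficient of the Laplacian in the coordinates `y = G x`. -/
def Chart.c (X : Chart N) (y : Euc N) : Euc N :=
  ∑ i, fderiv ℝ (fderiv ℝ X.G) (X.H y) (EuclideanSpace.single i 1) (EuclideanSpace.single i 1)

lemma Chart.half (X : Chart N) {x : Euc N} (hx : x ∈ Metric.ball X.x0 (X.δ / 2)) :
    x ∈ Metric.ball X.x0 X.δ :=
  Metric.ball_subset_ball (by linarith [X.hδ]) hx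

lemma Chart.cG2 (X : Chart N) (x : Euc N) : ContDiffAt ℝ 2 X.G x :=
  X.cG.contDiffAt.of_le (by norm_num)

/-- `Lop` is the Laplacian in the new coordinates. -/
lemma Chart.Lop_G (X : Chart N) {v : Euc N → ℝ} {x : Euc N} (hx : x ∈ Metric.ball X.x0 X.δ)
    (hv : ContDiffAt ℝ 2 v (X.G x)) : Lop X.g X.c v (X.G x) = lap (fun z => v (X.G z)) x := by
  rw [lap_comp hv (X.cG2 x)]
  simp only [Lop, Chart.g, Chart.c, X.inv1 x hx]

lemma sq_norm_single_le (L : Euc N →L[ℝ] Euc N) {A : ℝ} (h : ‖L‖ ≤ A) (i : Fin N) :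
    ‖L (EuclideanSpace.single i 1)‖ ≤ A := by
  have := L.le_opNorm (EuclideanSpace.single i 1)
  simp only [EuclideanSpace.norm_single, norm_one, mul_one] at this
  exact this.trans h

lemma Chart.DG_DH (X : Chart N) {y : Euc N} (hy : y ∈ Metric.ball (X.G X.x0) X.ρ) (a : Euc N) :
    fderiv ℝ X.G (X.H y) (fderiv ℝ X.H y a) = a := by
  have h1 : HasFDerivAt X.H (fderiv ℝ X.H y) y :=
    ((X.cH y hy).differentiableAt (by norm_num)).hasFDerivAt
  have h2 : HasFDerivAt X.G (fderiv ℝ X.G (X.H y)) (X.H y) :=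
    ((X.cG2 _).differentiableAt (by norm_num)).hasFDerivAt
  have h3 := h2.comp y h1
  have h4 : (X.G ∘ X.H) =ᶠ[𝓝 y] id := by
    filter_upwards [Metric.isOpen_ball.mem_nhds hy] with z hz
    exact X.inv2 z hz
  have h5 := (h3.congr_of_eventuallyEq h4.symm).unique (hasFDerivAt_id y)
  have := congrArg (fun T : Euc N →L[ℝ] Euc N => T a) h5
  simpa using this

lemma Chart.small_ball (X : Chart N) {y : Euc N} (hy : y ∈ Metric.ball (X.G X.x0) X.ρ)
    {κ s : ℝ} (hκ : κ ≤ 1 / X.A) (hκ2 : κ ≤ X.δ / 2) (hκ0 : 0 < κ) (hs : 0 < s) (hs1 : s ≤ 1)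
    {x : Euc N} (hx : x ∈ Metric.ball (X.H y) (κ * s)) :
    x ∈ Metric.ball X.x0 X.δ ∧ X.G x ∈ Metric.ball y s := by
  have hA := X.hA
  have hH := X.mem y hy
  have h1 : x ∈ Metric.ball X.x0 X.δ := by
    rw [Metric.mem_ball] at hx hH ⊢
    have : κ * s ≤ X.δ / 2 := by nlinarith
    linarith [dist_triangle x (X.H y) X.x0]
  refine ⟨h1, ?_⟩
  have := X.Glip x h1 _ (X.half hH)
  rw [X.inv2 y hy] at this
  rw [Metric.mem_ball, dist_eq_norm] at hx ⊢
  have h2 : X.A * κ ≤ 1 := by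
    rw [le_div_iff₀ (by linarith)] at hκ; linarith
  calc _ ≤ _ := this
    _ < X.A * (κ * s) := by
      exact mul_lt_mul_of_pos_left hx (by linarith)
    _ ≤ s := by nlinarith

/-- The interior estimates of first derivatives in the new coordinates. -/
lemma Chart.ge (X : Chart N) (hN : 0 < N) : ∃ C1 > 0, ∀ (y : Euc N) (s : ℝ) (v : Euc N → ℝ)
    (M K : ℝ), 0 < s → s ≤ 1 → Metric.ball y s ⊆ Metric.ball (X.G X.x0) X.ρ → 0 < M → 0 ≤ K →
    (∀ y' ∈ Metric.ball y s, ContDiffAt ℝ 2 v y') → (∀ y' ∈ Metric.ball y s, |v y'| ≤ M) →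
    (∀ y' ∈ Metric.ball y s, |Lop X.g X.c v y'| ≤ K) →
    ‖fderiv ℝ v y‖ ≤ C1 * (M / s + K * s) := by
  obtain ⟨C, hC, h⟩ := grad_est hN
  have hA := X.hA
  have hδ := X.hδ
  have hδ1 := X.hδ1
  set κ := min (1 / X.A) (X.δ / 2) with hκ
  have hκ0 : 0 < κ := by positivity
  have hκ1 : κ ≤ 1 := (min_le_right _ _).trans (by linarith)
  refine ⟨X.A * (C / κ), by positivity, ?_⟩
  intro y s v M K hs hs1 hsub hM hK hv hvM hvK
  have hy := hsub (Metric.mem_ball_self hs)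
  have hsm := fun {x} hx => X.small_ball (x := x) hy (min_le_left _ _) (min_le_right _ _) hκ0 hs hs1 hx
  have hcd : ∀ x ∈ Metric.ball (X.H y) (κ * s), ContDiffAt ℝ 2 (fun z => v (X.G z)) x :=
    fun x hx => ContDiffAt.comp x (hv _ (hsm hx).2) (X.cG2 x)
  have key := h (κ * s) (by positivity) (by nlinarith) (X.H y) (fun z => v (X.G z)) M K hM hK hcd
    (fun x hx => hvM _ (hsm hx).2)
    (fun x hx => by
      rw [← X.Lop_G (hsm hx).1 (hv _ (hsm hx).2)]
      exact hvK _ (hsm hx).2)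
  have hb : C * (M / (κ * s) + K * (κ * s)) ≤ C / κ * (M / s + K * s) := by
    have e : C / κ * (M / s + K * s) = C * (M / (κ * s) + K * s / κ) := by
      field_simp
    rw [e]
    have : K * (κ * s) ≤ K * s / κ := by
      rw [le_div_iff₀ hκ0]
      have h1 : κ * κ ≤ 1 := by nlinarith
      have h2 : 0 ≤ K * s := by positivity
      nlinarith
    exact mul_le_mul_of_nonneg_left (by linarith) hC.le
  refine ContinuousLinearMap.opNorm_le_bound _ (by positivity) fun a => ?_
  have e1 := fderiv_comp_G (v := v) (G := X.G) (x := X.H y)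
    (by rw [X.inv2 y hy]; exact hv y (Metric.mem_ball_self hs)) (X.cG2 _) (fderiv ℝ X.H y a)
  rw [X.DG_DH hy, X.inv2 y hy] at e1
  rw [← e1]
  calc _ ≤ _ := ContinuousLinearMap.le_opNorm _ _
    _ ≤ (C / κ * (M / s + K * s)) * (X.A * ‖a‖) := by
      refine mul_le_mul (key.trans hb) ?_ (norm_nonneg _) (by positivity)
      exact ((fderiv ℝ X.H y).le_opNorm a).trans
        (mul_le_mul_of_nonneg_right (X.DHb y hy) (norm_nonneg _))
    _ = _ := by ring

/-- The interior estimates of second derivatives in the new coordinates. -/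
lemma Chart.he (X : Chart N) (hN : 0 < N) : ∃ C1 > 0, ∀ (y : Euc N) (s : ℝ) (v : Euc N → ℝ)
    (M L : ℝ), 0 < s → s ≤ 1 → Metric.ball y s ⊆ Metric.ball (X.G X.x0) X.ρ → 0 < M → 0 ≤ L →
    (∀ y' ∈ Metric.ball y s, ContDiffAt ℝ 2 v y') →
    (∀ y' ∈ Metric.ball y s, ‖fderiv ℝ v y'‖ ≤ M) →
    (∀ y' ∈ Metric.ball y s, ∀ y'' ∈ Metric.ball y s,
      |Lop X.g X.c v y' - Lop X.g X.c v y''| ≤ L * ‖y' - y''‖) →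
    ‖D2 v y‖ ≤ C1 * (M / s + L * s) := by
  obtain ⟨C, hC, h⟩ := hess_est hN
  have hA := X.hA
  have hA0 : 0 < X.A := by linarith
  have hδ := X.hδ
  have hδ1 := X.hδ1
  set κ := min (1 / X.A) (X.δ / 2) with hκ
  have hκ0 : 0 < κ := by positivity
  have hκ1 : κ ≤ 1 := (min_le_right _ _).trans (by linarith)
  refine ⟨X.A ^ 3 * (C / κ) + X.A ^ 2, by positivity, ?_⟩
  intro y s v M L hs hs1 hsub hM hL hv hvM hvL
  have hy := hsub (Metric.mem_ball_self hs)
  have hsm := fun {x} hx => X.small_ball (x := x) hy (min_le_left _ _) (min_le_right _ _) hκ0 hs hs1 hx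
  have hcd : ∀ x ∈ Metric.ball (X.H y) (κ * s), ContDiffAt ℝ 2 (fun z => v (X.G z)) x :=
    fun x hx => ContDiffAt.comp x (hv _ (hsm hx).2) (X.cG2 x)
  have hfd : ∀ x ∈ Metric.ball (X.H y) (κ * s), ‖fderiv ℝ (fun z => v (X.G z)) x‖ ≤ X.A * M := by
    intro x hx
    refine ContinuousLinearMap.opNorm_le_bound _ (by positivity) fun a => ?_
    rw [fderiv_comp_G (hv _ (hsm hx).2) (X.cG2 x)]
    calc _ ≤ _ := ContinuousLinearMap.le_opNorm _ _
      _ ≤ M * (X.A * ‖a‖) := by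
        refine mul_le_mul (hvM _ (hsm hx).2) ?_ (norm_nonneg _) hM.le
        exact ((fderiv ℝ X.G x).le_opNorm a).trans
          (mul_le_mul_of_nonneg_right (X.DGb x (hsm hx).1) (norm_nonneg _))
      _ = _ := by ring
  have key := h (κ * s) (by positivity) (by nlinarith) (X.H y) (fun z => v (X.G z))
    (X.A * M) (L * X.A) (by positivity) (by positivity) hcd hfd
    (fun x hx x' hx' => by
      rw [← X.Lop_G (hsm hx).1 (hv _ (hsm hx).2), ← X.Lop_G (hsm hx').1 (hv _ (hsm hx').2)]
      refine (hvL _ (hsm hx).2 _ (hsm hx').2).trans ?_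
      rw [mul_assoc]
      exact mul_le_mul_of_nonneg_left (X.Glip x (hsm hx).1 x' (hsm hx').1) hL)
  have hb : C * (X.A * M / (κ * s) + L * X.A * (κ * s)) ≤ X.A * (C / κ) * (M / s + L * s) := by
    have e : X.A * (C / κ) * (M / s + L * s) = C * (X.A * M / (κ * s) + L * X.A * s / κ) := by
      field_simp
    rw [e]
    have : L * X.A * (κ * s) ≤ L * X.A * s / κ := by
      rw [le_div_iff₀ hκ0]
      have h1 : κ * κ ≤ 1 := by nlinarith
      have h2 : 0 ≤ L * X.A * s := by positivity
      nlinarith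
    exact mul_le_mul_of_nonneg_left (by linarith) hC.le
  have hHy : X.H y ∈ Metric.ball (X.H y) (κ * s) := Metric.mem_ball_self (by positivity)
  have hvu : (fun z => v (X.G (X.H z))) =ᶠ[𝓝 y] v := by
    filter_upwards [Metric.isOpen_ball.mem_nhds hy] with z hz
    rw [X.inv2 z hz]
  have hD2 : D2 v y = D2 (fun z => (fun x => v (X.G x)) (X.H z)) y := by
    unfold D2
    exact (hvu.fderiv.fderiv_eq).symm
  have hMs : M ≤ M / s + L * s := by
    have : M ≤ M / s := by rw [le_div_iff₀ hs]; nlinarith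
    have : 0 ≤ L * s := by positivity
    linarith
  have hQ : 0 ≤ M / s + L * s := by positivity
  refine ContinuousLinearMap.opNorm_le_bound₂ _ (by positivity) fun a b => ?_
  rw [hD2, D2_comp (hcd _ hHy) (X.cH y hy)]
  have hn : ∀ a, ‖fderiv ℝ X.H y a‖ ≤ X.A * ‖a‖ := fun a =>
    ((fderiv ℝ X.H y).le_opNorm a).trans
      (mul_le_mul_of_nonneg_right (X.DHb y hy) (norm_nonneg _))
  have t1 : ‖D2 (fun x => v (X.G x)) (X.H y) (fderiv ℝ X.H y a) (fderiv ℝ X.H y b)‖ ≤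
      (X.A * (C / κ) * (M / s + L * s)) * (X.A * ‖a‖) * (X.A * ‖b‖) := by
    refine (ContinuousLinearMap.le_opNorm₂ _ _ _).trans ?_
    exact mul_le_mul (mul_le_mul (key.trans hb) (hn a) (norm_nonneg _) (by positivity)) (hn b)
      (norm_nonneg _) (by positivity)
  have t2 : ‖fderiv ℝ (fun x => v (X.G x)) (X.H y) (fderiv ℝ (fderiv ℝ X.H) y a b)‖ ≤
      X.A * M * (X.A * ‖a‖ * ‖b‖) := by
    refine (ContinuousLinearMap.le_opNorm _ _).trans ?_
    refine mul_le_mul (hfd _ hHy) ?_ (norm_nonneg _) (by positivity)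
    refine (ContinuousLinearMap.le_opNorm₂ _ _ _).trans ?_
    exact mul_le_mul_of_nonneg_right (mul_le_mul_of_nonneg_right (X.D2Hb y hy) (norm_nonneg _))
      (norm_nonneg _)
  refine (norm_add_le _ _).trans ((add_le_add t1 t2).trans ?_)
  have h3 : X.A ^ 2 * M * (‖a‖ * ‖b‖) ≤ X.A ^ 2 * (M / s + L * s) * (‖a‖ * ‖b‖) :=
    mul_le_mul_of_nonneg_right (mul_le_mul_of_nonneg_left hMs (by positivity)) (by positivity)
  calc _ = X.A ^ 3 * (C / κ) * (M / s + L * s) * (‖a‖ * ‖b‖) + X.A ^ 2 * M * (‖a‖ * ‖b‖) := by ring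
    _ ≤ _ := by
      rw [show (X.A ^ 3 * (C / κ) + X.A ^ 2) * (M / s + L * s) * ‖a‖ * ‖b‖ =
        X.A ^ 3 * (C / κ) * (M / s + L * s) * (‖a‖ * ‖b‖) +
          X.A ^ 2 * (M / s + L * s) * (‖a‖ * ‖b‖) by ring]
      linarith

/-- Ellipticity of the transformed operator in any unit direction. -/
lemma Chart.ell (X : Chart N) {ν : Euc N} (hν : ‖ν‖ = 1) {y : Euc N}
    (hy : y ∈ Metric.ball (X.G X.x0) X.ρ) :
    1 / X.A ^ 2 ≤ ∑ i, inner ℝ ν (X.g i y) ^ 2 := by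
  have hA := X.hA
  set a := fderiv ℝ X.H y ν with ha
  have h1 : inner ℝ ν (fderiv ℝ X.G (X.H y) a) = (1:ℝ) := by
    rw [ha, X.DG_DH hy, real_inner_self_eq_norm_sq, hν]; norm_num
  have hx : a = ∑ i, a i • EuclideanSpace.single i (1:ℝ) := by
    ext j
    simp [Finset.sum_apply, Pi.single_apply]
  have h2 : ∑ i, a i * inner ℝ ν (X.g i y) = 1 := by
    rw [← h1]
    conv_rhs => rw [hx]
    rw [map_sum, inner_sum]
    simp only [map_smul, inner_smul_right]
    rfl
  have h3 := Finset.sum_mul_sq_le_sq_mul_sq Finset.univ (fun i => a i)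
    (fun i => inner ℝ ν (X.g i y))
  rw [h2] at h3
  have h4 : ∑ i, a i ^ 2 = ‖a‖ ^ 2 := by
    rw [EuclideanSpace.norm_sq_eq]; simp
  have h5 : ‖a‖ ≤ X.A := by
    have := ((fderiv ℝ X.H y).le_opNorm ν)
    rw [hν, mul_one] at this
    exact this.trans (X.DHb y hy)
  rw [h4] at h3
  rw [div_le_iff₀ (by positivity)]
  have h6 : ‖a‖ ^ 2 ≤ X.A ^ 2 := by gcongr
  have h7 : 0 ≤ ∑ i, inner ℝ ν (X.g i y) ^ 2 := Finset.sum_nonneg fun i _ => sq_nonneg _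
  nlinarith

/-- The Laplacian in straightened coordinates satisfies all requirements of `LocData`. -/
lemma Chart.locData (X : Chart N) (hN : 0 < N) {ν : Euc N} (hν : ‖ν‖ = 1)
    (h0 : inner ℝ ν (X.G X.x0) ≤ 1 / 2) :
    ∃ D : LocData N, D.g = X.g ∧ D.c = X.c ∧ D.ν = ν ∧ D.y0 = X.G X.x0 ∧ D.ρ = X.ρ := by
  obtain ⟨C1, hC1, hge⟩ := X.ge hN
  obtain ⟨C2, hC2, hhe⟩ := X.he hN
  have hA := X.hA
  have hA2 : 1 ≤ X.A ^ 2 := by nlinarith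
  have hAA : X.A ≤ X.A ^ 2 := by nlinarith
  have hsub : hb ν (X.G X.x0) X.ρ ⊆ Metric.ball (X.G X.x0) X.ρ := fun y hy => by
    rw [Metric.mem_ball, dist_eq_norm]; exact hy.1
  have hN' : (1:ℝ) ≤ N := by exact_mod_cast hN
  have hmem : ∀ y ∈ hb ν (X.G X.x0) X.ρ, X.H y ∈ Metric.ball X.x0 X.δ :=
    fun y hy => X.half (X.mem y (hsub hy))
  have hsingle : ∀ i : Fin N, ‖(EuclideanSpace.single i (1:ℝ) : Euc N)‖ = 1 := fun i => by simp
  refine ⟨{ g := X.g, c := X.c, ν := ν, y0 := X.G X.x0, ρ := X.ρ, C0 := N * X.A ^ 2,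
            θ := 1 / X.A ^ 2, C1 := C1 + C2, hν := hν, hρ := X.hρ,
            hρ1 := X.hρ4.trans (by norm_num), hC0 := ?_, hθ := by positivity,
            hC1 := by positivity, g_bd := ?_, c_bd := ?_,
            g_ell := fun y hy => X.ell hν (hsub hy), g_lip := ?_, c_lip := ?_, height := ?_,
            ge := ?_, he := ?_ }, rfl, rfl, rfl, rfl, rfl⟩
  · nlinarith
  · intro y hy
    calc ∑ i, ‖X.g i y‖ ^ 2 ≤ ∑ i : Fin N, X.A ^ 2 := by
          refine Finset.sum_le_sum fun i _ => ?_
          have := sq_norm_single_le _ (X.DGb _ (hmem y hy)) i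
          exact pow_le_pow_left₀ (norm_nonneg _) this 2
      _ = _ := by simp
  · intro y hy
    calc ‖X.c y‖ ≤ ∑ i : Fin N, X.A := by
          refine (norm_sum_le _ _).trans (Finset.sum_le_sum fun i _ => ?_)
          refine (ContinuousLinearMap.le_opNorm₂ _ _ _).trans ?_
          rw [hsingle, mul_one, mul_one]
          exact X.D2Gb _ (hmem y hy)
      _ = N * X.A := by simp
      _ ≤ _ := mul_le_mul_of_nonneg_left hAA (by positivity)
  · intro y hy y' hy' i
    have h1 := X.DGlip _ (hmem y hy) _ (hmem y' hy')
    have h2 := X.Hlip y (hsub hy) y' (hsub hy')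
    calc ‖X.g i y - X.g i y'‖ ≤ X.A * ‖X.H y - X.H y'‖ :=
          sq_norm_single_le (fderiv ℝ X.G (X.H y) - fderiv ℝ X.G (X.H y')) h1 i
      _ ≤ X.A * (X.A * ‖y - y'‖) := mul_le_mul_of_nonneg_left h2 (by linarith)
      _ = 1 * (X.A ^ 2 * ‖y - y'‖) := by ring
      _ ≤ N * (X.A ^ 2 * ‖y - y'‖) := mul_le_mul_of_nonneg_right hN' (by positivity)
      _ = _ := by ring
  · intro y hy y' hy'
    have h1 := X.D2Glip _ (hmem y hy) _ (hmem y' hy')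
    have h2 := X.Hlip y (hsub hy) y' (hsub hy')
    have h3 : ‖X.c y - X.c y'‖ ≤ ∑ i : Fin N, X.A * ‖X.H y - X.H y'‖ := by
      unfold Chart.c
      rw [← Finset.sum_sub_distrib]
      refine (norm_sum_le _ _).trans (Finset.sum_le_sum fun i _ => ?_)
      have := (fderiv ℝ (fderiv ℝ X.G) (X.H y) - fderiv ℝ (fderiv ℝ X.G) (X.H y')).le_opNorm₂
        (EuclideanSpace.single i (1:ℝ)) (EuclideanSpace.single i (1:ℝ))
      rw [hsingle, mul_one, mul_one] at this
      exact this.trans h1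
    calc _ ≤ _ := h3
      _ = N * (X.A * ‖X.H y - X.H y'‖) := by simp
      _ ≤ N * (X.A * (X.A * ‖y - y'‖)) := by gcongr
      _ = _ := by ring
  · intro y hy
    have h1 : inner ℝ ν y = inner ℝ ν (y - X.G X.x0) + inner ℝ ν (X.G X.x0) := by
      rw [inner_sub_right]; ring
    have h2 := real_inner_le_norm ν (y - X.G X.x0)
    rw [hν, one_mul] at h2
    linarith [hy.1, X.hρ4]
  · intro y s v M K hs hs1 hsub' hM hK hv hvM hvK
    refine (hge y s v M K hs hs1 (hsub'.trans hsub) hM hK hv hvM hvK).trans ?_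
    exact mul_le_mul_of_nonneg_right (by linarith) (by positivity)
  · intro y s v M K hs hs1 hsub' hM hK hv hvM hvK
    refine (hhe y s v M K hs hs1 (hsub'.trans hsub) hM hK hv hvM hvK).trans ?_
    exact mul_le_mul_of_nonneg_right (by linarith) (by positivity)

end chartdata

/-! ### Local estimates on a `C³` domain -/

section localest
variable {N : ℕ}

/-- Functions on `Ω` to which the regularity theory is applied: `C²` inside, continuous up to the
boundary with zero boundary values, bounded by `M0`, and with a Laplacian which is bounded by `K0`
and is controlled by the function itself. -/
structure Good (Ω : Set (Euc N)) (M0 K0 : ℝ) (ψ : Euc N → ℝ) : Prop where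
  cont : ContinuousOn ψ (closure Ω)
  cd : ∀ x ∈ Ω, ContDiffAt ℝ 2 ψ x
  zero : ∀ x ∈ frontier Ω, ψ x = 0
  bd : ∀ x ∈ Ω, |ψ x| ≤ M0
  lb : ∀ x ∈ Ω, |lap ψ x| ≤ K0
  ll : ∀ x ∈ Ω, ∀ x' ∈ Ω, |lap ψ x - lap ψ x'| ≤ K0 * |ψ x - ψ x'|

/-- In straightened coordinates a function of class `Good` is a solution of the model problem. -/
lemma Good.lsol {Ω : Set (Euc N)} (hop : IsOpen Ω) {M0 K0 : ℝ} {ψ : Euc N → ℝ}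
    (hψ : Good Ω M0 K0 ψ) (X : Chart N) (D : LocData N) (hg : D.g = X.g) (hc : D.c = X.c)
    (hy : D.y0 = X.G X.x0) (hρ : D.ρ = X.ρ)
    (hΩ : ∀ x ∈ Metric.ball X.x0 X.δ, (x ∈ Ω ↔ 0 < inner ℝ D.ν (X.G x))) :
    LSol D M0 K0 (fun y => ψ (X.H y)) := by
  have hball : ∀ y ∈ hb D.ν D.y0 D.ρ, y ∈ Metric.ball (X.G X.x0) X.ρ := fun y h => by
    rw [Metric.mem_ball, dist_eq_norm, ← hy, ← hρ]; exact h.1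
  have hmem : ∀ y ∈ hb D.ν D.y0 D.ρ, X.H y ∈ Ω := fun y h => by
    rw [hΩ _ (X.half (X.mem y (hball y h))), X.inv2 y (hball y h)]
    exact h.2
  have hcd : ∀ y ∈ hb D.ν D.y0 D.ρ, ContDiffAt ℝ 2 (fun y => ψ (X.H y)) y := fun y h =>
    ContDiffAt.comp y (hψ.cd _ (hmem y h)) (X.cH y (hball y h))
  have hL : ∀ y ∈ hb D.ν D.y0 D.ρ, Lop D.g D.c (fun y => ψ (X.H y)) y = lap ψ (X.H y) := by
    intro y h
    have hx := X.half (X.mem y (hball y h))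
    have h1 := X.Lop_G (v := fun y => ψ (X.H y)) hx
      (by rw [X.inv2 y (hball y h)]; exact hcd y h)
    rw [X.inv2 y (hball y h)] at h1
    rw [hg, hc, h1, lap_eq_D2 (hψ.cd _ (hmem y h)), lap_eq_D2]
    · have e : (fun z => ψ (X.H (X.G z))) =ᶠ[𝓝 (X.H y)] ψ := by
        filter_upwards [Metric.isOpen_ball.mem_nhds hx] with z hz
        rw [X.inv1 z hz]
      have : D2 (fun z => ψ (X.H (X.G z))) (X.H y) = D2 ψ (X.H y) := e.fderiv.fderiv_eq
      simp only [this]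
    · refine ContDiffAt.comp (X.H y) (g := fun y => ψ (X.H y)) ?_ (X.cG2 _)
      rw [X.inv2 y (hball y h)]; exact hcd y h
  refine ⟨⟨hcd, fun y h => hψ.bd _ (hmem y h), ?_, fun y h => ?_⟩, fun y h y' h' => ?_⟩
  · intro ε hε
    -- on the compact set where `|ψ| ≥ ε` the height `⟨ν, G x⟩` has a positive minimum
    set S := closure Ω ∩ Metric.closedBall X.x0 (X.δ / 2) ∩ {x | ε ≤ |ψ x|} with hS
    have hcl : IsClosed (closure Ω ∩ Metric.closedBall X.x0 (X.δ / 2)) :=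
      isClosed_closure.inter Metric.isClosed_closedBall
    have hSc : IsCompact S := by
      refine (isCompact_closedBall X.x0 (X.δ / 2)).of_isClosed_subset ?_ fun x hx => hx.1.2
      have : ContinuousOn (fun x => |ψ x|) (closure Ω ∩ Metric.closedBall X.x0 (X.δ / 2)) :=
        (hψ.cont.mono inter_subset_left).abs
      exact this.preimage_isClosed_of_isClosed hcl isClosed_Ici
    have hpos : ∀ x ∈ S, 0 < inner ℝ D.ν (X.G x) := by
      intro x hx
      have hxΩ : x ∈ Ω := by
        by_contra hcon
        have : x ∈ frontier Ω := by rw [hop.frontier_eq]; exact ⟨hx.1.1, hcon⟩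
        have h2 : ε ≤ |ψ x| := hx.2
        rw [hψ.zero x this, abs_zero] at h2
        linarith
      refine (hΩ x ?_).1 hxΩ
      exact Metric.closedBall_subset_ball (by linarith [X.hδ]) hx.1.2
    have hfin : ∀ y ∈ hb D.ν D.y0 D.ρ, ε < |ψ (X.H y)| → X.H y ∈ S := fun y h hlt =>
      ⟨⟨subset_closure (hmem y h), Metric.ball_subset_closedBall (X.mem y (hball y h))⟩, hlt.le⟩
    rcases S.eq_empty_or_nonempty with he | hne
    · refine ⟨1, one_pos, fun y h _ => ?_⟩
      by_contra hcon
      push Not at hcon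
      have := hfin y h hcon
      rw [he] at this
      exact this
    · obtain ⟨x1, hx1, hmin⟩ := hSc.exists_isMinOn hne
        (continuous_const.inner X.cG.continuous : Continuous fun x => inner ℝ D.ν (X.G x)).continuousOn
      refine ⟨_, hpos x1 hx1, fun y h hlt => ?_⟩
      by_contra hcon
      push Not at hcon
      have h1 : inner ℝ D.ν (X.G x1) ≤ inner ℝ D.ν (X.G (X.H y)) := hmin (hfin y h hcon)
      rw [X.inv2 y (hball y h)] at h1
      linarith
  · show |Lop D.g D.c (fun y => ψ (X.H y)) y| ≤ K0
    rw [hL y h]; exact hψ.lb _ (hmem y h)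
  · rw [hL y h, hL y' h']; exact hψ.ll _ (hmem y h) _ (hmem y' h')

set_option maxHeartbeats 1000000 in
/-- Uniform `C^{2,r}` bounds near a point of the closure of a `C³` domain. -/
lemma local_est {Ω : Set (Euc N)} (hN : 0 < N) (hΩ : IsC3Domain Ω) {x0 : Euc N}
    (hx0 : x0 ∈ closure Ω) {M0 K0 r : ℝ} (hM0 : 0 < M0) (hK0 : 0 ≤ K0) (hr0 : 0 < r) (hr1 : r < 1) :
    ∃ C > 0, ∃ ε > 0, ∀ ψ, Good Ω M0 K0 ψ →
      (∀ x ∈ Ω ∩ Metric.ball x0 ε, ‖fderiv ℝ ψ x‖ ≤ C ∧ ‖D2 ψ x‖ ≤ C) ∧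
      ∀ x ∈ Ω ∩ Metric.ball x0 ε, ∀ x' ∈ Ω ∩ Metric.ball x0 ε,
        ‖D2 ψ x - D2 ψ x'‖ ≤ C * ‖x - x'‖ ^ r := by
  obtain ⟨G, ν, e, hG, hν, he, hh, hev⟩ := straighten hN hΩ hx0
  obtain ⟨X, rfl, rfl, hXU⟩ := chart_exists hG e he hev
  obtain ⟨D, hg, hc, rfl, hy, hρ⟩ := X.locData hN hν hh
  obtain ⟨C, hC, s, hs, hsρ, hreg⟩ := D.local_reg hM0 hK0 hr1
  have hA := X.hA
  have hA0 : 0 < X.A := by linarith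
  have hδ := X.hδ
  set ε := min (X.δ / 2) (s / X.A) with hε
  have hε0 : 0 < ε := by positivity
  have hεδ : ε ≤ X.δ / 2 := min_le_left _ _
  have hlsol := fun ψ (hψ : Good Ω M0 K0 ψ) =>
    hψ.lsol hΩ.1 X D hg hc hy hρ (fun x hx => hXU hx)
  have hb1 : ∀ x ∈ Metric.ball X.x0 ε, x ∈ Metric.ball X.x0 X.δ := fun x hx =>
    Metric.ball_subset_ball (by linarith) hx
  have hmem : ∀ x ∈ Ω ∩ Metric.ball X.x0 ε, X.G x ∈ hb D.ν D.y0 s := by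
    intro x hx
    refine ⟨?_, (hXU (hb1 x hx.2)).1 hx.1⟩
    rw [hy]
    refine (X.Glip x (hb1 x hx.2) _ (Metric.mem_ball_self hδ)).trans_lt ?_
    have h1 := hx.2
    rw [Metric.mem_ball, dist_eq_norm] at h1
    calc X.A * ‖x - X.x0‖ < X.A * (s / X.A) :=
          mul_lt_mul_of_pos_left (h1.trans_le (min_le_right _ _)) hA0
      _ = s := by field_simp
  refine ⟨C * X.A ^ 3 + 4 * C * X.A ^ 3, by positivity, ε, hε0, fun ψ hψ => ?_⟩
  obtain ⟨hbd, hhol⟩ := hreg _ (hlsol ψ hψ)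
  set w : Euc N → ℝ := fun y => ψ (X.H y) with hw
  have hwc : ∀ x ∈ Ω ∩ Metric.ball X.x0 ε, ContDiffAt ℝ 2 w (X.G x) := fun x hx =>
    (hlsol ψ hψ).adm.cd _ (hb_mono _ _ hsρ (hmem x hx))
  have heq : ∀ x ∈ Ω ∩ Metric.ball X.x0 ε, (fun z => w (X.G z)) =ᶠ[𝓝 x] ψ := by
    intro x hx
    filter_upwards [Metric.isOpen_ball.mem_nhds (hb1 x hx.2)] with z hz
    show ψ (X.H (X.G z)) = _
    rw [X.inv1 z hz]
  have f1 : ∀ x ∈ Ω ∩ Metric.ball X.x0 ε, ∀ a,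
      fderiv ℝ ψ x a = fderiv ℝ w (X.G x) (fderiv ℝ X.G x a) := fun x hx a => by
    rw [← fderiv_comp_G (hwc x hx) (X.cG2 x), (heq x hx).fderiv_eq]
  have f2 : ∀ x ∈ Ω ∩ Metric.ball X.x0 ε, ∀ a b,
      D2 ψ x a b = D2 w (X.G x) (fderiv ℝ X.G x a) (fderiv ℝ X.G x b)
      + fderiv ℝ w (X.G x) (fderiv ℝ (fderiv ℝ X.G) x a b) := fun x hx a b => by
    rw [← D2_comp (hwc x hx) (X.cG2 x)]
    have : D2 (fun z => w (X.G z)) x = D2 ψ x := (heq x hx).fderiv.fderiv_eq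
    rw [this]
  have n1 : ∀ x ∈ Ω ∩ Metric.ball X.x0 ε, ∀ a, ‖fderiv ℝ X.G x a‖ ≤ X.A * ‖a‖ := fun x hx a =>
    ((fderiv ℝ X.G x).le_opNorm a).trans
      (mul_le_mul_of_nonneg_right (X.DGb x (hb1 x hx.2)) (norm_nonneg _))
  have n2 : ∀ x ∈ Ω ∩ Metric.ball X.x0 ε, ∀ a b,
      ‖fderiv ℝ (fderiv ℝ X.G) x a b‖ ≤ X.A * ‖a‖ * ‖b‖ := fun x hx a b =>
    (ContinuousLinearMap.le_opNorm₂ _ _ _).trans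
      (mul_le_mul_of_nonneg_right (mul_le_mul_of_nonneg_right (X.D2Gb x (hb1 x hx.2))
        (norm_nonneg _)) (norm_nonneg _))
  have bil : ∀ (T : Euc N →L[ℝ] Euc N →L[ℝ] ℝ) {t α β : ℝ} {a b : Euc N}, ‖T‖ ≤ t → ‖a‖ ≤ α →
      ‖b‖ ≤ β → ‖T a b‖ ≤ t * α * β := fun T t α β a b h1 h2 h3 => by
    have h0 : 0 ≤ t := (T.opNorm_nonneg).trans h1
    have h4 : 0 ≤ α := (norm_nonneg _).trans h2
    exact (T.le_opNorm₂ a b).trans (mul_le_mul (mul_le_mul h1 h2 (norm_nonneg _) h0) h3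
      (norm_nonneg _) (mul_nonneg h0 h4))
  have lin : ∀ (T : Euc N →L[ℝ] ℝ) {t α : ℝ} {a : Euc N}, ‖T‖ ≤ t → ‖a‖ ≤ α →
      ‖T a‖ ≤ t * α := fun T t α a h1 h2 =>
    (T.le_opNorm a).trans (mul_le_mul h1 h2 (norm_nonneg _) ((norm_nonneg _).trans h1))
  have p1 : X.A ≤ X.A ^ 3 := by
    have : 1 ≤ X.A ^ 2 := by nlinarith
    nlinarith
  have p2 : X.A ^ 2 ≤ X.A ^ 3 := by
    have : 1 ≤ X.A ^ 2 := by nlinarith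
    nlinarith
  refine ⟨fun x hx => ⟨?_, ?_⟩, fun x hx x' hx' => ?_⟩
  · refine ContinuousLinearMap.opNorm_le_bound _ (by positivity) fun a => ?_
    rw [f1 x hx]
    refine (lin _ (hbd _ (hmem x hx)).1 (n1 x hx a)).trans ?_
    have h1 : C * X.A ≤ C * X.A ^ 3 + 4 * C * X.A ^ 3 := by nlinarith
    calc C * (X.A * ‖a‖) = C * X.A * ‖a‖ := by ring
      _ ≤ _ := mul_le_mul_of_nonneg_right h1 (norm_nonneg _)
  · refine ContinuousLinearMap.opNorm_le_bound₂ _ (by positivity) fun a b => ?_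
    rw [f2 x hx]
    refine (norm_add_le _ _).trans ((add_le_add (bil _ (hbd _ (hmem x hx)).2 (n1 x hx a)
      (n1 x hx b)) (lin _ (hbd _ (hmem x hx)).1 (n2 x hx a b))).trans ?_)
    have h1 : C * X.A ^ 2 + C * X.A ≤ C * X.A ^ 3 + 4 * C * X.A ^ 3 := by nlinarith
    calc _ = (C * X.A ^ 2 + C * X.A) * (‖a‖ * ‖b‖) := by ring
      _ ≤ (C * X.A ^ 3 + 4 * C * X.A ^ 3) * (‖a‖ * ‖b‖) :=
        mul_le_mul_of_nonneg_right h1 (by positivity)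
      _ = _ := by ring
  · rcases eq_or_ne x x' with rfl | hne
    · rw [bil_sub_self]; positivity
    have hGne : X.G x' ≠ X.G x := fun h => hne (by
      rw [← X.inv1 x (hb1 x hx.2), ← h, X.inv1 x' (hb1 x' hx'.2)])
    set d := ‖x - x'‖ with hd
    have hd0 : 0 < d := norm_pos_iff.2 (sub_ne_zero.2 hne)
    have hd1 : d ≤ 1 := by
      have h1 := hx.2
      have h2 := hx'.2
      rw [Metric.mem_ball, dist_eq_norm] at h1 h2
      have h3 : ‖x - x'‖ ≤ ‖x - X.x0‖ + ‖x' - X.x0‖ := by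
        calc ‖x - x'‖ = ‖(x - X.x0) - (x' - X.x0)‖ := by congr 1; abel
          _ ≤ _ := norm_sub_le _ _
      linarith [X.hδ1]
    have hdr : d ≤ d ^ r := by
      calc d = d ^ (1:ℝ) := (Real.rpow_one d).symm
        _ ≤ d ^ r := Real.rpow_le_rpow_of_exponent_ge hd0 hd1 hr1.le
    have hdr0 : 0 < d ^ r := Real.rpow_pos_of_pos hd0 r
    have hGd : ‖X.G x - X.G x'‖ ≤ X.A * d := X.Glip x (hb1 x hx.2) x' (hb1 x' hx'.2)
    have hHol : ‖D2 w (X.G x) - D2 w (X.G x')‖ ≤ C * (X.A * d ^ r) := by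
      refine (hhol _ (hmem x' hx') _ (hmem x hx) hGne).trans ?_
      refine mul_le_mul_of_nonneg_left ?_ hC.le
      calc ‖X.G x - X.G x'‖ ^ r ≤ (X.A * d) ^ r :=
            Real.rpow_le_rpow (norm_nonneg _) hGd hr0.le
        _ = X.A ^ r * d ^ r := Real.mul_rpow hA0.le hd0.le
        _ ≤ X.A * d ^ r := by
          refine mul_le_mul_of_nonneg_right ?_ hdr0.le
          calc X.A ^ r ≤ X.A ^ (1:ℝ) := Real.rpow_le_rpow_of_exponent_le hA hr1.le
            _ = X.A := Real.rpow_one _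
    have hLip : ‖fderiv ℝ w (X.G x) - fderiv ℝ w (X.G x')‖ ≤ C * (X.A * d) := by
      refine (lip_of_D2 (convex_hb D.ν D.y0 s) (v := w)
        (fun y hy => (hlsol ψ hψ).adm.cd _ (hb_mono _ _ hsρ hy))
        (fun y hy => (hbd y hy).2) (hmem x' hx') (hmem x hx)).trans ?_
      exact mul_le_mul_of_nonneg_left hGd hC.le
    refine ContinuousLinearMap.opNorm_le_bound₂ _ (by positivity) fun a b => ?_
    have n3 : ∀ a, ‖fderiv ℝ X.G x a - fderiv ℝ X.G x' a‖ ≤ X.A * d * ‖a‖ := fun a =>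
      ((fderiv ℝ X.G x - fderiv ℝ X.G x').le_opNorm a).trans
      (mul_le_mul_of_nonneg_right (X.DGlip x (hb1 x hx.2) x' (hb1 x' hx'.2)) (norm_nonneg _))
    have n4 : ‖fderiv ℝ (fderiv ℝ X.G) x a b - fderiv ℝ (fderiv ℝ X.G) x' a b‖ ≤
        X.A * d * ‖a‖ * ‖b‖ :=
      ((fderiv ℝ (fderiv ℝ X.G) x - fderiv ℝ (fderiv ℝ X.G) x').le_opNorm₂ a b).trans
        (mul_le_mul_of_nonneg_right (mul_le_mul_of_nonneg_right
          (X.D2Glip x (hb1 x hx.2) x' (hb1 x' hx'.2)) (norm_nonneg _)) (norm_nonneg _))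
    have key : (D2 ψ x - D2 ψ x') a b =
        (D2 w (X.G x) - D2 w (X.G x')) (fderiv ℝ X.G x a) (fderiv ℝ X.G x b)
        + D2 w (X.G x') (fderiv ℝ X.G x a - fderiv ℝ X.G x' a) (fderiv ℝ X.G x b)
        + D2 w (X.G x') (fderiv ℝ X.G x' a) (fderiv ℝ X.G x b - fderiv ℝ X.G x' b)
        + (fderiv ℝ w (X.G x) - fderiv ℝ w (X.G x')) (fderiv ℝ (fderiv ℝ X.G) x a b)
        + fderiv ℝ w (X.G x') (fderiv ℝ (fderiv ℝ X.G) x a b - fderiv ℝ (fderiv ℝ X.G) x' a b) := by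
      have : (D2 ψ x - D2 ψ x') a b = D2 ψ x a b - D2 ψ x' a b := rfl
      rw [this, f2 x hx, f2 x' hx']
      simp only [map_sub, sub_apply]
      ring
    rw [key]
    have q1 := bil _ hHol (n1 x hx a) (n1 x hx b)
    have q2 := bil _ (hbd _ (hmem x' hx')).2 (n3 a) (n1 x hx b)
    have q3 := bil _ (hbd _ (hmem x' hx')).2 (n1 x' hx' a) (n3 b)
    have q4 := lin _ hLip (n2 x hx a b)
    have q5 := lin _ (hbd _ (hmem x' hx')).1 n4
    refine (norm_add_le _ _).trans ((add_le_add ((norm_add_le _ _).trans (add_le_add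
      ((norm_add_le _ _).trans (add_le_add ((norm_add_le _ _).trans (add_le_add q1 q2)) q3))
      q4)) q5).trans ?_)
    have t : 0 ≤ ‖a‖ * ‖b‖ := by positivity
    have z1 : C * X.A ^ 2 * d ≤ C * X.A ^ 3 * d ^ r :=
      mul_le_mul (mul_le_mul_of_nonneg_left p2 hC.le) hdr hd0.le (by positivity)
    have z2 : C * X.A * d ≤ C * X.A ^ 3 * d ^ r :=
      mul_le_mul (mul_le_mul_of_nonneg_left p1 hC.le) hdr hd0.le (by positivity)
    calc _ = (C * X.A ^ 3 * d ^ r + 3 * (C * X.A ^ 2 * d) + C * X.A * d) * (‖a‖ * ‖b‖) := by ring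
      _ ≤ (C * X.A ^ 3 * d ^ r + 4 * (C * X.A ^ 3 * d ^ r)) * (‖a‖ * ‖b‖) :=
        mul_le_mul_of_nonneg_right (by linarith) t
      _ = _ := by ring

end localest

/-! ### Global estimates on a `C³` domain -/

section globalest
variable {N : ℕ}

/-- Uniform global `C^{2,r}` bounds on a `C³` domain. -/
lemma global_est {Ω : Set (Euc N)} (hN : 0 < N) (hΩ : IsC3Domain Ω)
    {M0 K0 r : ℝ} (hM0 : 0 < M0) (hK0 : 0 ≤ K0) (hr0 : 0 < r) (hr1 : r < 1) :
    ∃ C > 0, ∀ ψ, Good Ω M0 K0 ψ →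
      (∀ x ∈ Ω, ‖fderiv ℝ ψ x‖ ≤ C ∧ ‖D2 ψ x‖ ≤ C) ∧
      ∀ x ∈ Ω, ∀ x' ∈ Ω, ‖D2 ψ x - D2 ψ x'‖ ≤ C * ‖x - x'‖ ^ r := by
  have hcomp : IsCompact (closure Ω) := hΩ.2.2.1.isCompact_closure
  have hloc := fun x0 : closure Ω => local_est hN hΩ x0.2 hM0 hK0 hr0 hr1
  choose C hC ε hε h using hloc
  obtain ⟨T, hT⟩ := hcomp.elim_finite_subcover (fun x : closure Ω => Metric.ball (x : Euc N) (ε x))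
    (fun x => Metric.isOpen_ball) (fun x hx => mem_iUnion.2 ⟨⟨x, hx⟩, Metric.mem_ball_self (hε _)⟩)
  obtain ⟨δ, hδ, hL⟩ := lebesgue_number_lemma_of_metric
    (c := fun t : T => Metric.ball ((t : closure Ω) : Euc N) (ε t)) hcomp
    (fun t => Metric.isOpen_ball) (fun x hx => by
      obtain ⟨t, ht⟩ := mem_iUnion.1 (hT hx)
      obtain ⟨ht, hx⟩ := mem_iUnion.1 ht
      exact mem_iUnion.2 ⟨⟨t, ht⟩, hx⟩)
  set S := 1 + ∑ t ∈ T, C t with hS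
  have hCS : ∀ t ∈ T, C t ≤ S := fun t ht => by
    have := Finset.single_le_sum (f := C) (fun i _ => (hC i).le) ht
    linarith
  have hS1 : 1 ≤ S := by
    have := Finset.sum_nonneg (s := T) (f := C) (fun i _ => (hC i).le)
    linarith
  have hδr : 0 < δ ^ r := Real.rpow_pos_of_pos hδ r
  refine ⟨S + 2 * S / δ ^ r, by positivity, fun ψ hψ => ?_⟩
  have hpp : 0 ≤ 2 * S / δ ^ r := by positivity
  have hbd : ∀ x ∈ Ω, ‖fderiv ℝ ψ x‖ ≤ S ∧ ‖D2 ψ x‖ ≤ S := by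
    intro x hx
    obtain ⟨⟨t, ht⟩, hsub⟩ := hL x (subset_closure hx)
    obtain ⟨h1, h2⟩ := (h t ψ hψ).1 x ⟨hx, hsub (Metric.mem_ball_self hδ)⟩
    exact ⟨h1.trans (hCS t ht), h2.trans (hCS t ht)⟩
  refine ⟨fun x hx => ⟨(hbd x hx).1.trans (by linarith), (hbd x hx).2.trans (by linarith)⟩, ?_⟩
  intro x hx x' hx'
  have hn : 0 ≤ ‖x - x'‖ ^ r := Real.rpow_nonneg (norm_nonneg _) r
  by_cases hd : ‖x - x'‖ < δ
  · obtain ⟨⟨t, ht⟩, hsub⟩ := hL x (subset_closure hx)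
    have hx2 : x' ∈ Metric.ball x δ := by
      rw [Metric.mem_ball, dist_comm, dist_eq_norm]; exact hd
    refine ((h t ψ hψ).2 x ⟨hx, hsub (Metric.mem_ball_self hδ)⟩ x' ⟨hx', hsub hx2⟩).trans ?_
    exact mul_le_mul_of_nonneg_right ((hCS t ht).trans (by linarith)) hn
  · push Not at hd
    refine (bil_sub_le _ _).trans ?_
    have h1 : δ ^ r ≤ ‖x - x'‖ ^ r := Real.rpow_le_rpow hδ.le hd hr0.le
    have h2 : 2 * S ≤ 2 * S / δ ^ r * ‖x - x'‖ ^ r := by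
      calc 2 * S = 2 * S / δ ^ r * δ ^ r := by field_simp
        _ ≤ _ := mul_le_mul_of_nonneg_left h1 hpp
    have h3 := (hbd x hx).2
    have h4 := (hbd x' hx').2
    have h5 : 0 ≤ S * ‖x - x'‖ ^ r := by positivity
    linarith

lemma norm_iter_le (L : Euc N →L[ℝ] Euc N →L[ℝ] ℝ) {C : ℝ} (hL : ‖L‖ ≤ C)
    (T : ContinuousMultilinearMap ℝ (fun _ : Fin 2 => Euc N) ℝ) (h : ∀ m, T m = L (m 0) (m 1)) :
    ‖T‖ ≤ C := by
  have h0 : 0 ≤ C := (L.opNorm_nonneg).trans hL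
  refine T.opNorm_le_bound h0 fun m => ?_
  rw [h, Fin.prod_univ_two, ← mul_assoc]
  exact (L.le_opNorm₂ _ _).trans (mul_le_mul_of_nonneg_right (mul_le_mul_of_nonneg_right hL
    (norm_nonneg _)) (norm_nonneg _))

lemma norm_iter_two {f : Euc N → ℝ} {x : Euc N} {C : ℝ} (h : ‖D2 f x‖ ≤ C) :
    ‖iteratedFDeriv ℝ 2 f x‖ ≤ C :=
  norm_iter_le _ h _ fun m => iteratedFDeriv_two_apply f x m

lemma norm_iter_two_sub {f : Euc N → ℝ} {x y : Euc N} {C : ℝ} (h : ‖D2 f x - D2 f y‖ ≤ C) :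
    ‖iteratedFDeriv ℝ 2 f x - iteratedFDeriv ℝ 2 f y‖ ≤ C :=
  norm_iter_le _ h _ fun m => by
    have : (iteratedFDeriv ℝ 2 f x - iteratedFDeriv ℝ 2 f y) m =
      iteratedFDeriv ℝ 2 f x m - iteratedFDeriv ℝ 2 f y m := rfl
    rw [this, iteratedFDeriv_two_apply, iteratedFDeriv_two_apply]
    rfl

end globalest

/-! ### A mean value inequality -/

section meanvalue
variable {N : ℕ}

lemma hasDerivAt_posPow (n : ℕ) (t : ℝ) :
    HasDerivAt (fun t : ℝ => max t 0 ^ (n + 2)) ((n + 2) * max t 0 ^ (n + 1)) t := by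
  rcases lt_trichotomy t 0 with ht | rfl | ht
  · have h : (fun t : ℝ => max t 0 ^ (n + 2)) =ᶠ[𝓝 t] fun _ => 0 := by
      filter_upwards [gt_mem_nhds ht] with s hs
      rw [max_eq_right hs.le, zero_pow (by omega)]
    refine ((hasDerivAt_const t (0:ℝ)).congr_of_eventuallyEq h).congr_deriv ?_
    rw [max_eq_right ht.le, zero_pow (by omega), mul_zero]
  · rw [hasDerivAt_iff_tendsto_slope]
    have hc : Tendsto (fun t : ℝ => max t 0 ^ (n + 1)) (𝓝[≠] 0) (𝓝 ((n + 2) * max 0 0 ^ (n + 1))) := by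
      have h1 : Continuous fun t : ℝ => max t 0 ^ (n + 1) := by fun_prop
      have h2 := h1.tendsto 0
      simp only [max_self] at h2 ⊢
      rw [zero_pow (by omega), mul_zero]
      rw [zero_pow (by omega)] at h2
      exact h2.mono_left nhdsWithin_le_nhds
    refine hc.congr' ?_
    filter_upwards [self_mem_nhdsWithin] with s hs
    rw [slope_def_field]
    have hs' : s ≠ 0 := hs
    rw [max_self, zero_pow (by omega), sub_zero, sub_zero, eq_div_iff hs']
    rcases le_total s 0 with h | h
    · rw [max_eq_right h, zero_pow (by omega), zero_pow (by omega), zero_mul]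
    · rw [max_eq_left h]; ring
  · have h : (fun t : ℝ => max t 0 ^ (n + 2)) =ᶠ[𝓝 t] fun t => t ^ (n + 2) := by
      filter_upwards [lt_mem_nhds ht] with s hs
      rw [max_eq_left hs.le]
    refine ((hasDerivAt_pow (n + 2) t).congr_of_eventuallyEq h).congr_deriv ?_
    rw [max_eq_left ht.le]
    push_cast
    congr 1

lemma contDiff_posPow_one (n : ℕ) : ContDiff ℝ 1 (fun t : ℝ => max t 0 ^ (n + 2)) := by
  rw [contDiff_one_iff_deriv]
  refine ⟨fun t => (hasDerivAt_posPow n t).differentiableAt, ?_⟩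
  have : deriv (fun t : ℝ => max t 0 ^ (n + 2)) = fun t : ℝ => ((n : ℝ) + 2) * max t 0 ^ (n + 1) :=
    funext fun t => (hasDerivAt_posPow n t).deriv
  rw [this]
  fun_prop

lemma contDiff_posPow_two (n : ℕ) : ContDiff ℝ 2 (fun t : ℝ => max t 0 ^ (n + 3)) := by
  have h2 : (2 : WithTop ℕ∞) = 1 + 1 := by norm_num
  rw [h2, contDiff_succ_iff_deriv]
  refine ⟨fun t => (hasDerivAt_posPow (n + 1) t).differentiableAt, by simp, ?_⟩
  have : deriv (fun t : ℝ => max t 0 ^ (n + 3)) =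
      fun t => ((n + 1 : ℕ) + 2 : ℝ) * max t 0 ^ (n + 2) :=
    funext fun t => (hasDerivAt_posPow (n + 1) t).deriv
  rw [this]
  exact contDiff_const.mul (contDiff_posPow_one n)

/-- The kernel `(1 - |y|²)₊³`. -/
def kerG (y : Euc N) : ℝ := max (1 - ‖y‖ ^ 2) 0 ^ 3

/-- The kernel `6 (1 - |y|²)₊²`, chosen so that `∇ kerG = - kerg y · y`. -/
def kerg (y : Euc N) : ℝ := 6 * max (1 - ‖y‖ ^ 2) 0 ^ 2

lemma kerG_cont : Continuous (kerG : Euc N → ℝ) := by unfold kerG; fun_prop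
lemma kerg_cont : Continuous (kerg : Euc N → ℝ) := by unfold kerg; fun_prop
lemma kerG_nonneg (y : Euc N) : 0 ≤ kerG y := by unfold kerG; positivity
lemma kerg_nonneg (y : Euc N) : 0 ≤ kerg y := by unfold kerg; positivity
lemma kerg_le (y : Euc N) : kerg y ≤ 6 := by
  unfold kerg
  have h1 : max (1 - ‖y‖ ^ 2) 0 ≤ 1 := max_le (by nlinarith [sq_nonneg ‖y‖]) zero_le_one
  have h2 : (0:ℝ) ≤ max (1 - ‖y‖ ^ 2) 0 := le_max_right _ _
  nlinarith
lemma kerG_zero {y : Euc N} (h : 1 < ‖y‖) : kerG y = 0 := by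
  unfold kerG; rw [max_eq_right (by nlinarith)]; simp
lemma kerg_zero {y : Euc N} (h : 1 < ‖y‖) : kerg y = 0 := by
  unfold kerg; rw [max_eq_right (by nlinarith)]; simp
lemma kerG_supp : HasCompactSupport (kerG : Euc N → ℝ) :=
  HasCompactSupport.intro (isCompact_closedBall 0 1) fun x hx => kerG_zero (by
    rw [Metric.mem_closedBall, dist_zero_right, not_le] at hx; exact hx)
lemma kerg_supp : HasCompactSupport (kerg : Euc N → ℝ) :=
  HasCompactSupport.intro (isCompact_closedBall 0 1) fun x hx => kerg_zero (by
    rw [Metric.mem_closedBall, dist_zero_right, not_le] at hx; exact hx)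

lemma kerG_fderiv (y : Euc N) : HasFDerivAt (kerG : Euc N → ℝ) (-(kerg y) • innerSL ℝ y) y := by
  have h1 : HasFDerivAt (fun y : Euc N => 1 - ‖y‖ ^ 2) (-(2 • innerSL ℝ y)) y :=
    ((hasStrictFDerivAt_norm_sq y).hasFDerivAt).const_sub 1
  have h2 := (hasDerivAt_posPow 1 (1 - ‖y‖ ^ 2)).comp_hasFDerivAt y h1
  refine HasFDerivAt.congr_fderiv (f := kerG) h2 ?_
  ext v
  simp only [kerg, smul_apply, neg_apply, smul_eq_mul, nsmul_eq_mul]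
  push_cast
  ring

/-- Integrability of a continuous function times a kernel. -/
lemma int_mul_ker {f k : Euc N → ℝ} (hf : Continuous f) (hk : Continuous k)
    (hs : HasCompactSupport k) : Integrable (fun y => f y * k y) :=
  (hf.mul hk).integrable_of_hasCompactSupport hs.mul_left

set_option maxHeartbeats 1000000 in
/-- A mean value inequality: a nonnegative `C²_c` function with Laplacian `≥ -K` is controlled at a
point by its integral.  The weighted mean over a ball of radius `s` has derivative
`s ∫ Δg(x₀ + s y) kerG y dy` in `s`, by integration by parts. -/
lemma mean_value : ∃ c1 > 0, ∃ c2 > 0, ∀ (g : Euc N → ℝ) (K : ℝ), ContDiff ℝ 2 g →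
    HasCompactSupport g → (∀ x, 0 ≤ g x) → 0 ≤ K → (∀ x, -K ≤ lap g x) → ∀ (x0 : Euc N) (R : ℝ),
    0 < R → g x0 ≤ c1 * (R ^ N)⁻¹ * (∫ x, g x) + c2 * K * R ^ 2 := by
  set I := ∫ y : Euc N, kerg y with hI
  set J := ∫ y : Euc N, kerG y with hJ
  have hI0 : 0 < I := by
    refine kerg_cont.integral_pos_of_hasCompactSupport_nonneg_nonzero kerg_supp kerg_nonneg
      (x := 0) ?_
    unfold kerg; simp
  have hJ0 : 0 < J := by
    refine kerG_cont.integral_pos_of_hasCompactSupport_nonneg_nonzero kerG_supp kerG_nonneg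
      (x := 0) ?_
    unfold kerG; simp
  refine ⟨6 / I, by positivity, J / (2 * I), by positivity, ?_⟩
  intro g K hg hgs hg0 hK hlap x0 R hR
  have hg1 : Continuous (fderiv ℝ g) := hg.continuous_fderiv (by norm_num)
  have hD1 : ContDiff ℝ 1 (fderiv ℝ g) := hg.fderiv_right (by norm_num)
  have hD2c : Continuous (D2 g) := hD1.continuous_fderiv (by norm_num)
  obtain ⟨B, hB⟩ := (hgs.fderiv (𝕜 := ℝ)).exists_bound_of_continuous hg1
  have hB0 : 0 ≤ B := (norm_nonneg _).trans (hB 0)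
  have hline : ∀ s : ℝ, Continuous fun y : Euc N => x0 + s • y := fun s => by fun_prop
  set A : ℝ → ℝ := fun s => ∫ y : Euc N, g (x0 + s • y) * kerg y with hA
  have hkb : ∀ y : Euc N, ‖y‖ * kerg y ≤ kerg y := fun y => by
    rcases le_or_gt ‖y‖ 1 with h | h
    · exact mul_le_of_le_one_left (kerg_nonneg y) h
    · rw [kerg_zero h, mul_zero]
  have hAd : ∀ s, HasDerivAt A (∫ y : Euc N, fderiv ℝ g (x0 + s • y) y * kerg y) s := by
    intro s
    refine (hasDerivAt_integral_of_dominated_loc_of_deriv_le (μ := volume)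
      (F := fun (s : ℝ) (y : Euc N) => g (x0 + s • y) * kerg y)
      (F' := fun (s : ℝ) (y : Euc N) => fderiv ℝ g (x0 + s • y) y * kerg y)
      (bound := fun y => B * kerg y) (s := univ) univ_mem ?_ ?_ ?_ ?_ ?_ ?_).2
    · exact Eventually.of_forall fun s =>
        ((hg.continuous.comp (hline s)).mul kerg_cont).aestronglyMeasurable
    · exact int_mul_ker (hg.continuous.comp (hline s)) kerg_cont kerg_supp
    · exact (((hg1.comp (hline s)).clm_apply continuous_id).mul kerg_cont).aestronglyMeasurable
    · refine Eventually.of_forall fun y s _ => ?_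
      rw [norm_mul, Real.norm_of_nonneg (kerg_nonneg y)]
      calc ‖fderiv ℝ g (x0 + s • y) y‖ * kerg y ≤ (B * ‖y‖) * kerg y := by
            refine mul_le_mul_of_nonneg_right ?_ (kerg_nonneg y)
            exact (ContinuousLinearMap.le_opNorm _ _).trans
              (mul_le_mul_of_nonneg_right (hB _) (norm_nonneg _))
        _ = B * (‖y‖ * kerg y) := by ring
        _ ≤ _ := mul_le_mul_of_nonneg_left (hkb y) hB0
    · exact (kerg_cont.integrable_of_hasCompactSupport kerg_supp).const_mul B
    · refine Eventually.of_forall fun y s _ => ?_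
      have hl : HasDerivAt (fun s : ℝ => x0 + s • y) y s := by
        simpa using ((hasDerivAt_id s).smul_const y).const_add x0
      have := (hg.contDiffAt (x := x0 + s • y)).hasFD1.comp_hasDerivAt s hl
      exact this.mul_const _
  -- integration by parts
  have hparts : ∀ s : ℝ, ∫ y : Euc N, fderiv ℝ g (x0 + s • y) y * kerg y =
      ∫ y : Euc N, s * (lap g (x0 + s • y) * kerG y) := by
    intro s
    set e : Fin N → Euc N := fun i => EuclideanSpace.single i 1 with he
    have hfd : ∀ i (y : Euc N), HasFDerivAt (fun y => fderiv ℝ g (x0 + s • y) (e i))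
        ((s • D2 g (x0 + s • y)).flip (e i)) y := fun i y => by
      have h1 : HasFDerivAt (fun y : Euc N => x0 + s • y) (s • ContinuousLinearMap.id ℝ (Euc N)) y :=
        ((hasFDerivAt_id y).const_smul s).const_add x0
      have h2 := (hg.contDiffAt (x := x0 + s • y)).hasFD2.comp y h1
      have h3 := h2.clm_apply (hasFDerivAt_const (e i) y)
      refine h3.congr_fderiv ?_
      ext v
      simp
    have hi : ∀ i, ∫ y : Euc N, fderiv ℝ g (x0 + s • y) (e i) * (kerg y * y i) =
        ∫ y : Euc N, s * D2 g (x0 + s • y) (e i) (e i) * kerG y := by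
      intro i
      have hGd : ∀ y : Euc N, fderiv ℝ (kerG : Euc N → ℝ) y (e i) = -(kerg y * y i) := fun y => by
        rw [(kerG_fderiv y).fderiv]
        simp [he, EuclideanSpace.inner_single_right]
      have hc1 : Continuous fun y : Euc N => fderiv ℝ g (x0 + s • y) (e i) :=
        (hg1.comp (hline s)).clm_apply continuous_const
      have hc2 : Continuous fun y : Euc N => s * D2 g (x0 + s • y) (e i) (e i) :=
        continuous_const.mul (((hD2c.comp (hline s)).clm_apply continuous_const).clm_apply
          continuous_const)
      have hE : ∀ y, fderiv ℝ (fun y => fderiv ℝ g (x0 + s • y) (e i)) y (e i) =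
          s * D2 g (x0 + s • y) (e i) (e i) := fun y => by
        rw [(hfd i y).fderiv]; simp
      have hyi : Continuous fun y : Euc N => y i := by fun_prop
      have := integral_mul_fderiv_eq_neg_fderiv_mul_of_integrable (μ := volume)
        (f := fun y => fderiv ℝ g (x0 + s • y) (e i)) (g := (kerG : Euc N → ℝ)) (v := e i)
        (by simp only [hE]; exact int_mul_ker hc2 kerG_cont kerG_supp)
        (by
          simp only [hGd]
          have h1 := (int_mul_ker (hc1.mul hyi) kerg_cont kerg_supp).neg
          refine h1.congr (Eventually.of_forall fun y => ?_)
          simp only [Pi.neg_apply, Pi.mul_apply]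
          ring)
        (int_mul_ker hc1 kerG_cont kerG_supp)
        (fun y _ => (hfd i y).differentiableAt) (fun y _ => (kerG_fderiv y).differentiableAt)
      simp only [hE, hGd, mul_neg, integral_neg, neg_inj] at this
      exact this
    have hsum : ∀ y : Euc N, fderiv ℝ g (x0 + s • y) y * kerg y =
        ∑ i, fderiv ℝ g (x0 + s • y) (e i) * (kerg y * y i) := fun y => by
      have hx : y = ∑ i, y i • e i := by
        ext j
        simp [he, Finset.sum_apply, Pi.single_apply]
      have h1 : fderiv ℝ g (x0 + s • y) y = ∑ i, y i * fderiv ℝ g (x0 + s • y) (e i) := by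
        conv_lhs => rw [hx]
        rw [map_sum, ← hx]
        simp only [map_smul, smul_eq_mul]
      rw [h1, Finset.sum_mul]
      refine Finset.sum_congr rfl fun i _ => by ring
    have hlapsum : ∀ y : Euc N, s * (lap g (x0 + s • y) * kerG y) =
        ∑ i, s * D2 g (x0 + s • y) (e i) (e i) * kerG y := fun y => by
      rw [lap_eq_D2 hg.contDiffAt, Finset.sum_mul, Finset.mul_sum]
      refine Finset.sum_congr rfl fun i _ => by ring
    simp only [hsum, hlapsum]
    rw [integral_finsetSum, integral_finsetSum]
    · exact Finset.sum_congr rfl fun i _ => hi i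
    · intro i _
      exact int_mul_ker (continuous_const.mul (((hD2c.comp (hline s)).clm_apply
        continuous_const).clm_apply continuous_const)) kerG_cont kerG_supp
    · intro i _
      have hyi : Continuous fun y : Euc N => y i := by fun_prop
      have := int_mul_ker (((hg1.comp (hline s)).clm_apply (continuous_const (y := e i))).mul hyi)
        kerg_cont kerg_supp
      refine this.congr (Eventually.of_forall fun y => ?_)
      simp only [Pi.mul_apply, Function.comp]
      ring
  have hlapc : Continuous (lap g) := by
    have : lap g = fun x => ∑ i, D2 g x (EuclideanSpace.single i 1) (EuclideanSpace.single i 1) :=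
      funext fun x => lap_eq_D2 hg.contDiffAt
    rw [this]
    exact continuous_finsetSum _ fun i _ =>
      (hD2c.clm_apply continuous_const).clm_apply continuous_const
  have hder : ∀ s : ℝ, 0 ≤ s →
      -(K * J) * s ≤ ∫ y : Euc N, fderiv ℝ g (x0 + s • y) y * kerg y := by
    intro s hs
    rw [hparts, integral_const_mul]
    have h1 : -(K * J) = ∫ y : Euc N, (-K) * kerG y := by rw [integral_const_mul]; ring
    rw [h1, mul_comm]
    refine mul_le_mul_of_nonneg_left ?_ hs
    refine integral_mono ((kerG_cont.integrable_of_hasCompactSupport kerG_supp).const_mul _)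
      (int_mul_ker (hlapc.comp (hline s)) kerG_cont kerG_supp) fun y => ?_
    exact mul_le_mul_of_nonneg_right (hlap _) (kerG_nonneg y)
  have hmono : MonotoneOn (fun s => A s + K * J / 2 * s ^ 2) (Icc 0 R) := by
    have hd : ∀ s : ℝ, HasDerivAt (fun s => A s + K * J / 2 * s ^ 2)
        ((∫ y : Euc N, fderiv ℝ g (x0 + s • y) y * kerg y) + K * J * s) s := fun s => by
      refine ((hAd s).add ((hasDerivAt_pow 2 s).const_mul (K * J / 2))).congr_deriv ?_
      push_cast
      ring
    refine monotoneOn_of_deriv_nonneg (convex_Icc 0 R)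
      (fun s _ => (hd s).continuousAt.continuousWithinAt)
      (fun s _ => (hd s).differentiableAt.differentiableWithinAt) fun s hs => ?_
    rw [(hd s).deriv]
    rw [interior_Icc] at hs
    have := hder s hs.1.le
    linarith
  have hcmp := hmono (left_mem_Icc.2 hR.le) (right_mem_Icc.2 hR.le) hR.le
  have hA0 : A 0 = g x0 * I := by
    simp only [hA, zero_smul, add_zero]
    rw [integral_const_mul]
  have hgi : Integrable g := hg.continuous.integrable_of_hasCompactSupport hgs
  have hAR : A R ≤ 6 * ((R ^ N)⁻¹ * ∫ x, g x) := by
    have h1 : ∫ y : Euc N, g (x0 + R • y) = (R ^ N)⁻¹ * ∫ x, g x := by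
      rw [Measure.integral_comp_smul_of_nonneg volume (fun z => g (x0 + z)) R (hR := hR.le)]
      rw [integral_add_left_eq_self g x0, finrank_euclideanSpace_fin, smul_eq_mul]
    rw [← h1, ← integral_const_mul]
    refine integral_mono (int_mul_ker (hg.continuous.comp (hline R)) kerg_cont kerg_supp) ?_ fun y => ?_
    · refine Integrable.const_mul ?_ 6
      have h2 : Integrable fun z => g (x0 + z) := hgi.comp_add_left x0
      exact h2.comp_smul hR.ne'
    · show g (x0 + R • y) * kerg y ≤ 6 * g (x0 + R • y)
      nlinarith [hg0 (x0 + R • y), kerg_le y]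
  simp only [hA0] at hcmp
  have h3 : g x0 * I ≤ 6 * ((R ^ N)⁻¹ * ∫ x, g x) + K * J / 2 * R ^ 2 := by linarith
  have h4 : 6 / I * (R ^ N)⁻¹ * (∫ x, g x) + J / (2 * I) * K * R ^ 2 =
      (6 * ((R ^ N)⁻¹ * ∫ x, g x) + K * J / 2 * R ^ 2) / I := by
    field_simp
  rw [h4, le_div_iff₀ hI0]
  exact h3

end meanvalue

/-! ### Maximum principle and the exponent count -/

section supbound
variable {N : ℕ}

/-- Weak maximum principle with the quadratic barrier `K (R² - |x|²)`. -/
lemma weak_max (hN : 0 < N) {Ω : Set (Euc N)} (hop : IsOpen Ω) {R : ℝ}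
    (hR : ∀ x ∈ closure Ω, ‖x‖ ≤ R) {v : Euc N → ℝ} {K : ℝ} (hK : 0 ≤ K)
    (hc : ContinuousOn v (closure Ω)) (hd : ∀ x ∈ Ω, ContDiffAt ℝ 2 v x)
    (hz : ∀ x ∈ frontier Ω, v x = 0) (hl : ∀ x ∈ Ω, -K ≤ lap v x) :
    ∀ x ∈ Ω, v x ≤ K * R ^ 2 := by
  intro x hx
  have hcpt : IsCompact (closure Ω) :=
    (isCompact_closedBall (0 : Euc N) R).of_isClosed_subset isClosed_closure fun y hy => by
      simpa using hR y hy
  have key : ∀ c, K < c → v x ≤ c * R ^ 2 := by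
    intro c hcK
    have hc0 : 0 < c := by linarith
    obtain ⟨ζ, hζ, hmax⟩ := hcpt.exists_isMaxOn ⟨x, subset_closure hx⟩
      (hc.add (by fun_prop : Continuous fun y : Euc N => c * ‖y‖ ^ 2).continuousOn)
    have hxζ : v x + c * ‖x‖ ^ 2 ≤ v ζ + c * ‖ζ‖ ^ 2 := hmax (subset_closure hx)
    have hζR : ‖ζ‖ ^ 2 ≤ R ^ 2 := pow_le_pow_left₀ (norm_nonneg _) (hR ζ hζ) 2
    by_cases hζΩ : ζ ∈ Ω
    · exfalso
      have hdir : ∀ i : Fin N, D2 v ζ (EuclideanSpace.single i 1) (EuclideanSpace.single i 1)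
          + 2 * c ≤ 0 := by
        intro i
        set w : Euc N := EuclideanSpace.single i 1 with hw
        have hwn : ‖w‖ = 1 := by simp [hw]
        obtain ⟨l1, l2⟩ := line_derivs (hd ζ hζΩ) w
        have hexp : ∀ t : ℝ, ‖ζ + t • w‖ ^ 2 = ‖ζ‖ ^ 2 + 2 * t * inner ℝ ζ w + t ^ 2 := by
          intro t
          rw [norm_add_sq_real, norm_smul, inner_smul_right, hwn, Real.norm_eq_abs, mul_one,
            sq_abs]
          ring
        have hcl : Tendsto (fun t : ℝ => ζ + t • w) (𝓝 0) (𝓝 ζ) := by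
          have : Continuous fun t : ℝ => ζ + t • w := by fun_prop
          simpa using this.tendsto 0
        have hm : IsLocalMax (fun t : ℝ => v (ζ + t • w)
            + c * (‖ζ‖ ^ 2 + 2 * t * inner ℝ ζ w + t ^ 2)) 0 := by
          filter_upwards [hcl.eventually (hop.mem_nhds hζΩ)] with t ht
          have := hmax (subset_closure ht)
          have h2 : v (ζ + t • w) + c * ‖ζ + t • w‖ ^ 2 ≤ v ζ + c * ‖ζ‖ ^ 2 := this
          rw [hexp] at h2
          simpa using h2
        have hpoly : ∀ t : ℝ, HasDerivAt (fun t : ℝ =>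
            c * (‖ζ‖ ^ 2 + 2 * t * inner ℝ ζ w + t ^ 2)) (c * (2 * inner ℝ ζ w + 2 * t)) t := by
          intro t
          have h1 : HasDerivAt (fun t : ℝ => t ^ 2) (2 * t) t := by
            simpa using hasDerivAt_pow 2 t
          have h2 : HasDerivAt (fun t : ℝ => 2 * t * inner ℝ ζ w) (2 * inner ℝ ζ w) t := by
            simpa using ((hasDerivAt_id t).const_mul 2).mul_const (inner ℝ ζ w)
          exact ((h2.const_add _).add h1).const_mul c
        have := second_deriv_test (f1 := fun t => fderiv ℝ v (ζ + t • w) w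
          + c * (2 * inner ℝ ζ w + 2 * t)) (f2 := D2 v ζ w w + 2 * c) hm
          (by
            filter_upwards [l1] with t ht
            exact ht.add (hpoly t))
          (by
            have h3 : HasDerivAt (fun t : ℝ => c * (2 * inner ℝ ζ w + 2 * t)) (2 * c) 0 := by
              have := (((hasDerivAt_id (0:ℝ)).const_mul 2).const_add
                (2 * inner ℝ ζ w)).const_mul c
              refine this.congr_deriv ?_
              ring
            exact l2.add h3)
        exact this.2
      have hs := Finset.sum_le_sum fun i (_ : i ∈ Finset.univ) => hdir i
      rw [Finset.sum_add_distrib, ← lap_eq_D2 (hd ζ hζΩ)] at hs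
      simp only [Finset.sum_const, Finset.card_univ, Fintype.card_fin, nsmul_eq_mul,
        mul_zero] at hs
      have h1 := hl ζ hζΩ
      have hN1 : (1:ℝ) ≤ N := by exact_mod_cast hN
      nlinarith
    · have hζf : ζ ∈ frontier Ω := by rw [hop.frontier_eq]; exact ⟨hζ, hζΩ⟩
      rw [hz ζ hζf] at hxζ
      nlinarith [sq_nonneg ‖x‖]
  refine le_of_forall_pos_le_add fun ε hε => ?_
  have hR2 : 0 < R ^ 2 + 1 := by positivity
  have := key (K + ε / (R ^ 2 + 1)) (by linarith [div_pos hε hR2])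
  have h2 : ε / (R ^ 2 + 1) * R ^ 2 ≤ ε := by
    rw [div_mul_eq_mul_div, div_le_iff₀ hR2]; nlinarith
  linarith

/-- For convex increasing `h`, `Δ(h ∘ φ) ≥ h'(φ) Δφ`. -/
lemma lap_comp_ge {φ : Euc N → ℝ} {x : Euc N} (hφ : ContDiffAt ℝ 2 φ x) {h h1 : ℝ → ℝ} {h2 : ℝ}
    (hh : ContDiff ℝ 2 h) (hd1 : ∀ t, HasDerivAt h (h1 t) t) (hd2 : HasDerivAt h1 h2 (φ x))
    (h20 : 0 ≤ h2) : h1 (φ x) * lap φ x ≤ lap (fun y => h (φ y)) x := by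
  have hcd : ContDiffAt ℝ 2 (fun y => h (φ y)) x := hh.contDiffAt.comp x hφ
  have he : fderiv ℝ (fun y => h (φ y)) =ᶠ[𝓝 x] fun y => h1 (φ y) • fderiv ℝ φ y := by
    filter_upwards [hφ.eventually_two] with y hy
    exact ((hd1 (φ y)).comp_hasFDerivAt y hy.hasFD1).fderiv
  have hD : D2 (fun y => h (φ y)) x = h1 (φ x) • D2 φ x
      + (h2 • fderiv ℝ φ x).smulRight (fderiv ℝ φ x) := by
    have h3 := (hd2.comp_hasFDerivAt x hφ.hasFD1).smul hφ.hasFD2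
    exact he.fderiv_eq.trans h3.fderiv
  rw [lap_eq_D2 hcd, lap_eq_D2 hφ, Finset.mul_sum, hD]
  refine Finset.sum_le_sum fun i _ => ?_
  simp only [add_apply, smul_apply, ContinuousLinearMap.smulRight_apply, smul_eq_mul]
  nlinarith [mul_nonneg h20 (sq_nonneg (fderiv ℝ φ x (EuclideanSpace.single i 1)))]

/-- The exponent count behind the supremum bound: choosing `R² = η m^(1-p)` in the mean value
inequality leaves `m^e ≤ C` with `e = p - (p-1)N/2`, positive exactly when `p` is subcritical. -/
lemma sup_algebra {c1 c2 L p : ℝ} (hc1 : 0 < c1) (hc2 : 0 < c2) (hL : 0 < L) (n N : ℕ)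
    (he : 0 < p - (p - 1) * N / 2) :
    ∃ M : ℝ, ∀ m : ℝ, 1 ≤ m →
      (∀ R : ℝ, 0 < R → (m / 2) ^ (n + 3) ≤ c1 * (R ^ N)⁻¹ * (m ^ ((n + 3 : ℝ) - p)) +
        c2 * ((n + 3) * m ^ (n + 2) * (L * m ^ p)) * R ^ 2) → m ≤ M := by
  set e := p - (p - 1) * N / 2 with hedef
  set η := (2 * 2 ^ (n + 3) * (c2 * (n + 3) * L))⁻¹ with hη
  have hη0 : 0 < η := by positivity
  set B := 2 * 2 ^ (n + 3) * c1 * (η ^ ((N : ℝ) / 2))⁻¹ with hB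
  refine ⟨B ^ e⁻¹, fun m hm H => ?_⟩
  have hm0 : 0 < m := by linarith
  have hR := H (η ^ (1 / 2 : ℝ) * m ^ ((1 - p) / 2)) (by positivity)
  have hR2 : (η ^ (1 / 2 : ℝ) * m ^ ((1 - p) / 2)) ^ 2 = η * m ^ (1 - p) := by
    rw [mul_pow, ← Real.rpow_mul_natCast hη0.le, ← Real.rpow_mul_natCast hm0.le]
    norm_num
  have hRN : (η ^ (1 / 2 : ℝ) * m ^ ((1 - p) / 2)) ^ N =
      η ^ ((N : ℝ) / 2) * m ^ ((1 - p) * N / 2) := by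
    rw [mul_pow, ← Real.rpow_mul_natCast hη0.le, ← Real.rpow_mul_natCast hm0.le]
    congr 2 <;> ring
  rw [hR2, hRN] at hR
  -- the second term is half of the left side
  have h2 : c2 * ((n + 3) * m ^ (n + 2) * (L * m ^ p)) * (η * m ^ (1 - p)) =
      (m / 2) ^ (n + 3) / 2 := by
    have hmm : m ^ p * m ^ (1 - p) = m := by
      rw [← Real.rpow_add hm0]; simp
    have : c2 * ((n + 3) * m ^ (n + 2) * (L * m ^ p)) * (η * m ^ (1 - p)) =
      (c2 * (n + 3) * L) * η * m ^ (n + 2) * (m ^ p * m ^ (1 - p)) := by ring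
    rw [this, hmm, hη, div_pow]
    field_simp
    ring
  have h1 : c1 * (η ^ ((N : ℝ) / 2) * m ^ ((1 - p) * N / 2))⁻¹ * m ^ ((n + 3 : ℝ) - p) =
      B * (m / 2) ^ (n + 3) / 2 * (m ^ e)⁻¹ := by
    have e1 : m ^ ((n + 3 : ℝ) - p) = m ^ (n + 3) * m ^ ((1 - p) * N / 2) * (m ^ e)⁻¹ := by
      rw [← Real.rpow_neg hm0.le, ← Real.rpow_natCast, ← Real.rpow_add hm0,
        ← Real.rpow_add hm0]
      congr 1
      rw [hedef]; push_cast; ring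
    have : (0:ℝ) < m ^ ((1 - p) * N / 2) := by positivity
    have h3 : (0:ℝ) < η ^ ((N : ℝ) / 2) := by positivity
    rw [e1, hB, div_pow]
    field_simp
  rw [h1, h2] at hR
  have hP : 0 < (m / 2) ^ (n + 3) := by positivity
  have hme : 0 < m ^ e := by positivity
  have h3 : 1 ≤ B * (m ^ e)⁻¹ := by
    have : (m / 2) ^ (n + 3) * 1 ≤ (m / 2) ^ (n + 3) * (B * (m ^ e)⁻¹) := by nlinarith
    exact le_of_mul_le_mul_left this hP
  have h4 : m ^ e ≤ B := by
    rw [← div_eq_mul_inv, le_div_iff₀ hme] at h3; linarith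
  calc m = (m ^ e) ^ e⁻¹ := (Real.rpow_rpow_inv hm0.le he.ne').symm
    _ ≤ B ^ e⁻¹ := Real.rpow_le_rpow hme.le h4 (by positivity)

end supbound

/-! ### Bounding the supremum of `α + λψ` -/

section apriori
variable {N : ℕ}

lemma SolP.cd {Ω : Set (Euc N)} (hop : IsOpen Ω) {p lam α : ℝ} {ψ : Euc N → ℝ}
    (h : SolP Ω p lam α ψ) : ∀ x ∈ Ω, ContDiffAt ℝ 2 ψ x := fun _ hx =>
  h.2.1.contDiffAt (hop.mem_nhds hx)

lemma SolP.integrable {Ω : Set (Euc N)} {p lam α : ℝ} {ψ : Euc N → ℝ}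
    (h : SolP Ω p lam α ψ) : IntegrableOn (rho p lam α ψ) Ω := by
  by_contra hcon
  have h1 := h.2.2.2.2
  rw [integral_undef hcon] at h1
  exact zero_ne_one h1

lemma rho_nonneg {p lam α : ℝ} {ψ : Euc N → ℝ} (x : Euc N) : 0 ≤ rho p lam α ψ x :=
  Real.rpow_nonneg (le_max_right _ _) _

lemma SolP.nonneg (hN : 0 < N) {Ω : Set (Euc N)} (hop : IsOpen Ω) {R : ℝ}
    (hR : ∀ x ∈ closure Ω, ‖x‖ ≤ R) {p lam α : ℝ} {ψ : Euc N → ℝ}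
    (h : SolP Ω p lam α ψ) : ∀ x ∈ Ω, 0 ≤ ψ x := by
  intro x hx
  have := weak_max hN hop hR (v := fun x => -ψ x) (K := 0) le_rfl h.1.neg
    (fun x hx => (h.cd hop x hx).neg) (fun x hx => by rw [h.2.2.1 x hx, neg_zero])
    (fun x hx => by
      have e : lap (fun x => -ψ x) x = -lap ψ x := by
        simp [lap, fderiv_fun_neg]
      rw [e, h.2.2.2.1 x hx, neg_zero]
      exact rho_nonneg x) x hx
  linarith

/-- The unit mass constraint on a domain of unit volume forces `α ≤ 1`. -/
lemma SolP.alpha_le (hN : 0 < N) {Ω : Set (Euc N)} (hop : IsOpen Ω) (hvol : volume Ω = 1) {R : ℝ}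
    (hR : ∀ x ∈ closure Ω, ‖x‖ ≤ R) {p lam α : ℝ} (hp : 1 ≤ p) (hlam : 0 ≤ lam) {ψ : Euc N → ℝ}
    (h : SolP Ω p lam α ψ) : α ≤ 1 := by
  by_contra hcon
  push Not at hcon
  have h1 : ∀ x ∈ Ω, α ^ p ≤ rho p lam α ψ x := fun x hx => by
    refine Real.rpow_le_rpow (by linarith) (le_max_of_le_left ?_) (by linarith)
    have := mul_nonneg hlam (h.nonneg hN hop hR x hx)
    linarith
  have h2 : ∫ _ in Ω, α ^ p ≤ ∫ x in Ω, rho p lam α ψ x :=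
    setIntegral_mono_on (integrableOn_const (by rw [hvol]; simp)) h.integrable hop.measurableSet h1
  rw [h.2.2.2.2, setIntegral_const, measureReal_def, hvol] at h2
  have h3 : 1 < α ^ p := Real.one_lt_rpow hcon (by linarith)
  simp at h2
  linarith

/-- The supremum of `α + λψ` is bounded in terms of `λ̄`, `p` and `N`: the mean value inequality is
applied at a maximum point to `(α + λψ - 2)₊^q`, which has compact support in `Ω`. -/
lemma sup_bound (hN : 2 ≤ N) {p lamBar : ℝ} (hp : 1 ≤ p)
    (hpN : 3 ≤ N → p < (N : ℝ) / ((N : ℝ) - 2)) (hlam : 0 < lamBar) :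
    ∃ M ≥ 1, ∀ (Ω : Set (Euc N)), IsOpen Ω → Bornology.IsBounded Ω → volume Ω = 1 →
      ∀ lam α ψ, 0 ≤ lam → lam ≤ lamBar → SolP Ω p lam α ψ → ∀ x ∈ Ω, α + lam * ψ x ≤ M := by
  obtain ⟨c1, hc1, c2, hc2, hmv⟩ := mean_value (N := N)
  obtain ⟨n, hn⟩ := exists_nat_ge p
  have he : 0 < p - (p - 1) * N / 2 := by
    rcases hN.eq_or_lt with h | h
    · rw [← h]; norm_num
    · have h3 := hpN h
      have hN3 : (3:ℝ) ≤ N := by exact_mod_cast h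
      rw [lt_div_iff₀ (by linarith)] at h3
      linarith
  obtain ⟨M, hM⟩ := sup_algebra hc1 hc2 hlam n N he
  refine ⟨max M 4, le_max_of_le_right (by norm_num), ?_⟩
  intro Ω hop hbd hvol lam α ψ hl0 hl1 hsol
  obtain ⟨R, hR⟩ := hbd.closure.exists_norm_le
  have hα := hsol.alpha_le (by omega) hop hvol hR hp hl0
  have hcpt : IsCompact (closure Ω) := Metric.isCompact_of_isClosed_isBounded isClosed_closure
    hbd.closure
  set φ : Euc N → ℝ := fun x => α + lam * ψ x with hφ
  have hφc : ContinuousOn φ (closure Ω) := continuousOn_const.add (continuousOn_const.mul hsol.1)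
  have hφd : ∀ x ∈ Ω, ContDiffAt ℝ 2 φ x := fun x hx =>
    contDiffAt_const.add (contDiffAt_const.mul (hsol.cd hop x hx))
  intro x hx
  change φ x ≤ _
  obtain ⟨x0, hx0, hmax⟩ := hcpt.exists_isMaxOn ⟨x, subset_closure hx⟩ hφc
  have hle : ∀ y ∈ Ω, φ y ≤ φ x0 := fun y hy => hmax (subset_closure hy)
  by_cases hm4 : φ x0 ≤ 4
  · exact (hle x hx).trans (hm4.trans (le_max_right _ _))
  push Not at hm4
  have hfr : ∀ y ∈ frontier Ω, φ y ≤ 1 := fun y hy => by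
    simp only [hφ]; rw [hsol.2.2.1 y hy]; linarith
  have hx0Ω : x0 ∈ Ω := by
    by_contra hcon
    have := hfr x0 (by rw [hop.frontier_eq]; exact ⟨hx0, hcon⟩)
    linarith
  refine (hle x hx).trans (le_max_of_le_left ?_)
  set m := φ x0 with hmdef
  have hm0 : 0 < m := by linarith
  refine hM m (by linarith) fun ρ hρ => ?_
  set h : ℝ → ℝ := fun t => max (t - 2) 0 ^ (n + 3) with hh
  have hhC : ContDiff ℝ 2 h := (contDiff_posPow_two n).comp (contDiff_id.sub contDiff_const)
  have hd1 : ∀ t, HasDerivAt h ((n + 3) * max (t - 2) 0 ^ (n + 2)) t := fun t => by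
    have := (hasDerivAt_posPow (n + 1) (t - 2)).comp_sub_const t 2
    refine this.congr_deriv ?_
    push_cast; ring
  have hd2 : ∀ t, HasDerivAt (fun t : ℝ => ((n:ℝ) + 3) * max (t - 2) 0 ^ (n + 2))
      ((n + 3) * ((n + 2) * max (t - 2) 0 ^ (n + 1))) t := fun t =>
    ((hasDerivAt_posPow n (t - 2)).comp_sub_const t 2).const_mul _
  set f : Euc N → ℝ := Ω.indicator fun y => h (φ y) with hf
  set S := closure Ω ∩ {y | 2 ≤ φ y} with hS
  have hSc : IsCompact S := hcpt.of_isClosed_subset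
    (hφc.preimage_isClosed_of_isClosed isClosed_closure isClosed_Ici) inter_subset_left
  have hSΩ : ∀ y ∈ S, y ∈ Ω := fun y hy => by
    by_contra hcon
    have := hfr y (by rw [hop.frontier_eq]; exact ⟨hy.1, hcon⟩)
    have h2 : 2 ≤ φ y := hy.2
    linarith
  have hfS : ∀ y, y ∉ S → f y = 0 := fun y hy => by
    by_cases hyΩ : y ∈ Ω
    · have : φ y < 2 := by
        by_contra hcon
        exact hy ⟨subset_closure hyΩ, not_lt.1 hcon⟩
      rw [hf, indicator_of_mem hyΩ, hh]
      simp only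
      rw [max_eq_right (by linarith), zero_pow (by omega)]
    · exact indicator_of_notMem hyΩ _
  have hfin : ∀ y ∈ Ω, f =ᶠ[𝓝 y] fun y => h (φ y) := fun y hy => by
    filter_upwards [hop.mem_nhds hy] with z hz
    exact indicator_of_mem hz _
  have hfout : ∀ y, y ∉ Ω → f =ᶠ[𝓝 y] fun _ => 0 := fun y hy => by
    filter_upwards [hSc.isClosed.isOpen_compl.mem_nhds fun hyS => hy (hSΩ y hyS)] with z hz
    exact hfS z hz
  have hfC : ContDiff ℝ 2 f := contDiff_iff_contDiffAt.2 fun y => by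
    by_cases hy : y ∈ Ω
    · exact (hhC.contDiffAt.comp y (hφd y hy)).congr_of_eventuallyEq (hfin y hy)
    · exact contDiffAt_const.congr_of_eventuallyEq (hfout y hy)
  have hf0 : ∀ y, 0 ≤ f y := fun y => indicator_nonneg (fun y _ => by
    simp only [hh]; positivity) y
  have lap_congr : ∀ {u v : Euc N → ℝ} {y : Euc N}, u =ᶠ[𝓝 y] v → ContDiffAt ℝ 2 v y →
      lap u y = lap v y := fun {u v y} huv hv => by
    rw [lap_eq_D2 hv, lap_eq_D2 (hv.congr_of_eventuallyEq huv)]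
    have : D2 u y = D2 v y := huv.fderiv.fderiv_eq
    rw [this]
  have hrho : ∀ y ∈ Ω, rho p lam α ψ y ≤ m ^ p := fun y hy =>
    Real.rpow_le_rpow (le_max_right _ _) (max_le (hle y hy) hm0.le) (by linarith)
  have hlapf : ∀ y, -((n + 3) * m ^ (n + 2) * (lamBar * m ^ p)) ≤ lap f y := fun y => by
    by_cases hy : y ∈ Ω
    · rw [lap_congr (hfin y hy) (hhC.contDiffAt.comp y (hφd y hy))]
      refine le_trans ?_ (lap_comp_ge (hφd y hy) hhC hd1 (hd2 _) (by positivity))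
      have hlapφ : lap φ y = -(lam * rho p lam α ψ y) := by
        rw [← hsol.2.2.2.1 y hy]
        rw [lap_eq_D2 (hφd y hy), lap_eq_D2 (hsol.cd hop y hy)]
        have e : D2 φ y = lam • D2 ψ y := by
          have e1 : fderiv ℝ φ =ᶠ[𝓝 y] fun z => lam • fderiv ℝ ψ z := by
            filter_upwards [(hsol.cd hop y hy).eventually_two] with z hz
            exact ((hz.hasFD1.const_mul lam).const_add α).fderiv
          exact e1.fderiv_eq.trans ((hsol.cd hop y hy).hasFD2.const_smul lam).fderiv
        rw [e]
        simp only [smul_apply, smul_eq_mul, ← Finset.mul_sum]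
        ring
      rw [hlapφ, mul_neg]
      refine neg_le_neg ?_
      have hmx : max (φ y - 2) 0 ≤ m := max_le (by linarith [hle y hy]) hm0.le
      have h1 : max (φ y - 2) 0 ^ (n + 2) ≤ m ^ (n + 2) :=
        pow_le_pow_left₀ (le_max_right _ _) hmx _
      have h2 : lam * rho p lam α ψ y ≤ lamBar * m ^ p :=
        mul_le_mul hl1 (hrho y hy) (rho_nonneg y) hlam.le
      exact mul_le_mul (mul_le_mul_of_nonneg_left h1 (by positivity)) h2
        (mul_nonneg hl0 (rho_nonneg y)) (by positivity)
    · rw [lap_congr (hfout y hy) contDiffAt_const]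
      have : lap (fun _ : Euc N => (0:ℝ)) y = 0 := by simp [lap]
      rw [this]
      have : 0 ≤ (n + 3) * m ^ (n + 2) * (lamBar * m ^ p) := by positivity
      linarith
  have hfsupp : HasCompactSupport f := HasCompactSupport.intro hSc hfS
  have hmain := hmv f _ hfC hfsupp hf0 (by positivity) hlapf x0 ρ hρ
  have hfx0 : (m / 2) ^ (n + 3) ≤ f x0 := by
    rw [hf, indicator_of_mem hx0Ω, hh]
    exact pow_le_pow_left₀ (by positivity) (le_max_of_le_left (by linarith)) _
  have hint : ∫ y, f y ≤ m ^ ((n + 3 : ℝ) - p) := by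
    have e1 : ∫ y, f y = ∫ y in Ω, f y := by
      rw [hf, integral_indicator hop.measurableSet]
      refine setIntegral_congr_fun hop.measurableSet fun y hy => ?_
      exact (indicator_of_mem hy (fun y => h (φ y))).symm
    have e2 : ∫ y in Ω, f y ≤ ∫ y in Ω, m ^ ((n + 3 : ℝ) - p) * rho p lam α ψ y := by
      refine setIntegral_mono_on (hfC.continuous.integrable_of_hasCompactSupport
        hfsupp).integrableOn (hsol.integrable.const_mul _) hop.measurableSet fun y hy => ?_
      rw [hf, indicator_of_mem hy, hh]
      simp only [rho]
      change _ ≤ _ * max (φ y) 0 ^ p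
      have hle0 : (0:ℝ) ≤ max (φ y) 0 := le_max_right _ _
      have hq : (n + 3 : ℝ) - p + p ≠ 0 := by rw [sub_add_cancel]; positivity
      calc max (φ y - 2) 0 ^ (n + 3) ≤ max (φ y) 0 ^ (n + 3) :=
            pow_le_pow_left₀ (le_max_right _ _) (max_le_max (by linarith) le_rfl) _
        _ = max (φ y) 0 ^ ((n + 3 : ℝ) - p) * max (φ y) 0 ^ p := by
            rw [← Real.rpow_add' hle0 hq, ← Real.rpow_natCast]
            congr 1; push_cast; ring
        _ ≤ _ := mul_le_mul_of_nonneg_right (Real.rpow_le_rpow hle0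
            (max_le (hle y hy) hm0.le) (by linarith)) (Real.rpow_nonneg hle0 _)
    rw [integral_const_mul, hsol.2.2.2.2, mul_one] at e2
    rw [e1]; exact e2
  refine hfx0.trans (hmain.trans ?_)
  have : c1 * (ρ ^ N)⁻¹ * ∫ y, f y ≤ c1 * (ρ ^ N)⁻¹ * m ^ ((n + 3 : ℝ) - p) :=
    mul_le_mul_of_nonneg_left hint (by positivity)
  linarith

end apriori

/-! ### Uniform control of solutions -/

section assembly
variable {N : ℕ}

lemma rpow_lip {p M : ℝ} (hp : 1 ≤ p) {a b : ℝ} (ha : a ∈ Icc 0 M)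
    (hb : b ∈ Icc 0 M) : |a ^ p - b ^ p| ≤ p * M ^ (p - 1) * |a - b| := by
  have := (convex_Icc (0:ℝ) M).norm_image_sub_le_of_norm_hasDerivWithin_le (f := fun t => t ^ p)
    (f' := fun t => p * t ^ (p - 1)) (C := p * M ^ (p - 1))
    (fun t _ => (Real.hasDerivAt_rpow_const (Or.inr hp)).hasDerivWithinAt)
    (fun t ht => by
      rw [Real.norm_eq_abs, abs_of_nonneg (mul_nonneg (by linarith) (Real.rpow_nonneg ht.1 _))]
      exact mul_le_mul_of_nonneg_left (Real.rpow_le_rpow ht.1 ht.2 (by linarith)) (by linarith))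
    hb ha
  simpa only [Real.norm_eq_abs] using this

/-- Solutions with `λ ∈ [0, λ̄]` are uniformly of class `Good`, and `α` is bounded below. -/
lemma good_of_sol (hN : 2 ≤ N) {Ω : Set (Euc N)} (hΩ : IsC3Domain Ω) (hvol : volume Ω = 1)
    {p lamBar : ℝ} (hp : 1 ≤ p) (hpN : 3 ≤ N → p < (N : ℝ) / ((N : ℝ) - 2)) (hlam : 0 < lamBar) :
    ∃ M0 > 0, ∃ K0 ≥ 0, ∀ lam α ψ, 0 ≤ lam → lam ≤ lamBar → SolP Ω p lam α ψ →
      -(lamBar * M0) ≤ α ∧ Good Ω M0 K0 ψ := by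
  obtain ⟨M, hM1, hM⟩ := sup_bound hN hp hpN hlam
  have hop := hΩ.1
  have hbd := hΩ.2.2.1
  obtain ⟨R, hR⟩ := hbd.closure.exists_norm_le
  have hMp : 0 ≤ M ^ p := Real.rpow_nonneg (by linarith) _
  have hMp1 : 0 ≤ p * M ^ (p - 1) := mul_nonneg (by linarith) (Real.rpow_nonneg (by linarith) _)
  have hL : 0 ≤ p * M ^ (p - 1) * lamBar := mul_nonneg hMp1 hlam.le
  refine ⟨M ^ p * R ^ 2 + 1, by positivity, M ^ p + p * M ^ (p - 1) * lamBar, by positivity, ?_⟩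
  intro lam α ψ hl0 hl1 hsol
  have hφ := hM Ω hop hbd hvol lam α ψ hl0 hl1 hsol
  have hψ0 := hsol.nonneg (by omega) hop hR
  have hI : ∀ x ∈ Ω, max (α + lam * ψ x) 0 ∈ Icc 0 M := fun x hx =>
    ⟨le_max_right _ _, max_le (hφ x hx) (by linarith)⟩
  have hrho : ∀ x ∈ Ω, rho p lam α ψ x ≤ M ^ p := fun x hx =>
    Real.rpow_le_rpow (hI x hx).1 (hI x hx).2 (by linarith)
  have hlap : ∀ x ∈ Ω, lap ψ x = -rho p lam α ψ x := fun x hx => by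
    rw [← hsol.2.2.2.1 x hx, neg_neg]
  have hψ1 : ∀ x ∈ Ω, ψ x ≤ M ^ p * R ^ 2 := weak_max (by omega) hop hR hMp hsol.1 (hsol.cd hop)
    hsol.2.2.1 fun x hx => by rw [hlap x hx]; exact neg_le_neg (hrho x hx)
  refine ⟨?_, hsol.1, hsol.cd hop, hsol.2.2.1, ?_, ?_, ?_⟩
  · -- `α + λψ` is positive somewhere, since otherwise the mass would vanish
    by_contra hcon
    push Not at hcon
    have hz : ∫ x in Ω, rho p lam α ψ x = ∫ x in Ω, (0:ℝ) := by
      refine setIntegral_congr_fun hop.measurableSet fun x hx => ?_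
      have h1 : lam * ψ x ≤ lamBar * (M ^ p * R ^ 2 + 1) :=
        mul_le_mul hl1 (by linarith [hψ1 x hx]) (hψ0 x hx) hlam.le
      simp only [rho]
      rw [max_eq_right (by linarith), Real.zero_rpow (by linarith)]
    rw [hsol.2.2.2.2] at hz
    simp at hz
  · intro x hx
    rw [abs_of_nonneg (hψ0 x hx)]
    linarith [hψ1 x hx]
  · intro x hx
    rw [hlap x hx, abs_neg, abs_of_nonneg (rho_nonneg x)]
    linarith [hrho x hx]
  · intro x hx x' hx'
    rw [hlap x hx, hlap x' hx']
    have h1 := rpow_lip hp (hI x hx) (hI x' hx')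
    have h2 : |max (α + lam * ψ x) 0 - max (α + lam * ψ x') 0| ≤ lamBar * |ψ x - ψ x'| := by
      refine (abs_max_sub_max_le_abs _ _ _).trans ?_
      have : α + lam * ψ x - (α + lam * ψ x') = lam * (ψ x - ψ x') := by ring
      rw [this, abs_mul, abs_of_nonneg hl0]
      exact mul_le_mul_of_nonneg_right hl1 (abs_nonneg _)
    have e : -rho p lam α ψ x - -rho p lam α ψ x' =
      -((max (α + lam * ψ x) 0) ^ p - (max (α + lam * ψ x') 0) ^ p) := by
      simp only [rho]; ring
    rw [e, abs_neg]
    have h3 := mul_le_mul_of_nonneg_left h2 hMp1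
    have h4 := mul_nonneg hMp (abs_nonneg (ψ x - ψ x'))
    linarith

end assembly

/-! ### The a priori bounds -/

/-- a priori bounds.  For every `λ̄ > 0` there exist `ᾱ > -∞` and `C < +∞`
such that every classical solution `(α,ψ)` of `(P)_λ` with `λ ∈ [0, λ̄]` satisfies
`α ≥ ᾱ` and the full `C^{2,r}` bound: `sup_Ω |ψ| + sup_Ω |∇ψ| + sup_Ω |D²ψ| ≤ C`
(stated pointwise) together with the `r`-Hölder seminorm bound on the second
derivatives. -/
theorem apriori_bounds
    {N : ℕ} (hN : 2 ≤ N) (Ω : Set (Euc N)) (hΩ : IsC3Domain Ω) (hvol : volume Ω = 1)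
    (p : ℝ) (hp : 1 ≤ p) (hpN : 3 ≤ N → p < (N : ℝ) / ((N : ℝ) - 2))
    (r : ℝ) (hr0 : 0 < r) (hr1 : r < 1)
    (lamBar : ℝ) (hlamBar : 0 < lamBar) :
    ∃ alphaBar C : ℝ,
      ∀ lam α : ℝ, ∀ ψ : Euc N → ℝ, 0 ≤ lam → lam ≤ lamBar → SolP Ω p lam α ψ →
        alphaBar ≤ α ∧
        (∀ x ∈ Ω,
          |ψ x| ≤ C ∧ ‖fderiv ℝ ψ x‖ ≤ C ∧ ‖iteratedFDeriv ℝ 2 ψ x‖ ≤ C) ∧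
        ∀ x ∈ Ω, ∀ y ∈ Ω,
          ‖iteratedFDeriv ℝ 2 ψ x - iteratedFDeriv ℝ 2 ψ y‖ ≤ C * dist x y ^ r := by
  obtain ⟨M0, hM0, K0, hK0, hgood⟩ := good_of_sol hN hΩ hvol hp hpN hlamBar
  obtain ⟨C, hC, hest⟩ := global_est (by omega) hΩ hM0 hK0 hr0 hr1
  refine ⟨-(lamBar * M0), max M0 C, fun lam α ψ hl0 hl1 hsol => ?_⟩
  obtain ⟨hα, hg⟩ := hgood lam α ψ hl0 hl1 hsol
  obtain ⟨h1, h2⟩ := hest ψ hg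
  refine ⟨hα, fun x hx => ⟨(hg.bd x hx).trans (le_max_left _ _),
    (h1 x hx).1.trans (le_max_right _ _),
    norm_iter_two ((h1 x hx).2.trans (le_max_right _ _))⟩, fun x hx y hy => ?_⟩
  refine norm_iter_two_sub ((h2 x hx y hy).trans ?_)
  rw [dist_eq_norm]
  exact mul_le_mul_of_nonneg_right (le_max_right _ _) (Real.rpow_nonneg (norm_nonneg _) _)

end
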